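/- arXiv:2412.00865 — 6 statements merged into one kernel-verified Lean document; each statement's English description precedes it below -/
import Mathlib

section
/- Let d ≥ 1 and set α* := (2−d)/2. For every α < 0 (with α ≠ α* when d ≥ 3) there exists a constant Λ > 0 such that for every D ≥ 0 (with the additional requirement D > 0 when α < α*) and every continuously differentiable function f : ℝ^d → ℝ satisfying ∫_{ℝ^d} |∇f(x)|² (D+|x|²)^α dx < ∞, ∫_{ℝ^d} |f(x)| (D+|x|²)^{α−1} dx < ∞ and ∫_{ℝ^d} f(x) (D+|x|²)^{α−1} dx = 0, one has Λ ∫_{ℝ^d} |f(x)|² (D+|x|²)^{α−1} dx ≤ ∫_{ℝ^d} |∇f(x)|² (D+|x|²)^α dx. -/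
open MeasureTheory Real

namespace HP
open scoped ENNReal

lemma scale_bound {d : ℕ} (h : EuclideanSpace ℝ (Fin d) → ℝ≥0∞) (hm : Measurable h) (t : ℝ)
    (ht : 1 / 2 ≤ t) (v : EuclideanSpace ℝ (Fin d)) :
    ∫⁻ x, h (t • x + v) ≤ ENNReal.ofReal (2 ^ d) * ∫⁻ x, h x := by
  have ht0 : 0 < t := by linarith
  have hm' : Measurable (fun z => h (z + v)) := hm.comp (measurable_id.add_const v)
  have e1 : ∫⁻ x, h (t • x + v)
      = ∫⁻ z, h (z + v) ∂(Measure.map (fun x : EuclideanSpace ℝ (Fin d) => t • x) volume) := by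
    rw [lintegral_map hm' (measurable_const_smul t)]
  have e2 : Measure.map (fun x : EuclideanSpace ℝ (Fin d) => t • x) volume
    = ENNReal.ofReal |(t ^ Module.finrank ℝ (EuclideanSpace ℝ (Fin d)))⁻¹| • volume :=
    Measure.map_addHaar_smul volume ht0.ne'
  rw [e1, e2, lintegral_smul_measure, lintegral_add_right_eq_self h v, smul_eq_mul]
  gcongr
  rw [finrank_euclideanSpace_fin, abs_of_pos (by positivity), ← inv_pow]
  gcongr
  rw [inv_le_comm₀ ht0 (by norm_num)]
  linarith

lemma line_bound {d : ℕ} (f : EuclideanSpace ℝ (Fin d) → ℝ) (hf : ContDiff ℝ 1 f)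
    (x y : EuclideanSpace ℝ (Fin d)) :
    (f x - f y) ^ 2 ≤ ‖x - y‖ ^ 2 * ∫ t in (0:ℝ)..1, ‖fderiv ℝ f (t • x + (1 - t) • y)‖ ^ 2 := by
  have hc : Continuous (fderiv ℝ f) := hf.continuous_fderiv one_ne_zero
  have hpath : Continuous (fun t : ℝ => t • x + (1 - t) • y) := by fun_prop
  set u : ℝ → ℝ := fun t => fderiv ℝ f (t • x + (1 - t) • y) (x - y) with hu
  have huc : Continuous u := (hc.comp hpath).clm_apply continuous_const
  have hftc : ∫ t in (0:ℝ)..1, u t = f x - f y := by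
    have := intervalIntegral.integral_eq_sub_of_hasDerivAt (a := (0:ℝ)) (b := 1)
      (f := fun t : ℝ => f (t • x + (1 - t) • y)) (f' := u) (fun t _ => by
        have h1 : HasDerivAt (fun t : ℝ => t • x + (1 - t) • y) (x - y) t := by
          have h2 : HasDerivAt (fun t : ℝ => t • (x - y) + y) ((1:ℝ) • (x - y)) t :=
            ((hasDerivAt_id t).smul_const (x - y)).add_const y
          rw [one_smul] at h2
          have h3 : (fun t : ℝ => t • x + (1 - t) • y) = fun t : ℝ => t • (x - y) + y := by
            ext1 t; module
          rw [h3]; exact h2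
        exact ((hf.differentiable one_ne_zero) _).hasFDerivAt.comp_hasDerivAt t h1)
      (huc.intervalIntegrable _ _)
    simpa using this
  set m := f x - f y
  have hsq : m ^ 2 ≤ ∫ t in (0:ℝ)..1, u t ^ 2 := by
    have h0 : 0 ≤ ∫ t in (0:ℝ)..1, (u t - m) ^ 2 :=
      intervalIntegral.integral_nonneg (by norm_num) (fun t _ => sq_nonneg _)
    have h1 : ∫ t in (0:ℝ)..1, (u t - m) ^ 2
        = (∫ t in (0:ℝ)..1, u t ^ 2) - 2 * m * (∫ t in (0:ℝ)..1, u t) + m ^ 2 := by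
      have c1 : IntervalIntegrable (fun t => u t ^ 2) volume 0 1 :=
        (huc.pow 2).intervalIntegrable _ _
      have c2 : IntervalIntegrable (fun t => 2 * m * u t) volume 0 1 :=
        (continuous_const.mul huc).intervalIntegrable _ _
      have c3 : IntervalIntegrable (fun _ : ℝ => m ^ 2) volume 0 1 :=
        continuous_const.intervalIntegrable _ _
      have e3 : ∫ t in (0:ℝ)..1, m ^ 2 = m ^ 2 := by simp
      calc ∫ t in (0:ℝ)..1, (u t - m) ^ 2
          = ∫ t in (0:ℝ)..1, ((u t ^ 2 - 2 * m * u t) + m ^ 2) := by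
            congr 1; ext t; ring
        _ = _ := by
            rw [intervalIntegral.integral_add (c1.sub c2) c3, intervalIntegral.integral_sub c1 c2,
              intervalIntegral.integral_const_mul, e3]
    rw [h1, hftc] at h0
    nlinarith
  refine hsq.trans ?_
  rw [← intervalIntegral.integral_const_mul]
  apply intervalIntegral.integral_mono_on (by norm_num) 
    ((huc.pow 2 : Continuous (fun t => u t ^ 2)).intervalIntegrable _ _)
  · exact Continuous.intervalIntegrable
      (continuous_const.mul (((hc.comp hpath).norm).pow 2)) _ _
  · intro t _
    have := (fderiv ℝ f (t • x + (1 - t) • y)).le_opNorm (x - y)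
    have h2 : |u t| ≤ ‖fderiv ℝ f (t • x + (1 - t) • y)‖ * ‖x - y‖ := this
    have h3 : u t ^ 2 ≤ (‖fderiv ℝ f (t • x + (1 - t) • y)‖ * ‖x - y‖) ^ 2 := by
      rw [← sq_abs (u t)]
      gcongr
    change u t ^ 2 ≤ _
    simpa only [mul_pow, mul_comm] using h3

lemma local_poincare {d : ℕ} (f : EuclideanSpace ℝ (Fin d) → ℝ) (hf : ContDiff ℝ 1 f)
    (R : ℝ) (hR : 0 < R) :
    ∃ c : ℝ, ∫ x in Metric.closedBall 0 R, (f x - c) ^ 2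
      ≤ 4 * R ^ 2 * 2 ^ d * ∫ x in Metric.closedBall 0 R, ‖fderiv ℝ f x‖ ^ 2 := by
  set B : Set (EuclideanSpace ℝ (Fin d)) := Metric.closedBall 0 R with hB
  have hBm : MeasurableSet B := Metric.isClosed_closedBall.measurableSet
  have hBc : IsCompact B := isCompact_closedBall _ _
  have hBfin : volume B ≠ ∞ := hBc.measure_ne_top
  have hB0 : volume B ≠ 0 := (Metric.measure_closedBall_pos volume _ hR).ne'
  have hc : Continuous (fderiv ℝ f) := hf.continuous_fderiv one_ne_zero
  set h : EuclideanSpace ℝ (Fin d) → ℝ≥0∞ :=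
    B.indicator (fun x => ENNReal.ofReal (‖fderiv ℝ f x‖ ^ 2)) with hh
  have hm : Measurable h := by
    apply Measurable.indicator _ hBm
    exact (hc.norm.pow 2).measurable.ennreal_ofReal
  set I : ℝ≥0∞ := ∫⁻ x, h x with hI
  have htmeas : MeasurableSet (Set.Icc (0:ℝ) 1) := measurableSet_Icc
  have hpt : ∀ y ∈ B, ∀ x ∈ B, ENNReal.ofReal ((f x - f y) ^ 2)
      ≤ ENNReal.ofReal (4 * R ^ 2) * ∫⁻ t in Set.Icc (0:ℝ) 1, h (t • x + (1 - t) • y) := by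
    intro y hy x hx
    have hpath : Continuous (fun t : ℝ => t • x + (1 - t) • y) := by fun_prop
    have hF : Continuous (fun t : ℝ => ‖fderiv ℝ f (t • x + (1 - t) • y)‖ ^ 2) :=
      ((hc.comp hpath).norm).pow 2
    have e : ∫⁻ t in Set.Icc (0:ℝ) 1, h (t • x + (1 - t) • y)
        = ENNReal.ofReal (∫ t in (0:ℝ)..1, ‖fderiv ℝ f (t • x + (1 - t) • y)‖ ^ 2) := by
      rw [intervalIntegral.integral_of_le (by norm_num), ← integral_Icc_eq_integral_Ioc,
        ofReal_integral_eq_lintegral_ofReal (hF.continuousOn.integrableOn_Icc)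
          (Filter.Eventually.of_forall fun t => by positivity)]
      apply setLIntegral_congr_fun htmeas
      intro t ht
      have : t • x + (1 - t) • y ∈ B :=
        (convex_closedBall 0 R) hx hy ht.1 (by linarith [ht.2]) (by ring)
      simp only [hh, Set.indicator_of_mem this]
    rw [e, ← ENNReal.ofReal_mul (by positivity)]
    apply ENNReal.ofReal_le_ofReal
    refine (line_bound f hf x y).trans ?_
    have hn : ‖x - y‖ ≤ 2 * R := by
      have h1 : ‖x‖ ≤ R := by simpa [hB] using hx
      have h2 : ‖y‖ ≤ R := by simpa [hB] using hy
      linarith [norm_sub_le x y]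
    have : ‖x - y‖ ^ 2 ≤ 4 * R ^ 2 := by nlinarith [norm_nonneg (x - y)]
    gcongr
    exact intervalIntegral.integral_nonneg (by norm_num) (fun t _ => by positivity)
  have hslice : ∀ t ∈ Set.Icc (0:ℝ) 1, ∫⁻ y in B, ∫⁻ x in B, h (t • x + (1 - t) • y)
      ≤ ENNReal.ofReal (2 ^ d) * I * volume B := by
    intro t ht
    rcases le_total (1 / 2) t with h2 | h2
    · calc _ ≤ ∫⁻ y in B, ENNReal.ofReal (2 ^ d) * I := by
            gcongr with y
            exact (setLIntegral_le_lintegral _ _).trans (scale_bound h hm t h2 _)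
        _ = _ := by simp
    · rw [lintegral_lintegral_swap (by
        apply Measurable.aemeasurable
        apply hm.comp
        fun_prop)]
      calc _ ≤ ∫⁻ y in B, ENNReal.ofReal (2 ^ d) * I := by
            gcongr with y
            refine (setLIntegral_le_lintegral _ _).trans ?_
            have := scale_bound h hm (1 - t) (by linarith) (t • y)
            simpa only [add_comm] using this
        _ = _ := by simp
  set Φ : EuclideanSpace ℝ (Fin d) → ℝ≥0∞ :=
    fun y => ∫⁻ x in B, ENNReal.ofReal ((f x - f y) ^ 2) with hΦ
  have hfm : Measurable f := hf.continuous.measurable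
  have hΦm : Measurable Φ := by
    apply Measurable.lintegral_prod_right'
      (f := fun p : EuclideanSpace ℝ (Fin d) × EuclideanSpace ℝ (Fin d) =>
        ENNReal.ofReal ((f p.2 - f p.1) ^ 2))
    fun_prop
  have htotal : ∫⁻ y in B, Φ y
      ≤ ENNReal.ofReal (4 * R ^ 2) * (ENNReal.ofReal (2 ^ d) * I * volume B) := by
    calc ∫⁻ y in B, Φ y
        ≤ ∫⁻ y in B, ∫⁻ x in B, ENNReal.ofReal (4 * R ^ 2) *
            ∫⁻ t in Set.Icc (0:ℝ) 1, h (t • x + (1 - t) • y) := by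
          apply setLIntegral_mono' hBm
          intro y hy
          apply setLIntegral_mono' hBm
          intro x hx
          exact hpt y hy x hx
      _ = ENNReal.ofReal (4 * R ^ 2) * ∫⁻ y in B, ∫⁻ x in B,
            ∫⁻ t in Set.Icc (0:ℝ) 1, h (t • x + (1 - t) • y) := by
          rw [← lintegral_const_mul' _ _ ENNReal.ofReal_ne_top]
          congr 1; ext y
          rw [← lintegral_const_mul' _ _ ENNReal.ofReal_ne_top]
      _ = ENNReal.ofReal (4 * R ^ 2) * ∫⁻ t in Set.Icc (0:ℝ) 1, ∫⁻ y in B, ∫⁻ x in B,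
            h (t • x + (1 - t) • y) := by
          congr 1
          rw [lintegral_lintegral_swap (f := fun (t : ℝ) (y : EuclideanSpace ℝ (Fin d)) =>
            ∫⁻ x in B, h (t • x + (1 - t) • y)) (by
              apply Measurable.aemeasurable
              apply Measurable.lintegral_prod_right'
                (f := fun p : (ℝ × EuclideanSpace ℝ (Fin d)) × EuclideanSpace ℝ (Fin d) =>
                  h (p.1.1 • p.2 + (1 - p.1.1) • p.1.2))
              apply hm.comp
              fun_prop)]
          congr 1; ext y
          rw [lintegral_lintegral_swap]
          apply Measurable.aemeasurable
          apply hm.comp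
          fun_prop
      _ ≤ ENNReal.ofReal (4 * R ^ 2) * ∫⁻ t in Set.Icc (0:ℝ) 1,
            ENNReal.ofReal (2 ^ d) * I * volume B := by
          gcongr 1
          exact setLIntegral_mono' htmeas hslice
      _ = _ := by simp
  obtain ⟨y, hy, hle⟩ := exists_le_setLAverage hB0 hBfin hΦm.aemeasurable
  refine ⟨f y, ?_⟩
  have hle2 : Φ y ≤ ENNReal.ofReal (4 * R ^ 2) * (ENNReal.ofReal (2 ^ d) * I) := by
    refine hle.trans ?_
    rw [setLAverage_eq]
    refine ENNReal.div_le_of_le_mul ?_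
    refine htotal.trans (le_of_eq ?_)
    ring
  have hΦe : Φ y = ENNReal.ofReal (∫ x in B, (f x - f y) ^ 2) := by
    rw [ofReal_integral_eq_lintegral_ofReal _ (Filter.Eventually.of_forall fun t => by positivity)]
    exact (((hf.continuous.sub continuous_const).pow 2).continuousOn).integrableOn_compact hBc
  have hIe : I = ENNReal.ofReal (∫ x in B, ‖fderiv ℝ f x‖ ^ 2) := by
    rw [ofReal_integral_eq_lintegral_ofReal _ (Filter.Eventually.of_forall fun t => by positivity)]
    · rw [hI, hh, lintegral_indicator hBm]
    · exact ((hc.norm.pow 2).continuousOn).integrableOn_compact hBc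
  rw [hΦe, hIe, ← ENNReal.ofReal_mul (by positivity), ← ENNReal.ofReal_mul (by positivity)] at hle2
  have h3 := (ENNReal.ofReal_le_ofReal_iff (by positivity)).1 hle2
  linarith

end HP

namespace HP

lemma ibp_radial {d : ℕ} (G : EuclideanSpace ℝ (Fin d) → ℝ) (hG : ContDiff ℝ 1 G)
    (φ φ' : ℝ → ℝ) (hφ : ∀ r, 0 ≤ r → HasDerivAt φ (φ' r) r)
    (hφc : Continuous (fun x : EuclideanSpace ℝ (Fin d) => φ (‖x‖ ^ 2)))
    (hφc' : Continuous (fun x : EuclideanSpace ℝ (Fin d) => φ' (‖x‖ ^ 2)))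
    (h1 : Integrable (fun x => ‖fderiv ℝ G x‖ * (|φ (‖x‖ ^ 2)| * ‖x‖)))
    (h2 : Integrable (fun x => |G x| * |φ (‖x‖ ^ 2)|))
    (h3 : Integrable (fun x => |G x| * (|φ' (‖x‖ ^ 2)| * ‖x‖ ^ 2)))
    (h4 : Integrable (fun x => |G x| * (|φ (‖x‖ ^ 2)| * ‖x‖))) :
    ∫ x, G x * (d * φ (‖x‖ ^ 2) + 2 * φ' (‖x‖ ^ 2) * ‖x‖ ^ 2)
      = - ∫ x, fderiv ℝ G x x * φ (‖x‖ ^ 2) := by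
  have hGc : Continuous G := hG.continuous
  have hGc' : Continuous (fderiv ℝ G) := hG.continuous_fderiv one_ne_zero
  set e : Fin d → EuclideanSpace ℝ (Fin d) := fun i => EuclideanSpace.single i (1:ℝ) with he
  have hen : ∀ i, ‖e i‖ = 1 := by intro i; simp [he]
  have hci : ∀ i : Fin d, Continuous (fun x : EuclideanSpace ℝ (Fin d) => x i) := by
    intro i; fun_prop
  have habs : ∀ (x : EuclideanSpace ℝ (Fin d)) i, |x i| ≤ ‖x‖ := fun x i => by
    simpa using PiLp.norm_apply_le x i
  have hns : ∀ x : EuclideanSpace ℝ (Fin d), ‖x‖ ^ 2 = ∑ i, x i * x i := by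
    intro x; rw [EuclideanSpace.real_norm_sq_eq]; simp [sq]
  have hsum : ∀ x, fderiv ℝ G x x = ∑ i, fderiv ℝ G x (e i) * x i := by
    intro x
    have hx : x = ∑ i, x i • e i := by
      have := (EuclideanSpace.basisFun (Fin d) ℝ).sum_repr x
      simpa [he] using this.symm
    calc fderiv ℝ G x x = fderiv ℝ G x (∑ i, x i • e i) := congrArg (fderiv ℝ G x) hx
      _ = _ := by rw [map_sum]; simp [mul_comm]
  have i1 : ∀ i, Integrable (fun x => fderiv ℝ G x (e i) * (x i * φ (‖x‖ ^ 2))) := by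
    intro i
    refine h1.mono' ?_ (Filter.Eventually.of_forall fun x => ?_)
    · exact (((hGc'.clm_apply continuous_const)).mul ((hci i).mul hφc)).aestronglyMeasurable
    · have ha := (fderiv ℝ G x).le_opNorm (e i)
      rw [hen, mul_one] at ha
      rw [norm_mul, norm_mul, mul_comm ‖x i‖]
      simp only [Real.norm_eq_abs] at ha ⊢
      gcongr
      exact habs x i
  have i2 : ∀ i, Integrable (fun x => G x * (φ (‖x‖ ^ 2) + 2 * φ' (‖x‖ ^ 2) * (x i * x i))) := by
    intro i
    refine (h2.add (h3.const_mul 2)).mono' ?_ (Filter.Eventually.of_forall fun x => ?_)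
    · exact (hGc.mul (hφc.add ((continuous_const.mul hφc').mul
        ((hci i).mul (hci i))))).aestronglyMeasurable
    · have hxx : |x i| * |x i| ≤ ‖x‖ ^ 2 := by nlinarith [habs x i, abs_nonneg (x i)]
      have : |φ (‖x‖ ^ 2) + 2 * φ' (‖x‖ ^ 2) * (x i * x i)|
          ≤ |φ (‖x‖ ^ 2)| + 2 * |φ' (‖x‖ ^ 2)| * ‖x‖ ^ 2 := by
        refine (abs_add_le _ _).trans ?_
        rw [abs_mul, abs_mul, abs_mul (x i), abs_two]
        gcongr
      simp only [Pi.add_apply]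
      rw [norm_mul, Real.norm_eq_abs, Real.norm_eq_abs]
      calc _ ≤ |G x| * (|φ (‖x‖ ^ 2)| + 2 * |φ' (‖x‖ ^ 2)| * ‖x‖ ^ 2) := by gcongr
        _ = _ := by ring
  have i3 : ∀ i, Integrable (fun x => G x * (x i * φ (‖x‖ ^ 2))) := by
    intro i
    refine h4.mono' ?_ (Filter.Eventually.of_forall fun x => ?_)
    · exact (hGc.mul ((hci i).mul hφc)).aestronglyMeasurable
    · rw [norm_mul, norm_mul, mul_comm ‖x i‖]
      simp only [Real.norm_eq_abs]
      gcongr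
      exact habs x i
  have key : ∀ i, ∫ x, G x * (φ (‖x‖ ^ 2) + 2 * φ' (‖x‖ ^ 2) * (x i * x i))
      = - ∫ x, fderiv ℝ G x (e i) * (x i * φ (‖x‖ ^ 2)) := by
    intro i
    refine integral_bilinear_hasLineDerivAt_right_eq_neg_left_of_integrable
      (B := ContinuousLinearMap.mul ℝ ℝ) (v := e i) (f := G)
      (f' := fun x => fderiv ℝ G x (e i)) (g := fun x => x i * φ (‖x‖ ^ 2))
      (g' := fun x => φ (‖x‖ ^ 2) + 2 * φ' (‖x‖ ^ 2) * (x i * x i)) (i1 i) (i2 i) (i3 i) ?_ ?_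
    · intro x _
      exact ((hG.differentiable one_ne_zero) x).hasFDerivAt.hasLineDerivAt _
    · intro x _
      have a1 : HasFDerivAt (fun x : EuclideanSpace ℝ (Fin d) => x i)
          (EuclideanSpace.proj i : EuclideanSpace ℝ (Fin d) →L[ℝ] ℝ) x :=
        (EuclideanSpace.proj i : EuclideanSpace ℝ (Fin d) →L[ℝ] ℝ).hasFDerivAt
      have a2 : HasFDerivAt (fun x : EuclideanSpace ℝ (Fin d) => ‖x‖ ^ 2)
          (2 • innerSL ℝ x) x := (hasStrictFDerivAt_norm_sq x).hasFDerivAt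
      have a3 := (hφ (‖x‖ ^ 2) (by positivity)).comp_hasFDerivAt x a2
      have a4 := (a1.mul a3).hasLineDerivAt (e i)
      have a5 : (x i • φ' (‖x‖ ^ 2) • 2 • (innerSL ℝ) x + (φ ∘ fun x => ‖x‖ ^ 2) x •
          (EuclideanSpace.proj i : EuclideanSpace ℝ (Fin d) →L[ℝ] ℝ)) (e i)
          = φ (‖x‖ ^ 2) + 2 * φ' (‖x‖ ^ 2) * (x i * x i) := by
        simp [he, EuclideanSpace.inner_single_right]
        ring
      exact a5 ▸ a4
  calc _ = ∫ x, ∑ i, G x * (φ (‖x‖ ^ 2) + 2 * φ' (‖x‖ ^ 2) * (x i * x i)) := by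
        congr 1; ext x
        rw [← Finset.mul_sum, Finset.sum_add_distrib, ← Finset.mul_sum, ← hns]
        simp
    _ = ∑ i, ∫ x, G x * (φ (‖x‖ ^ 2) + 2 * φ' (‖x‖ ^ 2) * (x i * x i)) :=
        integral_finsetSum _ fun i _ => i2 i
    _ = - ∑ i, ∫ x, fderiv ℝ G x (e i) * (x i * φ (‖x‖ ^ 2)) := by
        rw [← Finset.sum_neg_distrib]
        exact Finset.sum_congr rfl fun i _ => key i
    _ = - ∫ x, ∑ i, fderiv ℝ G x (e i) * (x i * φ (‖x‖ ^ 2)) := by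
        rw [integral_finsetSum _ fun i _ => i1 i]
    _ = _ := by
        congr 2; ext x
        rw [hsum, Finset.sum_mul]
        exact Finset.sum_congr rfl fun i _ => by ring

lemma weighted_ibp {d : ℕ} (α : ℝ) (hα : α < 0) (D : ℝ) (hD : 0 < D)
    (g : EuclideanSpace ℝ (Fin d) → ℝ) (hg : ContDiff ℝ 1 g)
    (hA : Integrable (fun x => (g x) ^ 2 * (D + ‖x‖ ^ 2) ^ (α - 1)))
    (hB : Integrable (fun x => ‖fderiv ℝ g x‖ ^ 2 * (D + ‖x‖ ^ 2) ^ α)) :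
    ∫ x, (g x) ^ 2 * (d * (D + ‖x‖ ^ 2) ^ (α - 1)
        + 2 * ((α - 1) * (D + ‖x‖ ^ 2) ^ (α - 2)) * ‖x‖ ^ 2)
      = - ∫ x, 2 * g x * fderiv ℝ g x x * (D + ‖x‖ ^ 2) ^ (α - 1) := by
  have hgc : Continuous g := hg.continuous
  have hgc' : Continuous (fderiv ℝ g) := hg.continuous_fderiv one_ne_zero
  have hpos : ∀ r : ℝ, 0 ≤ r → 0 < D + r := fun r hr => by linarith
  have hposx : ∀ x : EuclideanSpace ℝ (Fin d), 0 < D + ‖x‖ ^ 2 := fun x => by positivity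
  have hwc : ∀ p : ℝ, Continuous (fun x : EuclideanSpace ℝ (Fin d) => (D + ‖x‖ ^ 2) ^ p) := by
    intro p
    exact Continuous.rpow_const (by fun_prop) (fun x => Or.inl (hposx x).ne')
  have hp1 : ∀ r : ℝ, 0 ≤ r → (D + r) ^ α = (D + r) ^ (α - 1) * (D + r) := fun r hr => by
    rw [← Real.rpow_add_one (hpos r hr).ne']; congr 1; ring
  have hp2 : ∀ r : ℝ, 0 ≤ r → (D + r) ^ (α - 1) = (D + r) ^ (α - 2) * (D + r) := fun r hr => by
    rw [← Real.rpow_add_one (hpos r hr).ne']; congr 1; ring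
  have hp2le : ∀ r : ℝ, 0 ≤ r → (D + r) ^ (α - 2) * r ≤ (D + r) ^ (α - 1) := fun r hr => by
    rw [hp2 r hr]
    have := Real.rpow_pos_of_pos (hpos r hr) (α - 2)
    gcongr; linarith
  have hG : ContDiff ℝ 1 (fun x => g x ^ 2) := hg.pow 2
  have hGd : ∀ x, fderiv ℝ (fun x => g x ^ 2) x = (2 * g x) • fderiv ℝ g x := by
    intro x
    have := ((hg.differentiable one_ne_zero) x).hasFDerivAt.pow 2
    simpa using this.fderiv
  have hdomi : Integrable (fun x => (g x) ^ 2 * (D + ‖x‖ ^ 2) ^ (α - 1)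
      + ‖fderiv ℝ g x‖ ^ 2 * (D + ‖x‖ ^ 2) ^ α) := hA.add hB
  have hdom : ∀ x, 2 * |g x| * ‖fderiv ℝ g x‖ * ((D + ‖x‖ ^ 2) ^ (α - 1) * ‖x‖)
      ≤ (g x) ^ 2 * (D + ‖x‖ ^ 2) ^ (α - 1) + ‖fderiv ℝ g x‖ ^ 2 * (D + ‖x‖ ^ 2) ^ α := by
    intro x
    rw [hp1 _ (by positivity), ← sq_abs (g x)]
    have hw := Real.rpow_pos_of_pos (hposx x) (α - 1)
    have h1 : 2 * |g x| * ‖fderiv ℝ g x‖ * ‖x‖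
        ≤ |g x| ^ 2 + ‖fderiv ℝ g x‖ ^ 2 * (D + ‖x‖ ^ 2) := by
      nlinarith [sq_nonneg (|g x| - ‖fderiv ℝ g x‖ * ‖x‖),
        mul_nonneg (sq_nonneg ‖fderiv ℝ g x‖) hD.le]
    calc _ = (2 * |g x| * ‖fderiv ℝ g x‖ * ‖x‖) * (D + ‖x‖ ^ 2) ^ (α - 1) := by ring
      _ ≤ (|g x| ^ 2 + ‖fderiv ℝ g x‖ ^ 2 * (D + ‖x‖ ^ 2)) * (D + ‖x‖ ^ 2) ^ (α - 1) := by gcongr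
      _ = _ := by ring
  let χ : ℝ → ℝ → ℝ := fun ε r => (1 + ε * r)⁻¹
  let φ : ℝ → ℝ → ℝ := fun ε r => (D + r) ^ (α - 1) * χ ε r
  let φ' : ℝ → ℝ → ℝ := fun ε r =>
    (α - 1) * (D + r) ^ (α - 2) * χ ε r - (D + r) ^ (α - 1) * (ε * χ ε r ^ 2)
  have hχ0 : ∀ ε r : ℝ, 0 < ε → 0 ≤ r → 0 < χ ε r := fun ε r hε hr => by
    simp only [χ]; positivity
  have hχ1 : ∀ ε r : ℝ, 0 < ε → 0 ≤ r → χ ε r ≤ 1 := fun ε r hε hr => by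
    apply inv_le_one_of_one_le₀; nlinarith
  have hχ2 : ∀ ε r : ℝ, 0 < ε → 0 ≤ r → ε * χ ε r * r ≤ 1 := fun ε r hε hr => by
    have : 0 < 1 + ε * r := by positivity
    have h : ε * χ ε r * r = (ε * r) / (1 + ε * r) := by simp only [χ]; field_simp
    rw [h, div_le_one this]; linarith
  have hφabs : ∀ ε r : ℝ, 0 < ε → 0 ≤ r → |φ ε r| ≤ (D + r) ^ (α - 1) := fun ε r hε hr => by
    have hw := Real.rpow_pos_of_pos (hpos r hr) (α - 1)
    have := hχ0 ε r hε hr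
    rw [abs_of_pos (mul_pos hw this)]
    exact mul_le_of_le_one_right hw.le (hχ1 ε r hε hr)
  have hφ'abs : ∀ ε r : ℝ, 0 < ε → 0 ≤ r → |φ' ε r| * r ≤ (2 - α) * (D + r) ^ (α - 1) :=
    fun ε r hε hr => by
      have hw := Real.rpow_pos_of_pos (hpos r hr) (α - 1)
      have hw2 := Real.rpow_pos_of_pos (hpos r hr) (α - 2)
      have c0 := hχ0 ε r hε hr
      have c1 := hχ1 ε r hε hr
      have c2 := hχ2 ε r hε hr
      have h1 : |φ' ε r| ≤ (1 - α) * (D + r) ^ (α - 2) * χ ε r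
          + (D + r) ^ (α - 1) * (ε * χ ε r ^ 2) := by
        refine (abs_sub _ _).trans (le_of_eq ?_)
        rw [abs_mul, abs_mul, abs_of_pos c0, abs_of_pos hw2, abs_of_neg (by linarith : α - 1 < 0),
          abs_of_pos (by positivity : 0 < (D + r) ^ (α - 1) * (ε * χ ε r ^ 2))]
        ring
      calc |φ' ε r| * r ≤ ((1 - α) * (D + r) ^ (α - 2) * χ ε r
          + (D + r) ^ (α - 1) * (ε * χ ε r ^ 2)) * r := by gcongr
        _ = (1 - α) * ((D + r) ^ (α - 2) * r) * χ ε r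
            + (D + r) ^ (α - 1) * ((ε * χ ε r * r) * χ ε r) := by ring
        _ ≤ (1 - α) * ((D + r) ^ (α - 1)) * 1 + (D + r) ^ (α - 1) * (1 * 1) := by
            have : 0 ≤ 1 - α := by linarith
            have := hp2le r hr
            gcongr
        _ = _ := by ring
  have hφxc : ∀ ε : ℝ, 0 < ε →
      Continuous (fun x : EuclideanSpace ℝ (Fin d) => χ ε (‖x‖ ^ 2)) := fun ε hε => by
    apply Continuous.inv₀ (by fun_prop)
    intro x; positivity
  have hφc : ∀ ε : ℝ, 0 < ε →
      Continuous (fun x : EuclideanSpace ℝ (Fin d) => φ ε (‖x‖ ^ 2)) := fun ε hε =>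
    (hwc _).mul (hφxc ε hε)
  have hφc' : ∀ ε : ℝ, 0 < ε →
      Continuous (fun x : EuclideanSpace ℝ (Fin d) => φ' ε (‖x‖ ^ 2)) := fun ε hε =>
    ((continuous_const.mul (hwc _)).mul (hφxc ε hε)).sub
      ((hwc _).mul (continuous_const.mul ((hφxc ε hε).pow 2)))
  have hderiv : ∀ ε : ℝ, 0 < ε → ∀ r, 0 ≤ r → HasDerivAt (φ ε) (φ' ε r) r := by
    intro ε hε r hr
    have hne : 1 + ε * r ≠ 0 := by positivity
    have a1 : HasDerivAt (fun r => D + r) 1 r := (hasDerivAt_id r).const_add D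
    have a2 : HasDerivAt (fun r => (D + r) ^ (α - 1)) (1 * (α - 1) * (D + r) ^ (α - 1 - 1)) r :=
      a1.rpow_const (Or.inl (hpos r hr).ne')
    have a3 : HasDerivAt (fun r => 1 + ε * r) (ε * 1) r :=
      ((hasDerivAt_id r).const_mul ε).const_add 1
    have a4 : HasDerivAt (χ ε) (-(ε * 1) / (1 + ε * r) ^ 2) r := a3.inv hne
    have a5 := a2.mul a4
    have : 1 * (α - 1) * (D + r) ^ (α - 1 - 1) * χ ε r
        + (D + r) ^ (α - 1) * (-(ε * 1) / (1 + ε * r) ^ 2) = φ' ε r := by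
      have e1 : α - 1 - 1 = α - 2 := by ring
      simp only [φ', χ, e1]
      field_simp
      ring
    exact this ▸ a5
  have hcut : ∀ ε : ℝ, 0 < ε →
      ∫ x, g x ^ 2 * (d * φ ε (‖x‖ ^ 2) + 2 * φ' ε (‖x‖ ^ 2) * ‖x‖ ^ 2)
      = - ∫ x, 2 * g x * fderiv ℝ g x x * φ ε (‖x‖ ^ 2) := by
    intro ε hε
    have h := ibp_radial (fun x => g x ^ 2) hG (φ ε) (φ' ε) (hderiv ε hε) (hφc ε hε) (hφc' ε hε)
      ?_ ?_ ?_ ?_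
    · rw [h]
      simp only [hGd]
      simp
    · refine hdomi.mono' ?_ (Filter.Eventually.of_forall fun x => ?_)
      · exact ((hG.continuous_fderiv one_ne_zero).norm.mul
          ((hφc ε hε).abs.mul continuous_norm)).aestronglyMeasurable
      · refine le_trans ?_ (hdom x)
        rw [hGd, Real.norm_eq_abs, abs_of_nonneg (by positivity), norm_smul, norm_mul,
          Real.norm_eq_abs, Real.norm_eq_abs, abs_two]
        have := hφabs ε (‖x‖ ^ 2) hε (by positivity)
        gcongr
    · refine hA.mono' ?_ (Filter.Eventually.of_forall fun x => ?_)
      · exact ((hgc.pow 2).abs.mul (hφc ε hε).abs).aestronglyMeasurable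
      · rw [Real.norm_eq_abs, abs_of_nonneg (by positivity), abs_of_nonneg (sq_nonneg (g x))]
        have := hφabs ε (‖x‖ ^ 2) hε (by positivity)
        gcongr
    · refine (hA.const_mul (2 - α)).mono' ?_ (Filter.Eventually.of_forall fun x => ?_)
      · exact ((hgc.pow 2).abs.mul ((hφc' ε hε).abs.mul
          (continuous_norm.pow 2))).aestronglyMeasurable
      · rw [Real.norm_eq_abs, abs_of_nonneg (by positivity), abs_of_nonneg (sq_nonneg (g x))]
        have := hφ'abs ε (‖x‖ ^ 2) hε (by positivity)
        calc _ ≤ g x ^ 2 * ((2 - α) * (D + ‖x‖ ^ 2) ^ (α - 1)) := by gcongr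
          _ = _ := by ring
    · refine (hA.const_mul (1 + ε⁻¹)).mono' ?_ (Filter.Eventually.of_forall fun x => ?_)
      · exact ((hgc.pow 2).abs.mul ((hφc ε hε).abs.mul continuous_norm)).aestronglyMeasurable
      · rw [Real.norm_eq_abs, abs_of_nonneg (by positivity), abs_of_nonneg (sq_nonneg (g x))]
        have hr : (0:ℝ) ≤ ‖x‖ ^ 2 := by positivity
        have c0 := hχ0 ε _ hε hr
        have c1 := hχ1 ε _ hε hr
        have c2 := hχ2 ε _ hε hr
        have hw := Real.rpow_pos_of_pos (hposx x) (α - 1)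
        have hbd : χ ε (‖x‖ ^ 2) * ‖x‖ ≤ 1 + ε⁻¹ := by
          have c3 : χ ε (‖x‖ ^ 2) * ‖x‖ ^ 2 ≤ ε⁻¹ := by
            rw [← one_div, le_div_iff₀ hε]; linarith
          have c4 : ‖x‖ ≤ 1 + ‖x‖ ^ 2 := by nlinarith [norm_nonneg x]
          calc _ ≤ χ ε (‖x‖ ^ 2) * (1 + ‖x‖ ^ 2) := by gcongr
            _ ≤ _ := by linarith
        have e : |φ ε (‖x‖ ^ 2)| = (D + ‖x‖ ^ 2) ^ (α - 1) * χ ε (‖x‖ ^ 2) :=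
          abs_of_pos (mul_pos hw c0)
        rw [e]
        calc _ = g x ^ 2 * (D + ‖x‖ ^ 2) ^ (α - 1) * (χ ε (‖x‖ ^ 2) * ‖x‖) := by ring
          _ ≤ g x ^ 2 * (D + ‖x‖ ^ 2) ^ (α - 1) * (1 + ε⁻¹) := by gcongr
          _ = _ := by ring
  have hev : ∀ᶠ ε : ℝ in nhdsWithin 0 (Set.Ioi 0), 0 < ε := self_mem_nhdsWithin
  have hχlim : ∀ r : ℝ, Filter.Tendsto (fun ε => χ ε r) (nhdsWithin 0 (Set.Ioi 0)) (nhds 1) := by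
    intro r
    have : ContinuousAt (fun ε => χ ε r) 0 := by
      apply ContinuousAt.inv₀ (by fun_prop); simp
    have h2 := this.tendsto
    simp only [χ, zero_mul, add_zero, inv_one] at h2
    exact h2.mono_left nhdsWithin_le_nhds
  have hφlim : ∀ r : ℝ, Filter.Tendsto (fun ε => φ ε r) (nhdsWithin 0 (Set.Ioi 0))
      (nhds ((D + r) ^ (α - 1))) := by
    intro r
    simpa using (hχlim r).const_mul ((D + r) ^ (α - 1))
  have hid : Filter.Tendsto (fun ε : ℝ => ε) (nhdsWithin 0 (Set.Ioi 0)) (nhds 0) :=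
    nhdsWithin_le_nhds
  have hφ'lim : ∀ r : ℝ, Filter.Tendsto (fun ε => φ' ε r) (nhdsWithin 0 (Set.Ioi 0))
      (nhds ((α - 1) * (D + r) ^ (α - 2))) := by
    intro r
    have := ((hχlim r).const_mul ((α - 1) * (D + r) ^ (α - 2))).sub
      ((hid.mul ((hχlim r).pow 2)).const_mul ((D + r) ^ (α - 1)))
    simpa using this
  have L1 : Filter.Tendsto (fun ε => ∫ x, g x ^ 2 * (d * φ ε (‖x‖ ^ 2)
        + 2 * φ' ε (‖x‖ ^ 2) * ‖x‖ ^ 2)) (nhdsWithin 0 (Set.Ioi 0))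
      (nhds (∫ x, (g x) ^ 2 * (d * (D + ‖x‖ ^ 2) ^ (α - 1)
        + 2 * ((α - 1) * (D + ‖x‖ ^ 2) ^ (α - 2)) * ‖x‖ ^ 2))) := by
    apply tendsto_integral_filter_of_dominated_convergence
      (fun x => (d + 2 * (2 - α)) * (g x ^ 2 * (D + ‖x‖ ^ 2) ^ (α - 1)))
    · filter_upwards [hev] with ε hε
      exact ((hgc.pow 2).mul ((continuous_const.mul (hφc ε hε)).add
        ((continuous_const.mul (hφc' ε hε)).mul (continuous_norm.pow 2)))).aestronglyMeasurable
    · filter_upwards [hev] with ε hε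
      refine Filter.Eventually.of_forall fun x => ?_
      have hr : (0:ℝ) ≤ ‖x‖ ^ 2 := by positivity
      have b1 := hφabs ε _ hε hr
      have b2 := hφ'abs ε _ hε hr
      have b3 : |d * φ ε (‖x‖ ^ 2) + 2 * φ' ε (‖x‖ ^ 2) * ‖x‖ ^ 2|
          ≤ d * |φ ε (‖x‖ ^ 2)| + 2 * (|φ' ε (‖x‖ ^ 2)| * ‖x‖ ^ 2) := by
        refine (abs_add_le _ _).trans (le_of_eq ?_)
        rw [abs_mul (d : ℝ), abs_mul (2 * _), abs_mul 2, abs_two, abs_of_nonneg hr, Nat.abs_cast]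
        ring
      rw [norm_mul, Real.norm_eq_abs, Real.norm_eq_abs, abs_of_nonneg (sq_nonneg (g x))]
      calc _ ≤ g x ^ 2 * (d * |φ ε (‖x‖ ^ 2)| + 2 * (|φ' ε (‖x‖ ^ 2)| * ‖x‖ ^ 2)) := by gcongr
        _ ≤ g x ^ 2 * (d * (D + ‖x‖ ^ 2) ^ (α - 1)
            + 2 * ((2 - α) * (D + ‖x‖ ^ 2) ^ (α - 1))) := by gcongr
        _ = _ := by ring
    · exact hA.const_mul _
    · refine Filter.Eventually.of_forall fun x => ?_
      exact (((hφlim _).const_mul _).add (((hφ'lim _).const_mul 2).mul_const _)).const_mul _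
  have L2 : Filter.Tendsto (fun ε => ∫ x, 2 * g x * fderiv ℝ g x x * φ ε (‖x‖ ^ 2))
      (nhdsWithin 0 (Set.Ioi 0))
      (nhds (∫ x, 2 * g x * fderiv ℝ g x x * (D + ‖x‖ ^ 2) ^ (α - 1))) := by
    apply tendsto_integral_filter_of_dominated_convergence _ _ _ hdomi
    · refine Filter.Eventually.of_forall fun x => ?_
      exact (hφlim _).const_mul _
    · filter_upwards [hev] with ε hε
      exact (((continuous_const.mul hgc).mul (hgc'.clm_apply continuous_id)).mul
        (hφc ε hε)).aestronglyMeasurable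
    · filter_upwards [hev] with ε hε
      refine Filter.Eventually.of_forall fun x => ?_
      refine le_trans ?_ (hdom x)
      have b1 := hφabs ε (‖x‖ ^ 2) hε (by positivity)
      have b2 := (fderiv ℝ g x).le_opNorm x
      rw [norm_mul, norm_mul, norm_mul]
      simp only [Real.norm_eq_abs, abs_two] at b2 ⊢
      calc _ ≤ 2 * |g x| * (‖fderiv ℝ g x‖ * ‖x‖) * (D + ‖x‖ ^ 2) ^ (α - 1) := by gcongr
        _ = _ := by ring
  refine tendsto_nhds_unique (L1.congr' ?_) L2.neg
  filter_upwards [hev] with ε hε using hcut ε hε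

end HP

namespace HP

lemma cross_bound {d : ℕ} (α : ℝ) (D : ℝ) (hD : 0 < D) (η : ℝ) (hη : 0 < η)
    (g : EuclideanSpace ℝ (Fin d) → ℝ)
    (hA : Integrable (fun x => (g x) ^ 2 * (D + ‖x‖ ^ 2) ^ (α - 1)))
    (hB : Integrable (fun x => ‖fderiv ℝ g x‖ ^ 2 * (D + ‖x‖ ^ 2) ^ α)) :
    |∫ x, 2 * g x * fderiv ℝ g x x * (D + ‖x‖ ^ 2) ^ (α - 1)|
      ≤ η * (∫ x, (g x) ^ 2 * (D + ‖x‖ ^ 2) ^ (α - 1))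
        + η⁻¹ * ∫ x, ‖fderiv ℝ g x‖ ^ 2 * (D + ‖x‖ ^ 2) ^ α := by
  rw [← integral_const_mul, ← integral_const_mul,
    ← integral_add (hA.const_mul _) (hB.const_mul _), ← Real.norm_eq_abs]
  refine norm_integral_le_of_norm_le ((hA.const_mul _).add (hB.const_mul _))
    (Filter.Eventually.of_forall fun x => ?_)
  have hpos : 0 < D + ‖x‖ ^ 2 := by positivity
  have hp1 : (D + ‖x‖ ^ 2) ^ α = (D + ‖x‖ ^ 2) ^ (α - 1) * (D + ‖x‖ ^ 2) := by
    rw [← Real.rpow_add_one hpos.ne']; congr 1; ring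
  have hw := Real.rpow_pos_of_pos hpos (α - 1)
  have b2 := (fderiv ℝ g x).le_opNorm x
  simp only [norm_mul, Real.norm_eq_abs, abs_two, abs_of_pos hw] at b2 ⊢
  rw [hp1, ← sq_abs (g x)]
  have hη' : 0 < η⁻¹ := inv_pos.2 hη
  have h1 : 2 * |g x| * (‖fderiv ℝ g x‖ * ‖x‖)
      ≤ η * |g x| ^ 2 + η⁻¹ * (‖fderiv ℝ g x‖ ^ 2 * (D + ‖x‖ ^ 2)) := by
    have e : η * |g x| ^ 2 + η⁻¹ * (‖fderiv ℝ g x‖ ^ 2 * (D + ‖x‖ ^ 2))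
        - 2 * |g x| * (‖fderiv ℝ g x‖ * ‖x‖)
        = η⁻¹ * (η * |g x| - ‖fderiv ℝ g x‖ * ‖x‖) ^ 2 + η⁻¹ * (‖fderiv ℝ g x‖ ^ 2 * D) := by
      field_simp; ring
    have : 0 ≤ η⁻¹ * (η * |g x| - ‖fderiv ℝ g x‖ * ‖x‖) ^ 2
      + η⁻¹ * (‖fderiv ℝ g x‖ ^ 2 * D) := by positivity
    linarith
  calc _ ≤ 2 * |g x| * (‖fderiv ℝ g x‖ * ‖x‖) * (D + ‖x‖ ^ 2) ^ (α - 1) := by gcongr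
    _ ≤ (η * |g x| ^ 2 + η⁻¹ * (‖fderiv ℝ g x‖ ^ 2 * (D + ‖x‖ ^ 2)))
        * (D + ‖x‖ ^ 2) ^ (α - 1) := by gcongr
    _ = _ := by ring

/-- Integrability of the auxiliary weight. -/
lemma aux_integrable {d : ℕ} (α : ℝ) (D : ℝ) (hD : 0 < D)
    (g : EuclideanSpace ℝ (Fin d) → ℝ) (hg : Continuous g)
    (hA : Integrable (fun x => (g x) ^ 2 * (D + ‖x‖ ^ 2) ^ (α - 1))) :
    Integrable (fun x => (g x) ^ 2 * (D * (D + ‖x‖ ^ 2) ^ (α - 2))) := by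
  refine hA.mono' ?_ (Filter.Eventually.of_forall fun x => ?_)
  · refine ((hg.pow 2).mul (continuous_const.mul
      (Continuous.rpow_const (by fun_prop) (fun x => Or.inl ?_)))).aestronglyMeasurable
    positivity
  · have hpos : 0 < D + ‖x‖ ^ 2 := by positivity
    have hp2 : (D + ‖x‖ ^ 2) ^ (α - 1) = (D + ‖x‖ ^ 2) ^ (α - 2) * (D + ‖x‖ ^ 2) := by
      rw [← Real.rpow_add_one hpos.ne']; congr 1; ring
    have hw := Real.rpow_pos_of_pos hpos (α - 2)
    rw [Real.norm_eq_abs, abs_of_nonneg (by positivity), hp2, mul_comm D]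
    gcongr
    nlinarith [sq_nonneg ‖x‖]

/-- Integration by parts, rewritten. -/
lemma ibp_id {d : ℕ} (α : ℝ) (hα : α < 0) (D : ℝ) (hD : 0 < D)
    (g : EuclideanSpace ℝ (Fin d) → ℝ) (hg : ContDiff ℝ 1 g)
    (hA : Integrable (fun x => (g x) ^ 2 * (D + ‖x‖ ^ 2) ^ (α - 1)))
    (hB : Integrable (fun x => ‖fderiv ℝ g x‖ ^ 2 * (D + ‖x‖ ^ 2) ^ α)) :
    (d + 2 * α - 2) * (∫ x, (g x) ^ 2 * (D + ‖x‖ ^ 2) ^ (α - 1))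
      + (2 - 2 * α) * (∫ x, (g x) ^ 2 * (D * (D + ‖x‖ ^ 2) ^ (α - 2)))
      = - ∫ x, 2 * g x * fderiv ℝ g x x * (D + ‖x‖ ^ 2) ^ (α - 1) := by
  rw [← weighted_ibp α hα D hD g hg hA hB, ← integral_const_mul, ← integral_const_mul,
    ← integral_add (hA.const_mul _) ((aux_integrable α D hD g hg.continuous hA).const_mul _)]
  congr 1; ext x
  have hpos : 0 < D + ‖x‖ ^ 2 := by positivity
  have hp2 : (D + ‖x‖ ^ 2) ^ (α - 1) = (D + ‖x‖ ^ 2) ^ (α - 2) * (D + ‖x‖ ^ 2) := by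
    rw [← Real.rpow_add_one hpos.ne']; congr 1; ring
  rw [hp2]; ring

lemma caseB_pos {d : ℕ} (α : ℝ) (hα : α < 0) (hm : 0 < d + 2 * α - 2) (D : ℝ) (hD : 0 < D)
    (g : EuclideanSpace ℝ (Fin d) → ℝ) (hg : ContDiff ℝ 1 g)
    (hA : Integrable (fun x => (g x) ^ 2 * (D + ‖x‖ ^ 2) ^ (α - 1)))
    (hB : Integrable (fun x => ‖fderiv ℝ g x‖ ^ 2 * (D + ‖x‖ ^ 2) ^ α)) :
    (d + 2 * α - 2) ^ 2 / 4 * (∫ x, (g x) ^ 2 * (D + ‖x‖ ^ 2) ^ (α - 1))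
      ≤ ∫ x, ‖fderiv ℝ g x‖ ^ 2 * (D + ‖x‖ ^ 2) ^ α := by
  have h1 := ibp_id α hα D hD g hg hA hB
  set m : ℝ := d + 2 * α - 2 with hmdef
  have h2 := cross_bound α D hD (m / 2) (by positivity) g hA hB
  have h3 : 0 ≤ ∫ x, (g x) ^ 2 * (D * (D + ‖x‖ ^ 2) ^ (α - 2)) :=
    integral_nonneg fun x => by positivity
  have h4 : 0 ≤ (2 - 2 * α) * ∫ x, (g x) ^ 2 * (D * (D + ‖x‖ ^ 2) ^ (α - 2)) :=
    mul_nonneg (by linarith) h3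
  have h5 := (neg_le_abs _).trans h2
  rw [← h1] at h5
  set A := ∫ x, (g x) ^ 2 * (D + ‖x‖ ^ 2) ^ (α - 1)
  set Gr := ∫ x, ‖fderiv ℝ g x‖ ^ 2 * (D + ‖x‖ ^ 2) ^ α
  have h6 : m / 2 * A ≤ (m / 2)⁻¹ * Gr := by linarith
  have h7 : (m / 2) * (m / 2 * A) ≤ (m / 2) * ((m / 2)⁻¹ * Gr) := by gcongr
  rw [mul_inv_cancel_left₀ (by positivity)] at h7
  linarith

lemma caseB {d : ℕ} (hd : 1 ≤ d) (α : ℝ) (hα : α < 0) (hm : 0 < d + 2 * α - 2)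
    (D : ℝ) (hD : 0 ≤ D)
    (g : EuclideanSpace ℝ (Fin d) → ℝ) (hg : ContDiff ℝ 1 g)
    (hA : Integrable (fun x => (g x) ^ 2 * (D + ‖x‖ ^ 2) ^ (α - 1)))
    (hB : Integrable (fun x => ‖fderiv ℝ g x‖ ^ 2 * (D + ‖x‖ ^ 2) ^ α)) :
    (d + 2 * α - 2) ^ 2 / 4 * (∫ x, (g x) ^ 2 * (D + ‖x‖ ^ 2) ^ (α - 1))
      ≤ ∫ x, ‖fderiv ℝ g x‖ ^ 2 * (D + ‖x‖ ^ 2) ^ α := by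
  rcases hD.lt_or_eq with hD | rfl
  · exact caseB_pos α hα hm D hD g hg hA hB
  have : Nonempty (Fin d) := ⟨⟨0, hd⟩⟩
  have hne : ∀ᵐ x : EuclideanSpace ℝ (Fin d), x ≠ 0 := by
    simp [ae_iff]
  have hcmp : ∀ ε : ℝ, 0 < ε → ∀ p : ℝ, p < 0 → ∀ x : EuclideanSpace ℝ (Fin d), x ≠ 0 →
      (ε + ‖x‖ ^ 2) ^ p ≤ (0 + ‖x‖ ^ 2) ^ p := by
    intro ε hε p hp x hx
    have : 0 < ‖x‖ := norm_pos_iff.2 hx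
    exact Real.rpow_le_rpow_of_nonpos (by positivity) (by linarith) hp.le
  have hwc : ∀ ε : ℝ, 0 < ε → ∀ p : ℝ,
      Continuous (fun x : EuclideanSpace ℝ (Fin d) => (ε + ‖x‖ ^ 2) ^ p) := by
    intro ε hε p
    refine Continuous.rpow_const (by fun_prop) (fun x => Or.inl ?_)
    positivity
  have hgc' : Continuous (fderiv ℝ g) := hg.continuous_fderiv one_ne_zero
  have bA : ∀ ε : ℝ, 0 < ε → ∀ᵐ x : EuclideanSpace ℝ (Fin d),
      ‖(g x) ^ 2 * (ε + ‖x‖ ^ 2) ^ (α - 1)‖ ≤ (g x) ^ 2 * (0 + ‖x‖ ^ 2) ^ (α - 1) := by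
    intro ε hε
    filter_upwards [hne] with x hx
    rw [Real.norm_eq_abs, abs_of_nonneg (by positivity)]
    have := hcmp ε hε (α - 1) (by linarith) x hx
    gcongr
  have bB : ∀ ε : ℝ, 0 < ε → ∀ᵐ x : EuclideanSpace ℝ (Fin d),
      ‖fderiv ℝ g x‖ ^ 2 * (ε + ‖x‖ ^ 2) ^ α ≤ ‖fderiv ℝ g x‖ ^ 2 * (0 + ‖x‖ ^ 2) ^ α := by
    intro ε hε
    filter_upwards [hne] with x hx
    have := hcmp ε hε α hα x hx
    gcongr
  have mA : ∀ ε : ℝ, 0 < ε → AEStronglyMeasurable (fun x : EuclideanSpace ℝ (Fin d) =>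
      (g x) ^ 2 * (ε + ‖x‖ ^ 2) ^ (α - 1)) volume := fun ε hε =>
    ((hg.continuous.pow 2).mul (hwc ε hε _)).aestronglyMeasurable
  have iB : ∀ ε : ℝ, 0 < ε → Integrable (fun x : EuclideanSpace ℝ (Fin d) =>
      ‖fderiv ℝ g x‖ ^ 2 * (ε + ‖x‖ ^ 2) ^ α) volume := fun ε hε => by
    refine hB.mono' ((hgc'.norm.pow 2).mul (hwc ε hε _)).aestronglyMeasurable ?_
    filter_upwards [bB ε hε] with x hx
    rwa [Real.norm_eq_abs, abs_of_nonneg (by positivity)]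
  have hev : ∀ᶠ ε : ℝ in nhdsWithin 0 (Set.Ioi 0), 0 < ε := self_mem_nhdsWithin
  have L : Filter.Tendsto (fun ε : ℝ => ∫ x, (g x) ^ 2 * (ε + ‖x‖ ^ 2) ^ (α - 1))
      (nhdsWithin 0 (Set.Ioi 0)) (nhds (∫ x, (g x) ^ 2 * (0 + ‖x‖ ^ 2) ^ (α - 1))) := by
    apply tendsto_integral_filter_of_dominated_convergence _ _ _ hA
    · filter_upwards [hne] with x hx
      have hx' : 0 < ‖x‖ := norm_pos_iff.2 hx
      have : ContinuousAt (fun ε : ℝ => (ε + ‖x‖ ^ 2) ^ (α - 1)) 0 := by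
        refine ContinuousAt.rpow_const (by fun_prop) (Or.inl ?_)
        positivity
      exact (this.tendsto.mono_left nhdsWithin_le_nhds).const_mul _
    · filter_upwards [hev] with ε hε using mA ε hε
    · filter_upwards [hev] with ε hε using bA ε hε
  refine le_of_tendsto (L.const_mul _) ?_
  filter_upwards [hev] with ε hε
  refine (caseB_pos α hα hm ε hε g hg (hA.mono' (mA ε hε) (bA ε hε)) (iB ε hε)).trans ?_
  exact integral_mono_ae (iB ε hε) hB (bB ε hε)

lemma weight_integrable {d : ℕ} (α : ℝ) (hm : 0 < 2 - 2 * α - d) (D : ℝ) (hD : 0 < D) :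
    Integrable (fun x : EuclideanSpace ℝ (Fin d) => (D + ‖x‖ ^ 2) ^ (α - 1)) := by
  have h := integrable_rpow_neg_one_add_norm_sq (E := EuclideanSpace ℝ (Fin d))
    (μ := volume) (r := 2 - 2 * α) (by rw [finrank_euclideanSpace_fin]; linarith)
  have e : -(2 - 2 * α) / 2 = α - 1 := by ring
  rw [e] at h
  have hα : α - 1 < 0 := by
    have : (0:ℝ) ≤ d := Nat.cast_nonneg d
    linarith
  have hM : 0 < min D 1 := lt_min hD one_pos
  refine (h.const_mul ((min D 1) ^ (α - 1))).mono' ?_ (Filter.Eventually.of_forall fun x => ?_)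
  · refine (Continuous.rpow_const (by fun_prop) (fun x => Or.inl ?_)).aestronglyMeasurable
    positivity
  · rw [Real.norm_eq_abs, abs_of_nonneg (by positivity), ← Real.mul_rpow hM.le (by positivity)]
    apply Real.rpow_le_rpow_of_nonpos (by positivity) _ hα.le
    have h1 := min_le_left D 1
    have h2 := min_le_right D 1
    nlinarith [sq_nonneg ‖x‖]

lemma caseA_const {d : ℕ} (α : ℝ) (hα : α < 0) (hm : 0 < 2 - 2 * α - d) :
    ∃ C : ℝ, 0 < C ∧ ∀ D : ℝ, 0 < D → ∀ f : EuclideanSpace ℝ (Fin d) → ℝ, ContDiff ℝ 1 f →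
      (∀ c : ℝ, Integrable (fun x => (f x - c) ^ 2 * (D + ‖x‖ ^ 2) ^ (α - 1))) →
      Integrable (fun x => ‖fderiv ℝ f x‖ ^ 2 * (D + ‖x‖ ^ 2) ^ α) →
      ∃ c : ℝ, ∫ x, (f x - c) ^ 2 * (D + ‖x‖ ^ 2) ^ (α - 1)
        ≤ C * ∫ x, ‖fderiv ℝ f x‖ ^ 2 * (D + ‖x‖ ^ 2) ^ α := by
  set m : ℝ := 2 - 2 * α - d with hmdef
  set K : ℝ := 2 - 2 * α with hK
  have hKpos : 0 < K := by simp only [hK]; linarith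
  set δ : ℝ := m / (4 * K) with hδ
  have hδpos : 0 < δ := by positivity
  set P : ℝ := 1 + 1 / δ with hP
  have hPpos : 0 < P := by positivity
  refine ⟨(2 / m) * (4 / m + K * (4 / δ * 2 ^ d * P ^ (-α))), by positivity, ?_⟩
  intro D hD f hf hAc hB
  set R : ℝ := Real.sqrt (D / δ) with hR
  have hRpos : 0 < R := Real.sqrt_pos.2 (by positivity)
  have hR2 : R ^ 2 = D / δ := Real.sq_sqrt (by positivity)
  obtain ⟨c, hc⟩ := local_poincare f hf R hRpos
  refine ⟨c, ?_⟩
  set g : EuclideanSpace ℝ (Fin d) → ℝ := fun x => f x - c with hgdef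
  have hg : ContDiff ℝ 1 g := hf.sub contDiff_const
  have hgd : ∀ x, fderiv ℝ g x = fderiv ℝ f x := fun x => fderiv_sub_const c
  have hA : Integrable (fun x => g x ^ 2 * (D + ‖x‖ ^ 2) ^ (α - 1)) := hAc c
  have hB' : Integrable (fun x => ‖fderiv ℝ g x‖ ^ 2 * (D + ‖x‖ ^ 2) ^ α) := by
    simpa only [hgd] using hB
  have h1 := ibp_id α hα D hD g hg hA hB'
  have h2 := cross_bound α D hD (m / 4) (by positivity) g hA hB'
  simp only [hgd] at h1 h2
  set B : Set (EuclideanSpace ℝ (Fin d)) := Metric.closedBall 0 R with hBdef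
  have hBm : MeasurableSet B := Metric.isClosed_closedBall.measurableSet
  have hBc : IsCompact B := isCompact_closedBall _ _
  have igB : IntegrableOn (fun x => g x ^ 2) B :=
    (hg.continuous.pow 2).continuousOn.integrableOn_compact hBc
  have hgc' : Continuous (fderiv ℝ f) := hf.continuous_fderiv one_ne_zero
  have ifB : IntegrableOn (fun x => ‖fderiv ℝ f x‖ ^ 2) B :=
    (hgc'.norm.pow 2).continuousOn.integrableOn_compact hBc
  set A := ∫ x, g x ^ 2 * (D + ‖x‖ ^ 2) ^ (α - 1) with hAdef
  set Gr := ∫ x, ‖fderiv ℝ f x‖ ^ 2 * (D + ‖x‖ ^ 2) ^ α with hGr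
  have hGr0 : 0 ≤ Gr := integral_nonneg fun x => by positivity
  have h3 : ∫ x, g x ^ 2 * (D * (D + ‖x‖ ^ 2) ^ (α - 2))
      ≤ δ * A + D ^ (α - 1) * ∫ x in B, g x ^ 2 := by
    rw [hAdef, ← integral_const_mul, ← integral_indicator hBm, ← integral_const_mul,
      ← integral_add (hA.const_mul _) ((igB.integrable_indicator hBm).const_mul _)]
    apply integral_mono (aux_integrable α D hD g hg.continuous hA)
      ((hA.const_mul _).add ((igB.integrable_indicator hBm).const_mul _))
    intro x
    have hpos : 0 < D + ‖x‖ ^ 2 := by positivity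
    have hp2 : (D + ‖x‖ ^ 2) ^ (α - 1) = (D + ‖x‖ ^ 2) ^ (α - 2) * (D + ‖x‖ ^ 2) := by
      rw [← Real.rpow_add_one hpos.ne']; congr 1; ring
    have hw := Real.rpow_pos_of_pos hpos (α - 2)
    by_cases hx : x ∈ B
    · simp only [Pi.add_apply, Set.indicator_of_mem hx]
      have e1 : D * (D + ‖x‖ ^ 2) ^ (α - 2) ≤ (D + ‖x‖ ^ 2) ^ (α - 1) := by
        rw [hp2, mul_comm]; gcongr; nlinarith [sq_nonneg ‖x‖]
      have e2 : (D + ‖x‖ ^ 2) ^ (α - 1) ≤ D ^ (α - 1) :=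
        Real.rpow_le_rpow_of_nonpos hD (by nlinarith [sq_nonneg ‖x‖]) (by linarith)
      calc g x ^ 2 * (D * (D + ‖x‖ ^ 2) ^ (α - 2)) ≤ g x ^ 2 * D ^ (α - 1) := by
            gcongr; exact e1.trans e2
        _ ≤ δ * (g x ^ 2 * (D + ‖x‖ ^ 2) ^ (α - 1)) + D ^ (α - 1) * g x ^ 2 := by
            have : 0 ≤ δ * (g x ^ 2 * (D + ‖x‖ ^ 2) ^ (α - 1)) := by positivity
            linarith
    · simp only [Pi.add_apply, Set.indicator_of_notMem hx, mul_zero, add_zero]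
      have hx1 : R < ‖x‖ := by simpa [hBdef] using hx
      have hx2 : D / δ ≤ ‖x‖ ^ 2 := by rw [← hR2]; gcongr
      have hx3 : D ≤ δ * (D + ‖x‖ ^ 2) := by
        rw [div_le_iff₀ hδpos] at hx2; nlinarith
      rw [hp2]
      calc g x ^ 2 * (D * (D + ‖x‖ ^ 2) ^ (α - 2))
          ≤ g x ^ 2 * ((δ * (D + ‖x‖ ^ 2)) * (D + ‖x‖ ^ 2) ^ (α - 2)) := by gcongr
        _ = _ := by ring
  have h4 : ∫ x in B, ‖fderiv ℝ f x‖ ^ 2 ≤ (D * P) ^ (-α) * Gr := by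
    calc ∫ x in B, ‖fderiv ℝ f x‖ ^ 2
        ≤ ∫ x in B, (D * P) ^ (-α) * (‖fderiv ℝ f x‖ ^ 2 * (D + ‖x‖ ^ 2) ^ α) := by
          apply setIntegral_mono_on ifB (hB.const_mul _).integrableOn hBm
          intro x hx
          have hx1 : ‖x‖ ≤ R := by simpa [hBdef] using hx
          have hx2 : ‖x‖ ^ 2 ≤ D / δ := by rw [← hR2]; gcongr
          have hDP : D + ‖x‖ ^ 2 ≤ D * P := by
            have : D * P = D + D / δ := by simp only [hP]; ring
            linarith
          have hpos : 0 < D + ‖x‖ ^ 2 := by positivity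
          have e1 : (D * P) ^ α ≤ (D + ‖x‖ ^ 2) ^ α :=
            Real.rpow_le_rpow_of_nonpos hpos hDP hα.le
          have e2 : (1:ℝ) ≤ (D * P) ^ (-α) * (D + ‖x‖ ^ 2) ^ α := by
            calc (1:ℝ) = (D * P) ^ (-α) * (D * P) ^ α := by
                  rw [← Real.rpow_add (by positivity)]; simp
              _ ≤ _ := by gcongr
          calc ‖fderiv ℝ f x‖ ^ 2 = ‖fderiv ℝ f x‖ ^ 2 * 1 := by ring
            _ ≤ ‖fderiv ℝ f x‖ ^ 2 * ((D * P) ^ (-α) * (D + ‖x‖ ^ 2) ^ α) := by gcongr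
            _ = _ := by ring
      _ = (D * P) ^ (-α) * ∫ x in B, ‖fderiv ℝ f x‖ ^ 2 * (D + ‖x‖ ^ 2) ^ α :=
          integral_const_mul _ _
      _ ≤ _ := by
          gcongr
          exact setIntegral_le_integral hB (Filter.Eventually.of_forall fun x => by positivity)
  have h5 : D ^ (α - 1) * ∫ x in B, g x ^ 2 ≤ 4 / δ * 2 ^ d * P ^ (-α) * Gr := by
    calc D ^ (α - 1) * ∫ x in B, g x ^ 2
        ≤ D ^ (α - 1) * (4 * R ^ 2 * 2 ^ d * ((D * P) ^ (-α) * Gr)) := by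
          gcongr
          exact hc.trans (by gcongr)
      _ = (D ^ (α - 1) * D * D ^ (-α)) * (4 / δ * 2 ^ d * P ^ (-α) * Gr) := by
          rw [hR2, Real.mul_rpow hD.le hPpos.le]; ring
      _ = _ := by
          rw [← Real.rpow_add_one hD.ne', ← Real.rpow_add hD]
          simp
  have h6 := (le_abs_self _).trans h2
  have h7 : K * (∫ x, g x ^ 2 * (D * (D + ‖x‖ ^ 2) ^ (α - 2)))
      ≤ K * (δ * A + 4 / δ * 2 ^ d * P ^ (-α) * Gr) := by
    gcongr; linarith
  have hKδ : K * δ = m / 4 := by simp only [hδ]; field_simp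
  have h8 : (d + 2 * α - 2) = -m := by simp only [hmdef, hK]; ring
  rw [h8] at h1
  have h9 : m / 2 * A ≤ ((m / 4)⁻¹ + K * (4 / δ * 2 ^ d * P ^ (-α))) * Gr := by
    have : K * (δ * A + 4 / δ * 2 ^ d * P ^ (-α) * Gr)
      = m / 4 * A + K * (4 / δ * 2 ^ d * P ^ (-α)) * Gr := by rw [← hKδ]; ring
    linarith
  calc A = (2 / m) * (m / 2 * A) := by field_simp
    _ ≤ (2 / m) * (((m / 4)⁻¹ + K * (4 / δ * 2 ^ d * P ^ (-α))) * Gr) := by gcongr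
    _ = _ := by rw [inv_div]; ring

end HP

/-- **Hardy–Poincaré inequality** (Bonforte–Dolbeault–Grillo–Vázquez; Lemma 2.3). -/
theorem hardy_poincare (d : ℕ) (hd : 1 ≤ d) (α : ℝ) (hα : α < 0)
    (hα' : 3 ≤ d → α ≠ (2 - (d : ℝ)) / 2) :
    ∃ Λ : ℝ, 0 < Λ ∧
      ∀ D : ℝ, 0 ≤ D → (α < (2 - (d : ℝ)) / 2 → 0 < D) →
        ∀ f : EuclideanSpace ℝ (Fin d) → ℝ, ContDiff ℝ 1 f →
          Integrable (fun x => ‖fderiv ℝ f x‖ ^ 2 * (D + ‖x‖ ^ 2) ^ α) →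
          Integrable (fun x => |f x| * (D + ‖x‖ ^ 2) ^ (α - 1)) →
          (∫ x, f x * (D + ‖x‖ ^ 2) ^ (α - 1)) = 0 →
          Λ * ∫ x, (f x) ^ 2 * (D + ‖x‖ ^ 2) ^ (α - 1) ≤
            ∫ x, ‖fderiv ℝ f x‖ ^ 2 * (D + ‖x‖ ^ 2) ^ α := by
  have htriv : ∀ (Λ D : ℝ) (f : EuclideanSpace ℝ (Fin d) → ℝ), 0 ≤ D →
      ¬ Integrable (fun x => (f x) ^ 2 * (D + ‖x‖ ^ 2) ^ (α - 1)) →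
      Λ * ∫ x, (f x) ^ 2 * (D + ‖x‖ ^ 2) ^ (α - 1) ≤
            ∫ x, ‖fderiv ℝ f x‖ ^ 2 * (D + ‖x‖ ^ 2) ^ α := by
    intro Λ D f hD h
    rw [integral_undef h, mul_zero]
    exact integral_nonneg fun x => by positivity
  rcases lt_or_ge α ((2 - (d : ℝ)) / 2) with hlt | hge
  · have hm : 0 < 2 - 2 * α - d := by linarith
    obtain ⟨C, hC, H⟩ := HP.caseA_const (d := d) α hα hm
    refine ⟨C⁻¹, by positivity, ?_⟩
    intro D hD0 hDpos f hf hB hL1 hmean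
    have hD := hDpos hlt
    by_cases hA : Integrable (fun x => (f x) ^ 2 * (D + ‖x‖ ^ 2) ^ (α - 1))
    swap
    · exact htriv _ _ _ hD0 hA
    have hw := HP.weight_integrable (d := d) α hm D hD
    have hwc : Continuous (fun x : EuclideanSpace ℝ (Fin d) => (D + ‖x‖ ^ 2) ^ (α - 1)) := by
      refine Continuous.rpow_const (by fun_prop) (fun x => Or.inl ?_)
      positivity
    have hF : Integrable (fun x => f x * (D + ‖x‖ ^ 2) ^ (α - 1)) := by
      refine hL1.mono' (hf.continuous.mul hwc).aestronglyMeasurable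
        (Filter.Eventually.of_forall fun x => ?_)
      rw [norm_mul, Real.norm_eq_abs, Real.norm_eq_abs,
        abs_of_nonneg (by positivity : 0 ≤ (D + ‖x‖ ^ 2) ^ (α - 1))]
    have hexp : ∀ c : ℝ, (fun x => (f x - c) ^ 2 * (D + ‖x‖ ^ 2) ^ (α - 1))
        = fun x => (f x) ^ 2 * (D + ‖x‖ ^ 2) ^ (α - 1)
          + ((-2 * c) * (f x * (D + ‖x‖ ^ 2) ^ (α - 1)) + c ^ 2 * (D + ‖x‖ ^ 2) ^ (α - 1)) := by
      intro c; ext x; ring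
    have i2 : ∀ c : ℝ, Integrable (fun x : EuclideanSpace ℝ (Fin d) =>
        (-2 * c) * (f x * (D + ‖x‖ ^ 2) ^ (α - 1)) + c ^ 2 * (D + ‖x‖ ^ 2) ^ (α - 1)) :=
      fun c => (hF.const_mul _).add (hw.const_mul _)
    have hAc : ∀ c : ℝ, Integrable (fun x => (f x - c) ^ 2 * (D + ‖x‖ ^ 2) ^ (α - 1)) := by
      intro c
      rw [hexp]
      exact hA.add (i2 c)
    obtain ⟨c, hc⟩ := H D hD f hf hAc hB
    have hle : ∫ x, (f x) ^ 2 * (D + ‖x‖ ^ 2) ^ (α - 1)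
        ≤ ∫ x, (f x - c) ^ 2 * (D + ‖x‖ ^ 2) ^ (α - 1) := by
      rw [hexp c, integral_add hA (i2 c), integral_add (hF.const_mul _) (hw.const_mul _),
        integral_const_mul, integral_const_mul, hmean]
      have : 0 ≤ c ^ 2 * ∫ x : EuclideanSpace ℝ (Fin d), (D + ‖x‖ ^ 2) ^ (α - 1) :=
        mul_nonneg (sq_nonneg c) (integral_nonneg fun x => by positivity)
      linarith
    rw [inv_mul_le_iff₀ hC]
    exact hle.trans hc
  · have hd3 : 3 ≤ d := by
      by_contra h
      have : (d : ℝ) ≤ 2 := by exact_mod_cast (by omega : d ≤ 2)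
      linarith
    have hgt : (2 - (d : ℝ)) / 2 < α := lt_of_le_of_ne hge (hα' hd3).symm
    have hm : 0 < (d : ℝ) + 2 * α - 2 := by linarith
    refine ⟨(d + 2 * α - 2) ^ 2 / 4, by positivity, ?_⟩
    intro D hD0 _ f hf hB _ _
    by_cases hA : Integrable (fun x => (f x) ^ 2 * (D + ‖x‖ ^ 2) ^ (α - 1))
    · exact HP.caseB hd α hα hm D hD0 f hf hA hB
    · exact htriv _ _ _ hD0 hA
end

section
/- There exists a constant Λ > 0 (depending only on d, γ, C₁, C₂) such that for every continuously differentiable g : ℝ^d → ℂ with ∫_{ℝ^d} |∇(g/M)|² M² dv < ∞ and ∫_{ℝ^d} |g|² ⟨v⟩^{−2} dv < ∞, setting P(g) := (∫_{ℝ^d} M²⟨v⟩^{−2} dv)^{−1} ∫_{ℝ^d} g M ⟨v⟩^{−2} dv, one has Λ ∫_{ℝ^d} |g(v) − P(g) M(v)|² ⟨v⟩^{−2} dv ≤ ∫_{ℝ^d} |∇(g/M)(v)|² M(v)² dv. -/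
open MeasureTheory Real

theorem hp_cs {α : Type*} [MeasurableSpace α] (μ : Measure α) (f : α → ENNReal) (hf : Measurable f) :
    (∫⁻ a, f a ∂μ) ^ 2 ≤ μ Set.univ * ∫⁻ a, f a ^ 2 ∂μ := by
  have h := ENNReal.lintegral_mul_le_Lp_mul_Lq μ (p := 2) (q := 2)
    Real.HolderConjugate.two_two hf.aemeasurable (aemeasurable_const (b := (1 : ENNReal)))
  simp only [Pi.mul_apply, mul_one, ENNReal.rpow_two, one_pow, lintegral_one] at h
  calc (∫⁻ a, f a ∂μ) ^ 2 ≤ _ := pow_le_pow_left' h 2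
    _ = _ := by
      rw [mul_pow, ← ENNReal.rpow_two, ← ENNReal.rpow_two, ← ENNReal.rpow_mul, ← ENNReal.rpow_mul]
      norm_num
      rw [mul_comm]

theorem hp_seg {E : Type*} [NormedAddCommGroup E] [NormedSpace ℝ E]
    (h : E → ℂ) (hh : ContDiff ℝ 1 h) (x y : E) :
    ‖h x - h y‖ₑ ^ 2 ≤ ‖x - y‖ₑ ^ 2 *
      ∫⁻ t in Set.Ioo (0:ℝ) 1, ‖fderiv ℝ h ((1 - t) • y + t • x)‖ₑ ^ 2 := by
  have hc : Continuous (fderiv ℝ h) := hh.continuous_fderiv (by norm_num)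
  have hd : ∀ t ∈ Set.uIcc (0:ℝ) 1, HasDerivAt (fun t : ℝ => h ((1 - t) • y + t • x))
      (fderiv ℝ h ((1 - t) • y + t • x) (x - y)) t := by
    intro t _
    have h1 : HasDerivAt (fun t : ℝ => (1 - t) • y + t • x) (x - y) t := by
      have := (((hasDerivAt_id t).const_sub 1).smul_const y).add ((hasDerivAt_id t).smul_const x)
      have e : x - y = (-1 : ℝ) • y + (1 : ℝ) • x := by
        rw [neg_one_smul, one_smul]; abel
      rw [e]
      exact this
    exact ((hh.differentiable (by norm_num)) _).hasFDerivAt.comp_hasDerivAt t h1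
  have hcc : Continuous fun t : ℝ => fderiv ℝ h ((1 - t) • y + t • x) := by fun_prop
  have h2 := intervalIntegral.integral_eq_sub_of_hasDerivAt hd
    (Continuous.intervalIntegrable (by fun_prop) _ _)
  simp only [sub_self, zero_smul, one_smul, zero_add, sub_zero, add_zero] at h2
  rw [intervalIntegral.integral_of_le zero_le_one, integral_Ioc_eq_integral_Ioo] at h2
  rw [← h2]
  have h3 : ‖∫ t in Set.Ioo (0:ℝ) 1, fderiv ℝ h ((1 - t) • y + t • x) (x - y)‖ₑ ≤
      ‖x - y‖ₑ * ∫⁻ t in Set.Ioo (0:ℝ) 1, ‖fderiv ℝ h ((1 - t) • y + t • x)‖ₑ := by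
    refine (enorm_integral_le_lintegral_enorm _).trans ?_
    rw [← lintegral_const_mul' _ _ enorm_ne_top]
    refine lintegral_mono fun t => ?_
    rw [mul_comm]
    exact ContinuousLinearMap.le_opENorm _ _
  refine (pow_le_pow_left' h3 2).trans ?_
  rw [mul_pow]
  gcongr
  refine (hp_cs _ _ hcc.enorm.measurable).trans ?_
  simp

theorem hp_scale {d : ℕ} (F : EuclideanSpace ℝ (Fin d) → ENNReal) (hF : Measurable F)
    (t : ℝ) (ht : 0 < t) (c : EuclideanSpace ℝ (Fin d)) :
    ∫⁻ x, F (c + t • x) = ENNReal.ofReal (t ^ d)⁻¹ * ∫⁻ x, F x := by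
  have h := Measure.map_addHaar_smul (volume : Measure (EuclideanSpace ℝ (Fin d))) ht.ne'
  have h1 : ∫⁻ x, F (c + t • x) = ∫⁻ y, F (c + y) ∂(Measure.map (t • ·) volume) := by
    rw [lintegral_map (by fun_prop) (by fun_prop)]
  rw [h1, h, lintegral_smul_measure, lintegral_add_left_eq_self]
  simp [abs_of_pos ht]

/-- pointwise convexity estimate -/
theorem hp_key {E : Type*} [NormedAddCommGroup E] [NormedSpace ℝ E] (γ : ℝ) (hγ : 0 < γ)
    (x y : E) (t : ℝ) (ht : t ∈ Set.Ioo (0:ℝ) 1) :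
    (1 + ‖x‖ ^ 2) ^ (-γ) * (1 + ‖y‖ ^ 2) ^ (-γ) ≤
      4 ^ γ * ((1 + ‖(1 - t) • y + t • x‖ ^ 2) ^ (-γ) *
        ((t ^ 2) ^ γ * (1 + ‖y‖ ^ 2) ^ (-γ) + ((1 - t) ^ 2) ^ γ * (1 + ‖x‖ ^ 2) ^ (-γ))) := by
  obtain ⟨h0, h1⟩ := ht
  have h1' : 0 < 1 - t := by linarith
  set z := (1 - t) • y + t • x
  have hz : ‖z‖ ≤ (1 - t) * ‖y‖ + t * ‖x‖ := by
    refine (norm_add_le _ _).trans ?_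
    rw [norm_smul, norm_smul, Real.norm_of_nonneg h0.le, Real.norm_of_nonneg h1'.le]
  have px : 0 < 1 + ‖x‖ ^ 2 := by positivity
  have py : 0 < 1 + ‖y‖ ^ 2 := by positivity
  have pz : 0 < 1 + ‖z‖ ^ 2 := by positivity
  have hconv : 1 + ‖z‖ ^ 2 ≤ 2 * (t ^ 2 * (1 + ‖x‖ ^ 2) + (1 - t) ^ 2 * (1 + ‖y‖ ^ 2)) := by
    have : ‖z‖ ^ 2 ≤ ((1 - t) * ‖y‖ + t * ‖x‖) ^ 2 := pow_le_pow_left₀ (norm_nonneg _) hz 2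
    nlinarith [sq_nonneg ((1 - t) * ‖y‖ - t * ‖x‖), sq_nonneg (1 - t - t)]
  have hmax : (1 + ‖z‖ ^ 2) ^ γ ≤ 4 ^ γ * ((t ^ 2) ^ γ * (1 + ‖x‖ ^ 2) ^ γ +
      ((1 - t) ^ 2) ^ γ * (1 + ‖y‖ ^ 2) ^ γ) := by
    rw [← Real.mul_rpow (by positivity) px.le, ← Real.mul_rpow (by positivity) py.le]
    rcases le_total (t ^ 2 * (1 + ‖x‖ ^ 2)) ((1 - t) ^ 2 * (1 + ‖y‖ ^ 2)) with hle | hle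
    · calc (1 + ‖z‖ ^ 2) ^ γ ≤ (4 * ((1 - t) ^ 2 * (1 + ‖y‖ ^ 2))) ^ γ :=
            Real.rpow_le_rpow pz.le (by linarith) hγ.le
        _ = 4 ^ γ * ((1 - t) ^ 2 * (1 + ‖y‖ ^ 2)) ^ γ :=
            Real.mul_rpow (by positivity) (by positivity)
        _ ≤ _ := by gcongr; exact le_add_of_nonneg_left (by positivity)
    · calc (1 + ‖z‖ ^ 2) ^ γ ≤ (4 * (t ^ 2 * (1 + ‖x‖ ^ 2))) ^ γ :=
            Real.rpow_le_rpow pz.le (by linarith) hγ.le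
        _ = 4 ^ γ * (t ^ 2 * (1 + ‖x‖ ^ 2)) ^ γ :=
            Real.mul_rpow (by positivity) (by positivity)
        _ ≤ _ := by gcongr; exact le_add_of_nonneg_right (by positivity)
  rw [Real.rpow_neg px.le, Real.rpow_neg py.le, Real.rpow_neg pz.le]
  have qx := Real.rpow_pos_of_pos px γ
  have qy := Real.rpow_pos_of_pos py γ
  have qz := Real.rpow_pos_of_pos pz γ
  set X := (1 + ‖x‖ ^ 2) ^ γ
  set Y := (1 + ‖y‖ ^ 2) ^ γ
  set Z := (1 + ‖z‖ ^ 2) ^ γ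
  have e : 4 ^ γ * (Z⁻¹ * ((t ^ 2) ^ γ * Y⁻¹ + ((1 - t) ^ 2) ^ γ * X⁻¹)) =
      (4 ^ γ * ((t ^ 2) ^ γ * X + ((1 - t) ^ 2) ^ γ * Y)) * Z⁻¹ * (X⁻¹ * Y⁻¹) := by
    field_simp
  rw [e]
  have : 1 ≤ (4 ^ γ * ((t ^ 2) ^ γ * X + ((1 - t) ^ 2) ^ γ * Y)) * Z⁻¹ := by
    rw [← div_eq_mul_inv, one_le_div qz]; exact hmax
  exact le_mul_of_one_le_left (by positivity) this

theorem hp_pw {E : Type*} [NormedAddCommGroup E] (γ : ℝ) (x y : E) :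
    ‖x - y‖ₑ ^ 2 * (ENNReal.ofReal ((1 + ‖x‖ ^ 2) ^ (-γ) / (1 + ‖x‖ ^ 2)) *
      ENNReal.ofReal ((1 + ‖y‖ ^ 2) ^ (-γ) / (1 + ‖y‖ ^ 2))) ≤
    ENNReal.ofReal (2 * ((1 + ‖x‖ ^ 2) ^ (-γ) * (1 + ‖y‖ ^ 2) ^ (-γ))) := by
  rw [← ofReal_norm, ← ENNReal.ofReal_pow (norm_nonneg _), ← ENNReal.ofReal_mul (by positivity),
    ← ENNReal.ofReal_mul (by positivity)]
  apply ENNReal.ofReal_le_ofReal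
  have h1 : ‖x - y‖ ^ 2 ≤ 2 * ((1 + ‖x‖ ^ 2) * (1 + ‖y‖ ^ 2)) := by
    have := pow_le_pow_left₀ (norm_nonneg _) (norm_sub_le x y) 2
    nlinarith [sq_nonneg (‖x‖ - ‖y‖), mul_nonneg (sq_nonneg ‖x‖) (sq_nonneg ‖y‖)]
  have px : 0 < 1 + ‖x‖ ^ 2 := by positivity
  have py : 0 < 1 + ‖y‖ ^ 2 := by positivity
  calc _ ≤ (2 * ((1 + ‖x‖ ^ 2) * (1 + ‖y‖ ^ 2))) * ((1 + ‖x‖ ^ 2) ^ (-γ) / (1 + ‖x‖ ^ 2) *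
      ((1 + ‖y‖ ^ 2) ^ (-γ) / (1 + ‖y‖ ^ 2))) := by gcongr
    _ = _ := by field_simp

theorem hp_tpow (d : ℕ) (γ : ℝ) (hγ : (d : ℝ) / 2 < γ) (t : ℝ) (h0 : 0 < t) (h1 : t < 1) :
    ENNReal.ofReal ((t ^ 2) ^ γ) * ENNReal.ofReal (t ^ d)⁻¹ ≤ 1 := by
  rw [← ENNReal.ofReal_mul (by positivity), ← ENNReal.ofReal_one]
  apply ENNReal.ofReal_le_ofReal
  rw [← div_eq_mul_inv, div_le_one (by positivity), ← Real.rpow_natCast t 2, ← Real.rpow_mul h0.le,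
    ← Real.rpow_natCast t d]
  apply Real.rpow_le_rpow_of_exponent_ge h0 h1.le
  push_cast
  linarith

theorem hp_double (d : ℕ) (γ : ℝ) (hγ : (d : ℝ) / 2 < γ)
    (h : EuclideanSpace ℝ (Fin d) → ℂ) (hh : ContDiff ℝ 1 h) :
    ∫⁻ x, ∫⁻ y, ‖h x - h y‖ₑ ^ 2 * (ENNReal.ofReal ((1 + ‖x‖ ^ 2) ^ (-γ) / (1 + ‖x‖ ^ 2)) *
      ENNReal.ofReal ((1 + ‖y‖ ^ 2) ^ (-γ) / (1 + ‖y‖ ^ 2))) ≤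
    ENNReal.ofReal (4 * 4 ^ γ) *
      ((∫⁻ x : EuclideanSpace ℝ (Fin d), ENNReal.ofReal ((1 + ‖x‖ ^ 2) ^ (-γ))) *
      ∫⁻ x, ‖fderiv ℝ h x‖ₑ ^ 2 * ENNReal.ofReal ((1 + ‖x‖ ^ 2) ^ (-γ))) := by
  have hγ0 : 0 < γ := lt_of_le_of_lt (by positivity) hγ
  have hc : Continuous (fderiv ℝ h) := hh.continuous_fderiv (by norm_num)
  set p : EuclideanSpace ℝ (Fin d) → ENNReal := fun x => ENNReal.ofReal ((1 + ‖x‖ ^ 2) ^ (-γ)) with hp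
  have hpm : Measurable p := by fun_prop
  set F : EuclideanSpace ℝ (Fin d) → ENNReal := fun x => ‖fderiv ℝ h x‖ₑ ^ 2 * p x with hF
  have hFm : Measurable F := (hc.enorm.measurable.pow_const 2).mul hpm
  set a : ℝ → ENNReal := fun t => ENNReal.ofReal ((t ^ 2) ^ γ) with ha
  have ham : Measurable a := by fun_prop
  set K : ENNReal := ENNReal.ofReal (2 * 4 ^ γ) with hK
  set S := ∫⁻ x, p x
  set N := ∫⁻ x, F x
  let G : EuclideanSpace ℝ (Fin d) → EuclideanSpace ℝ (Fin d) → ℝ → ENNReal := fun x y t =>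
    F ((1 - t) • y + t • x) * (a t * p y + a (1 - t) * p x)
  have step1 : ∀ x y, ‖h x - h y‖ₑ ^ 2 *
      (ENNReal.ofReal ((1 + ‖x‖ ^ 2) ^ (-γ) / (1 + ‖x‖ ^ 2)) *
      ENNReal.ofReal ((1 + ‖y‖ ^ 2) ^ (-γ) / (1 + ‖y‖ ^ 2))) ≤
      K * ∫⁻ t in Set.Ioo (0:ℝ) 1, G x y t := by
    intro x y
    set W := ENNReal.ofReal (2 * ((1 + ‖x‖ ^ 2) ^ (-γ) * (1 + ‖y‖ ^ 2) ^ (-γ))) with hW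
    calc _ ≤ (‖x - y‖ₑ ^ 2 * ∫⁻ t in Set.Ioo (0:ℝ) 1, ‖fderiv ℝ h ((1 - t) • y + t • x)‖ₑ ^ 2) *
          (ENNReal.ofReal ((1 + ‖x‖ ^ 2) ^ (-γ) / (1 + ‖x‖ ^ 2)) *
          ENNReal.ofReal ((1 + ‖y‖ ^ 2) ^ (-γ) / (1 + ‖y‖ ^ 2))) := by
            gcongr; exact hp_seg h hh x y
      _ = (‖x - y‖ₑ ^ 2 * (ENNReal.ofReal ((1 + ‖x‖ ^ 2) ^ (-γ) / (1 + ‖x‖ ^ 2)) *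
          ENNReal.ofReal ((1 + ‖y‖ ^ 2) ^ (-γ) / (1 + ‖y‖ ^ 2)))) *
          ∫⁻ t in Set.Ioo (0:ℝ) 1, ‖fderiv ℝ h ((1 - t) • y + t • x)‖ₑ ^ 2 := by ring
      _ ≤ W * ∫⁻ t in Set.Ioo (0:ℝ) 1, ‖fderiv ℝ h ((1 - t) • y + t • x)‖ₑ ^ 2 := by
            gcongr; exact hp_pw γ x y
      _ = ∫⁻ t in Set.Ioo (0:ℝ) 1, W * ‖fderiv ℝ h ((1 - t) • y + t • x)‖ₑ ^ 2 := by
            rw [lintegral_const_mul' _ _ ENNReal.ofReal_ne_top]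
      _ ≤ ∫⁻ t in Set.Ioo (0:ℝ) 1, K * G x y t := by
            refine setLIntegral_mono' measurableSet_Ioo fun t ht => ?_
            have hk : W ≤ K * (p ((1 - t) • y + t • x) * (a t * p y + a (1 - t) * p x)) := by
              simp only [hW, hK, hp, ha]
              rw [← ENNReal.ofReal_mul (by positivity), ← ENNReal.ofReal_mul (by positivity),
                ← ENNReal.ofReal_add (by positivity) (by positivity),
                ← ENNReal.ofReal_mul (by positivity), ← ENNReal.ofReal_mul (by positivity)]
              apply ENNReal.ofReal_le_ofReal
              have := hp_key γ hγ0 x y t ht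
              rw [mul_assoc]
              linarith
            calc _ ≤ _ := mul_le_mul_left hk _
              _ = _ := by simp only [G, hF]; ring
      _ = _ := by rw [lintegral_const_mul' _ _ ENNReal.ofReal_ne_top]
  have hGm : Measurable fun q : (EuclideanSpace ℝ (Fin d) × EuclideanSpace ℝ (Fin d)) × ℝ =>
      G q.1.1 q.1.2 q.2 := by
    simp only [G]; fun_prop
  have step3 : ∀ t ∈ Set.Ioo (0:ℝ) 1, ∫⁻ x, ∫⁻ y, G x y t ≤ 2 * (S * N) := by
    intro t ht
    have hs : ∫⁻ x, ∫⁻ y, G x y t = (∫⁻ x, ∫⁻ y, F ((1 - t) • y + t • x) * (a t * p y)) +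
        ∫⁻ x, ∫⁻ y, F ((1 - t) • y + t • x) * (a (1 - t) * p x) := by
      rw [← lintegral_add_left (Measurable.lintegral_prod_right' (f := fun q : EuclideanSpace ℝ (Fin d) × EuclideanSpace ℝ (Fin d) => F ((1 - t) • q.2 + t • q.1) * (a t * p q.2)) (by fun_prop))]
      refine lintegral_congr fun x => ?_
      rw [← lintegral_add_left (by fun_prop)]
      refine lintegral_congr fun y => ?_
      simp only [G]; ring
    have e1 : ∫⁻ x, ∫⁻ y, F ((1 - t) • y + t • x) * (a t * p y) ≤ S * N := by
      rw [lintegral_lintegral_swap (by simp only [Function.uncurry_def]; fun_prop)]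
      calc _ = ∫⁻ y, (a t * ENNReal.ofReal (t ^ d)⁻¹ * N) * p y := by
            refine lintegral_congr fun y => ?_
            rw [lintegral_mul_const _ (by fun_prop), hp_scale F hFm t ht.1]
            ring
        _ = a t * ENNReal.ofReal (t ^ d)⁻¹ * N * S := lintegral_const_mul _ hpm
        _ ≤ 1 * N * S := by gcongr; exact hp_tpow d γ hγ t ht.1 ht.2
        _ = _ := by ring
    have e2 : ∫⁻ x, ∫⁻ y, F ((1 - t) • y + t • x) * (a (1 - t) * p x) ≤ S * N := by
      calc _ = ∫⁻ x, (a (1 - t) * ENNReal.ofReal ((1 - t) ^ d)⁻¹ * N) * p x := by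
            refine lintegral_congr fun x => ?_
            rw [lintegral_mul_const _ (by fun_prop)]
            simp_rw [add_comm _ (t • x)]
            rw [hp_scale F hFm (1 - t) (by linarith [ht.2])]
            ring
        _ = a (1 - t) * ENNReal.ofReal ((1 - t) ^ d)⁻¹ * N * S := lintegral_const_mul _ hpm
        _ ≤ 1 * N * S := by
            gcongr; exact hp_tpow d γ hγ (1 - t) (by linarith [ht.2]) (by linarith [ht.1])
        _ = _ := by ring
    rw [hs, two_mul]
    exact add_le_add e1 e2
  calc _ ≤ ∫⁻ x, ∫⁻ y, K * ∫⁻ t in Set.Ioo (0:ℝ) 1, G x y t :=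
        lintegral_mono fun x => lintegral_mono fun y => step1 x y
    _ = K * ∫⁻ x, ∫⁻ y, ∫⁻ t in Set.Ioo (0:ℝ) 1, G x y t := by
        simp_rw [lintegral_const_mul' K _ ENNReal.ofReal_ne_top]
    _ = K * ∫⁻ t in Set.Ioo (0:ℝ) 1, ∫⁻ x, ∫⁻ y, G x y t := by
        congr 1
        rw [lintegral_lintegral_swap (μ := volume.restrict (Set.Ioo (0:ℝ) 1))]
        · refine lintegral_congr fun x => ?_
          rw [lintegral_lintegral_swap]
          simp only [Function.uncurry_def]
          exact (hGm.comp (f := fun q : EuclideanSpace ℝ (Fin d) × ℝ => ((x, q.1), q.2)) (by fun_prop)).aemeasurable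
        · simp only [Function.uncurry_def]
          refine Measurable.aemeasurable ?_
          exact Measurable.lintegral_prod_right' (f := fun q : (ℝ × EuclideanSpace ℝ (Fin d)) × EuclideanSpace ℝ (Fin d) => G q.1.2 q.2 q.1.1)
            (hGm.comp (f := fun q : (ℝ × EuclideanSpace ℝ (Fin d)) × EuclideanSpace ℝ (Fin d) => ((q.1.2, q.2), q.1.1)) (by fun_prop))
    _ ≤ K * ∫⁻ t in Set.Ioo (0:ℝ) 1, 2 * (S * N) := by
        exact mul_le_mul' le_rfl (setLIntegral_mono' measurableSet_Ioo step3)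
    _ = _ := by
        rw [setLIntegral_const, hK]
        simp only [Real.volume_Ioo, sub_zero, ENNReal.ofReal_one, mul_one]
        rw [← mul_assoc, mul_comm _ (2 : ENNReal)]
        congr 1
        rw [show (4 : ℝ) * 4 ^ γ = 2 * (2 * 4 ^ γ) by ring, ENNReal.ofReal_mul zero_le_two]
        simp

/-- Jensen for the weighted mean. -/
theorem hp_jensen {α : Type*} [MeasurableSpace α] (μ : Measure α) (h : α → ℂ) (m : α → ℝ)
    (hm : ∀ a, 0 ≤ m a) (hmm : Measurable m) (hhm : Measurable h) (him : Integrable m μ)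
    (hi : Integrable (fun a => h a * (m a : ℂ)) μ) (hZ : 0 < ∫ a, m a ∂μ) (c : ℂ) :
    ENNReal.ofReal (∫ a, m a ∂μ) *
      ‖c - (((∫ a, m a ∂μ)⁻¹ : ℝ) : ℂ) * ∫ a, h a * (m a : ℂ) ∂μ‖ₑ ^ 2 ≤
    ∫⁻ a, ‖c - h a‖ₑ ^ 2 * ENNReal.ofReal (m a) ∂μ := by
  set Z := ∫ a, m a ∂μ with hZd
  set H := ∫ a, h a * (m a : ℂ) ∂μ with hH
  have hmu : ENNReal.ofReal Z = ∫⁻ a, ENNReal.ofReal (m a) ∂μ :=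
    ofReal_integral_eq_lintegral_ofReal him (Filter.Eventually.of_forall hm)
  have e1 : (Z : ℂ) * (c - ((Z⁻¹ : ℝ) : ℂ) * H) = ∫ a, (c - h a) * (m a : ℂ) ∂μ := by
    have him' : Integrable (fun a => (m a : ℂ)) μ := him.ofReal
    simp_rw [sub_mul]
    rw [integral_sub (him'.const_mul c) hi, integral_const_mul, integral_complex_ofReal]
    have : (Z : ℂ) ≠ 0 := by exact_mod_cast hZ.ne'
    push_cast
    field_simp
    rw [← hH]
    ring
  have e2 : ENNReal.ofReal Z * ‖c - ((Z⁻¹ : ℝ) : ℂ) * H‖ₑ ≤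
      ∫⁻ a, ‖c - h a‖ₑ ∂(μ.withDensity fun a => ENNReal.ofReal (m a)) := by
    rw [lintegral_withDensity_eq_lintegral_mul _ (by fun_prop) (by fun_prop)]
    have : ENNReal.ofReal Z = ‖(Z : ℂ)‖ₑ := by
      rw [← ofReal_norm, Complex.norm_real, Real.norm_of_nonneg hZ.le]
    rw [this, ← enorm_mul, e1]
    refine (enorm_integral_le_lintegral_enorm _).trans (lintegral_mono fun a => ?_)
    rw [enorm_mul, ← ofReal_norm (m a : ℂ), Complex.norm_real, Real.norm_of_nonneg (hm a), mul_comm]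
    rfl
  have e3 := (pow_le_pow_left' e2 2).trans (hp_cs _ _ (by fun_prop))
  rw [lintegral_withDensity_eq_lintegral_mul _ (by fun_prop) (by fun_prop),
    withDensity_apply _ MeasurableSet.univ, setLIntegral_univ, ← hmu] at e3
  rw [mul_pow, sq (ENNReal.ofReal Z), mul_assoc] at e3
  have e4 := (ENNReal.mul_le_mul_iff_right (ENNReal.ofReal_pos.2 hZ).ne' ENNReal.ofReal_ne_top).1 e3
  refine e4.trans (le_of_eq (lintegral_congr fun a => ?_))
  simp [mul_comm]

/-- **Hardy–Poincaré inequality in projected form** (inequality (2.10) of the paper). -/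
theorem hardy_poincare_projected (d : ℕ) (hd : 1 ≤ d) (γ C₁ C₂ : ℝ)
    (hγ₁ : (d : ℝ) / 2 < γ) (hγ₂ : γ < ((d : ℝ) + 4) / 2)
    (hC₁ : 0 < C₁) (hC₁₂ : C₁ ≤ C₂) :
    ∃ Λ : ℝ, 0 < Λ ∧
      ∀ M : EuclideanSpace ℝ (Fin d) → ℝ, (∀ v, 0 < M v) → ContDiff ℝ 1 M →
        (∀ v, C₁ * Real.sqrt (1 + ‖v‖ ^ 2) ^ (-γ) ≤ M v ∧
              M v ≤ C₂ * Real.sqrt (1 + ‖v‖ ^ 2) ^ (-γ)) →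
        ∀ g : EuclideanSpace ℝ (Fin d) → ℂ, ContDiff ℝ 1 g →
          Integrable (fun v => ‖fderiv ℝ (fun w => g w / (M w : ℂ)) v‖ ^ 2 * (M v) ^ 2) →
          Integrable (fun v => ‖g v‖ ^ 2 / (1 + ‖v‖ ^ 2)) →
          Λ * ∫ v, ‖g v -
                (((∫ w, (M w) ^ 2 / (1 + ‖w‖ ^ 2) : ℝ)⁻¹ : ℝ) : ℂ) *
                  (∫ w, g w * ((M w : ℂ) / ((1 + ‖w‖ ^ 2 : ℝ) : ℂ))) * (M v : ℂ)‖ ^ 2 /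
              (1 + ‖v‖ ^ 2) ≤
            ∫ v, ‖fderiv ℝ (fun w => g w / (M w : ℂ)) v‖ ^ 2 * (M v) ^ 2 := by
  classical
  have hγ0 : 0 < γ := lt_of_le_of_lt (by positivity) hγ₁
  have hC₂ : 0 < C₂ := hC₁.trans_le hC₁₂
  set pr : EuclideanSpace ℝ (Fin d) → ℝ := fun v => (1 + ‖v‖ ^ 2) ^ (-γ) with hpr
  set r : EuclideanSpace ℝ (Fin d) → ℝ := fun v => (1 + ‖v‖ ^ 2) ^ (-γ) / (1 + ‖v‖ ^ 2) with hr
  have hpos : ∀ v : EuclideanSpace ℝ (Fin d), 0 < 1 + ‖v‖ ^ 2 := fun v => by positivity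
  have hprpos : ∀ v, 0 < pr v := fun v => Real.rpow_pos_of_pos (hpos v) _
  have hrpos : ∀ v, 0 < r v := fun v => div_pos (hprpos v) (hpos v)
  have hprc : Continuous pr := by
    refine Continuous.rpow_const (by fun_prop) fun v => Or.inl (hpos v).ne'
  have hrc : Continuous r := hprc.div (by fun_prop) fun v => (hpos v).ne'
  have hpri : Integrable pr := by
    have := integrable_rpow_neg_one_add_norm_sq (E := EuclideanSpace ℝ (Fin d)) (μ := volume)
      (r := 2 * γ) (by rw [finrank_euclideanSpace_fin]; linarith)
    convert this using 3
    ring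
  have hri : Integrable r := by
    refine hpri.mono' hrc.aestronglyMeasurable (Filter.Eventually.of_forall fun v => ?_)
    rw [Real.norm_of_nonneg (hrpos v).le]
    exact div_le_self (hprpos v).le (by nlinarith [sq_nonneg ‖v‖])
  set S := ∫ v, pr v with hS
  set R := ∫ v, r v with hR
  have hSpos : 0 < S := integral_pos_of_integrable_nonneg_nonzero (x := 0) hprc hpri
    (fun v => (hprpos v).le) (hprpos 0).ne'
  have hRpos : 0 < R := integral_pos_of_integrable_nonneg_nonzero (x := 0) hrc hri
    (fun v => (hrpos v).le) (hrpos 0).ne'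
  have h4 : (0:ℝ) < 4 ^ γ := by positivity
  refine ⟨C₁ ^ 4 * R / (C₂ ^ 4 * (4 * 4 ^ γ) * S), by positivity, ?_⟩
  intro M hM0 hM hMb g hg hgi hg2
  set h : EuclideanSpace ℝ (Fin d) → ℂ := fun w => g w / (M w : ℂ) with hh
  have hMC : ∀ w, (M w : ℂ) ≠ 0 := fun w => by exact_mod_cast (hM0 w).ne'
  have hhc : ContDiff ℝ 1 h := by
    have h1 : ContDiff ℝ 1 fun w => (M w : ℂ) := Complex.ofRealCLM.contDiff.comp hM
    simp only [hh, div_eq_mul_inv]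
    exact hg.mul (h1.inv hMC)
  -- squared bounds
  have hsq : ∀ v : EuclideanSpace ℝ (Fin d), (√(1 + ‖v‖ ^ 2) ^ (-γ)) ^ 2 = pr v := by
    intro v
    rw [← Real.rpow_natCast, ← Real.rpow_mul (Real.sqrt_nonneg _), mul_comm, Real.rpow_mul
      (Real.sqrt_nonneg _), Real.rpow_natCast, Real.sq_sqrt (hpos v).le]
  have hlo : ∀ v, C₁ ^ 2 * pr v ≤ M v ^ 2 := by
    intro v
    rw [← hsq, ← mul_pow]
    exact pow_le_pow_left₀ (by positivity) (hMb v).1 2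
  have hup : ∀ v, M v ^ 2 ≤ C₂ ^ 2 * pr v := by
    intro v
    rw [← hsq, ← mul_pow]
    exact pow_le_pow_left₀ (hM0 v).le (hMb v).2 2
  set m : EuclideanSpace ℝ (Fin d) → ℝ := fun w => M w ^ 2 / (1 + ‖w‖ ^ 2) with hm
  have hmpos : ∀ v, 0 < m v := fun v => div_pos (pow_pos (hM0 v) 2) (hpos v)
  have hMc := hM.continuous
  have hgc := hg.continuous
  have hmc : Continuous m := Continuous.div (by fun_prop) (by fun_prop) fun v => (hpos v).ne'
  have hmlo : ∀ v, C₁ ^ 2 * r v ≤ m v := by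
    intro v
    simp only [hr, hm]
    rw [← mul_div_assoc]
    exact div_le_div_of_nonneg_right (hlo v) (hpos v).le
  have hmup : ∀ v, m v ≤ C₂ ^ 2 * r v := by
    intro v
    simp only [hr, hm]
    rw [← mul_div_assoc]
    exact div_le_div_of_nonneg_right (hup v) (hpos v).le
  have hmi : Integrable m := by
    refine (hri.const_mul (C₂ ^ 2)).mono' hmc.aestronglyMeasurable
      (Filter.Eventually.of_forall fun v => ?_)
    rw [Real.norm_of_nonneg (hmpos v).le]
    exact hmup v
  set Z := ∫ w, m w with hZ
  have hZlo : C₁ ^ 2 * R ≤ Z := by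
    rw [hR, ← integral_const_mul]
    exact integral_mono (hri.const_mul _) hmi hmlo
  have hZpos : 0 < Z := lt_of_lt_of_le (by positivity) hZlo
  have hgm : ∀ w, g w * ((M w : ℂ) / ((1 + ‖w‖ ^ 2 : ℝ) : ℂ)) = h w * (m w : ℂ) := by
    intro w
    have h1 : ((1 + ‖w‖ ^ 2 : ℝ) : ℂ) ≠ 0 := by exact_mod_cast (hpos w).ne'
    have h2 := hMC w
    simp only [hh, hm, Complex.ofReal_div, Complex.ofReal_pow]
    field_simp
  simp_rw [hgm]
  have hhcont := hhc.continuous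
  have hhmi : Integrable fun w => h w * (m w : ℂ) := by
    refine (hg2.add hmi).mono' (by fun_prop) (Filter.Eventually.of_forall fun w => ?_)
    rw [← hgm, norm_mul, norm_div, Complex.norm_real, Complex.norm_real,
      Real.norm_of_nonneg (hM0 w).le, Real.norm_of_nonneg (hpos w).le]
    simp only [Pi.add_apply, hm]
    rw [← mul_div_assoc, ← add_div]
    refine div_le_div_of_nonneg_right ?_ (hpos w).le
    nlinarith [sq_nonneg (‖g w‖ - M w), sq_nonneg (‖g w‖ + M w)]
  set c : ℂ := ((Z⁻¹ : ℝ) : ℂ) * ∫ w, h w * (m w : ℂ) with hcdef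
  have hint : ∀ v, ‖g v - c * (M v : ℂ)‖ ^ 2 / (1 + ‖v‖ ^ 2) = ‖h v - c‖ ^ 2 * m v := by
    intro v
    have : g v - c * (M v : ℂ) = (h v - c) * (M v : ℂ) := by
      simp only [hh]; have := hMC v; field_simp
    rw [this, norm_mul, Complex.norm_real, Real.norm_of_nonneg (hM0 v).le]
    simp only [hm]; ring
  simp_rw [hint]
  set T := ∫ v, ‖fderiv ℝ h v‖ ^ 2 * M v ^ 2 with hT
  have hT0 : 0 ≤ T := integral_nonneg fun v => by positivity
  have hTl : ENNReal.ofReal T = ∫⁻ v, ENNReal.ofReal (‖fderiv ℝ h v‖ ^ 2 * M v ^ 2) :=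
    ofReal_integral_eq_lintegral_ofReal hgi (Filter.Eventually.of_forall fun v => by positivity)
  have hSl : ENNReal.ofReal S = ∫⁻ v, ENNReal.ofReal (pr v) :=
    ofReal_integral_eq_lintegral_ofReal hpri (Filter.Eventually.of_forall fun v => (hprpos v).le)
  set A := ∫⁻ v, ENNReal.ofReal (‖h v - c‖ ^ 2 * m v) with hA
  have hAl : ∫ v, ‖h v - c‖ ^ 2 * m v = A.toReal :=
    integral_eq_lintegral_of_nonneg_ae
      (Filter.Eventually.of_forall fun v => mul_nonneg (by positivity) (hmpos v).le)
      (by fun_prop)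
  have hAe : A = ∫⁻ v, ‖h v - c‖ₑ ^ 2 * ENNReal.ofReal (m v) := by
    refine lintegral_congr fun v => ?_
    rw [ENNReal.ofReal_mul (by positivity), ENNReal.ofReal_pow (norm_nonneg _), ofReal_norm]
  have hZA : ENNReal.ofReal Z * A ≤ ENNReal.ofReal (C₂ ^ 4) *
      ∫⁻ x, ∫⁻ y, ‖h x - h y‖ₑ ^ 2 * (ENNReal.ofReal (r x) * ENNReal.ofReal (r y)) := by
    rw [hAe, ← lintegral_const_mul' _ _ ENNReal.ofReal_ne_top,
      ← lintegral_const_mul' _ _ ENNReal.ofReal_ne_top]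
    refine lintegral_mono fun x => ?_
    have hj := hp_jensen volume h m (fun a => (hmpos a).le) hmc.measurable hhcont.measurable
      hmi hhmi hZpos (h x)
    simp only
    rw [← mul_assoc, ← lintegral_const_mul' _ _ ENNReal.ofReal_ne_top]
    refine (mul_le_mul_left hj _).trans ?_
    rw [← lintegral_mul_const' _ _ ENNReal.ofReal_ne_top]
    refine lintegral_mono fun y => ?_
    have e : ENNReal.ofReal (m y) * ENNReal.ofReal (m x) ≤
        ENNReal.ofReal (C₂ ^ 4) * (ENNReal.ofReal (r x) * ENNReal.ofReal (r y)) := by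
      rw [← ENNReal.ofReal_mul (hmpos y).le, ← ENNReal.ofReal_mul (hrpos x).le,
        ← ENNReal.ofReal_mul (by positivity)]
      apply ENNReal.ofReal_le_ofReal
      calc m y * m x ≤ (C₂ ^ 2 * r y) * (C₂ ^ 2 * r x) :=
            mul_le_mul (hmup y) (hmup x) (hmpos x).le (mul_nonneg (by positivity) (hrpos y).le)
        _ = _ := by ring
    calc _ = ‖h x - h y‖ₑ ^ 2 * (ENNReal.ofReal (m y) * ENNReal.ofReal (m x)) := by ring
      _ ≤ ‖h x - h y‖ₑ ^ 2 *
        (ENNReal.ofReal (C₂ ^ 4) * (ENNReal.ofReal (r x) * ENNReal.ofReal (r y))) := by gcongr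
      _ = _ := by ring
  have hD := hp_double d γ hγ₁ h hhc
  set N := ∫⁻ x, ‖fderiv ℝ h x‖ₑ ^ 2 * ENNReal.ofReal ((1 + ‖x‖ ^ 2) ^ (-γ)) with hN
  have hNT : ENNReal.ofReal (C₁ ^ 2) * N ≤ ENNReal.ofReal T := by
    rw [hTl, hN, ← lintegral_const_mul' _ _ ENNReal.ofReal_ne_top]
    refine lintegral_mono fun v => ?_
    simp only
    rw [← ofReal_norm, ← ENNReal.ofReal_pow (norm_nonneg _), ← ENNReal.ofReal_mul (by positivity),
      ← ENNReal.ofReal_mul (by positivity)]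
    apply ENNReal.ofReal_le_ofReal
    have := mul_le_mul_of_nonneg_left (hlo v) (sq_nonneg ‖fderiv ℝ h v‖)
    simp only [hpr] at this
    linarith
  have hfin : ENNReal.ofReal (C₁ ^ 2) * (ENNReal.ofReal Z * A) ≤
      ENNReal.ofReal (C₂ ^ 4 * (4 * 4 ^ γ) * S * T) := by
    calc _ ≤ ENNReal.ofReal (C₁ ^ 2) * (ENNReal.ofReal (C₂ ^ 4) *
          (ENNReal.ofReal (4 * 4 ^ γ) * (ENNReal.ofReal S * N))) := by
            refine mul_le_mul' le_rfl (hZA.trans (mul_le_mul' le_rfl ?_))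
            rw [hSl]
            exact hD
      _ = ENNReal.ofReal (C₂ ^ 4) * ENNReal.ofReal (4 * 4 ^ γ) * ENNReal.ofReal S *
          (ENNReal.ofReal (C₁ ^ 2) * N) := by ring
      _ ≤ ENNReal.ofReal (C₂ ^ 4) * ENNReal.ofReal (4 * 4 ^ γ) * ENNReal.ofReal S *
          ENNReal.ofReal T := mul_le_mul' le_rfl hNT
      _ = _ := by
          rw [← ENNReal.ofReal_mul (by positivity), ← ENNReal.ofReal_mul (by positivity),
            ← ENNReal.ofReal_mul (by positivity)]
  have hreal := ENNReal.toReal_mono ENNReal.ofReal_ne_top hfin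
  rw [ENNReal.toReal_mul, ENNReal.toReal_mul, ENNReal.toReal_ofReal (by positivity),
    ENNReal.toReal_ofReal hZpos.le, ENNReal.toReal_ofReal (by positivity)] at hreal
  rw [hAl, div_mul_eq_mul_div, div_le_iff₀ (by positivity)]
  have hA0 : 0 ≤ A.toReal := ENNReal.toReal_nonneg
  calc C₁ ^ 4 * R * A.toReal = C₁ ^ 2 * ((C₁ ^ 2 * R) * A.toReal) := by ring
    _ ≤ C₁ ^ 2 * (Z * A.toReal) := by gcongr
    _ ≤ _ := hreal
    _ = _ := by ring
end

section
/- There exist constants c₁, c₂ > 0 (depending only on d, γ, σ, C₁, C₂) such that for every continuously differentiable ψ : ℝ^d → ℂ with ‖ψ‖²_* := ∫_{ℝ^d} |∇(ψ/M)|² M² dv + ∫_{ℝ^d} ⟨v⟩^{−σ} |ψ|² dv < ∞, the quantity ‖ψ‖²_{H₀} := ∫_{ℝ^d} |∇(ψ/M)|² M² dv + ∫_{ℝ^d} |ψ|² ⟨v⟩^{−2} dv is also finite and c₁ ‖ψ‖_{H₀} ≤ ‖ψ‖_* ≤ c₂ ‖ψ‖_{H₀}. -/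
open MeasureTheory Real

/-- Euler's identity in integrated form. -/
lemma euler_integral {d : ℕ} (h : EuclideanSpace ℝ (Fin d) → ℝ) (hh : ContDiff ℝ 1 h)
    (hc : HasCompactSupport h) :
    Integrable (fun v => (d : ℝ) * h v + fderiv ℝ h v v) ∧
      ∫ v, ((d : ℝ) * h v + fderiv ℝ h v v) = 0 := by
  have hcont := hh.continuous
  have hdc : Continuous (fun v => fderiv ℝ h v) := hh.continuous_fderiv (by norm_num)
  have hint : Integrable h := hcont.integrable_of_hasCompactSupport hc
  have key : ∀ i : Fin d,
      Integrable (fun v : EuclideanSpace ℝ (Fin d) =>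
        v i * fderiv ℝ h v (EuclideanSpace.single i 1)) ∧
      ∫ v : EuclideanSpace ℝ (Fin d), v i * fderiv ℝ h v (EuclideanSpace.single i 1) =
        - ∫ v, h v := by
    intro i
    have hdi : ∀ (v : EuclideanSpace ℝ (Fin d)), HasFDerivAt (fun w : EuclideanSpace ℝ (Fin d) => w i)
        (EuclideanSpace.proj i : EuclideanSpace ℝ (Fin d) →L[ℝ] ℝ) v :=
      fun v => (EuclideanSpace.proj i : EuclideanSpace ℝ (Fin d) →L[ℝ] ℝ).hasFDerivAt
    have hci : Continuous (fun w : EuclideanSpace ℝ (Fin d) => w i) := by fun_prop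
    have hI : Integrable (fun v : EuclideanSpace ℝ (Fin d) =>
        v i * fderiv ℝ h v (EuclideanSpace.single i 1)) := by
      apply Continuous.integrable_of_hasCompactSupport
      · exact hci.mul (hdc.clm_apply continuous_const)
      · exact (hc.fderiv_apply ℝ _).mul_left
    refine ⟨hI, ?_⟩
    rw [integral_mul_fderiv_eq_neg_fderiv_mul_of_integrable]
    · congr 1
      refine integral_congr_ae (Filter.Eventually.of_forall fun v => ?_)
      simp [(hdi v).fderiv]
    · refine hint.congr (Filter.Eventually.of_forall fun v => ?_)
      simp [(hdi v).fderiv]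
    · exact hI
    · exact (hci.mul hcont).integrable_of_hasCompactSupport hc.mul_left
    · exact fun x _ => (hdi x).differentiableAt
    · exact fun x _ => hh.differentiable (by norm_num) x
  have hsum : ∀ v : EuclideanSpace ℝ (Fin d),
      fderiv ℝ h v v = ∑ i, v i * fderiv ℝ h v (EuclideanSpace.single i 1) := by
    intro v
    have hv : v = ∑ i, v i • EuclideanSpace.single i (1 : ℝ) := by
      ext j
      simp [Finset.sum_apply, Pi.single_apply]
    have h3 := congrArg (fderiv ℝ h v) hv
    rw [map_sum] at h3
    simpa using h3
  have hI2 : Integrable (fun v => fderiv ℝ h v v) := by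
    simp_rw [hsum]
    exact integrable_finsetSum _ fun i _ => (key i).1
  refine ⟨(hint.const_mul _).add hI2, ?_⟩
  rw [integral_add (hint.const_mul _) hI2, integral_const_mul]
  simp_rw [hsum]
  rw [integral_finsetSum _ fun i _ => (key i).1]
  simp [fun i => (key i).2]

lemma cutoff_ineq {d : ℕ} (γ K : ℝ) (σ : ℝ) (hγ : (d : ℝ) / 2 < γ) 
    (hK : ∀ s : ℝ, 1 ≤ s → (2 * γ + 2) * s ^ (-γ - 2) ≤
      1 / 2 * s ^ (-γ - 1) + K * s ^ (-γ - σ / 2))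
    (φ : EuclideanSpace ℝ (Fin d) → ℂ) (hφ : ContDiff ℝ 1 φ)
    (hK0 : 0 ≤ K)
    (h1 : Integrable fun v => (1 + ‖v‖ ^ 2) ^ (-γ) * ‖fderiv ℝ φ v‖ ^ 2)
    (h2 : Integrable fun v => (1 + ‖v‖ ^ 2) ^ (-γ - σ / 2) * ‖φ v‖ ^ 2)
    (R : ℝ) (hR : 0 < R) :
    1 / 2 * ∫ v in Metric.ball 0 R, (1 + ‖v‖ ^ 2) ^ (-γ - 1) * ‖φ v‖ ^ 2 ≤
      (∫ v, (1 + ‖v‖ ^ 2) ^ (-γ) * ‖fderiv ℝ φ v‖ ^ 2) +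
        K * ∫ v, (1 + ‖v‖ ^ 2) ^ (-γ - σ / 2) * ‖φ v‖ ^ 2 := by
  set T : EuclideanSpace ℝ (Fin d) → ℝ := fun v => smoothTransition (2 - ‖v‖ ^ 2 / R ^ 2) with hT
  set h : EuclideanSpace ℝ (Fin d) → ℝ :=
    fun v => T v * ((1 + ‖v‖ ^ 2) ^ (-γ - 1) * ‖φ v‖ ^ 2) with hh
  have hspos : ∀ v : EuclideanSpace ℝ (Fin d), 0 < 1 + ‖v‖ ^ 2 := fun v => by positivity
  have hTc : HasCompactSupport T := by
    refine HasCompactSupport.of_support_subset_isCompact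
      (isCompact_closedBall (0 : EuclideanSpace ℝ (Fin d)) (2 * R)) ?_
    intro v hv
    by_contra hcon
    apply hv
    apply smoothTransition.zero_of_nonpos
    simp only [Metric.mem_closedBall, dist_zero_right, not_le] at hcon
    have : 2 ≤ ‖v‖ ^ 2 / R ^ 2 := by
      rw [le_div_iff₀ (by positivity)]
      nlinarith
    linarith
  have hsmooth : ContDiff ℝ 1 (fun v : EuclideanSpace ℝ (Fin d) => ‖v‖ ^ 2) :=
    contDiff_norm_sq ℝ
  have hTs : ContDiff ℝ 1 T :=
    (smoothTransition.contDiff (n := 1)).comp (contDiff_const.sub (hsmooth.div_const _))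
  have hw : ContDiff ℝ 1 (fun v : EuclideanSpace ℝ (Fin d) => (1 + ‖v‖ ^ 2) ^ (-γ - 1)) :=
    (contDiff_const.add hsmooth).rpow_const_of_ne fun v => (hspos v).ne'
  have hhs : ContDiff ℝ 1 h := hTs.mul (hw.mul (hφ.norm_sq ℝ))
  have hhc : HasCompactSupport h := hTc.mul_right
  obtain ⟨hE1, hE2⟩ := euler_integral h hhs hhc
  have hder : ∀ v, fderiv ℝ h v v =
      (deriv smoothTransition (2 - ‖v‖ ^ 2 / R ^ 2) * (-(2 * ‖v‖ ^ 2) / R ^ 2)) *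
        ((1 + ‖v‖ ^ 2) ^ (-γ - 1) * ‖φ v‖ ^ 2) +
      T v * (((-γ - 1) * (1 + ‖v‖ ^ 2) ^ (-γ - 2) * (2 * ‖v‖ ^ 2)) * ‖φ v‖ ^ 2 +
        (1 + ‖v‖ ^ 2) ^ (-γ - 1) * (2 * inner ℝ (φ v) (fderiv ℝ φ v v))) := by
    intro v
    have e0 := (HasFDerivAt.norm_sq (hasFDerivAt_id (𝕜 := ℝ) v))
    have e1 : HasFDerivAt (fun w : EuclideanSpace ℝ (Fin d) => 2 - ‖w‖ ^ 2 / R ^ 2) _ v :=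
      (e0.mul_const ((R ^ 2)⁻¹)).const_sub 2
    have e2 := (((smoothTransition.contDiff (n := 1)).differentiable (by norm_num)
      (2 - ‖v‖ ^ 2 / R ^ 2)).hasDerivAt).comp_hasFDerivAt v e1
    have e3 : HasFDerivAt (fun w : EuclideanSpace ℝ (Fin d) => (1 + ‖w‖ ^ 2) ^ (-γ - 1)) _ v :=
      (e0.const_add 1).rpow_const (Or.inl (hspos v).ne')
    have e4 := ((hφ.differentiable (by norm_num) v).hasFDerivAt).norm_sq
    have e5 : HasFDerivAt h _ v := e2.mul (e3.mul e4)
    rw [e5.fderiv]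
    simp [hT, show -γ - 1 - 1 = -γ - 2 by ring]
    ring
  have hpt : ∀ v, 1 / 2 * h v ≤ (1 + ‖v‖ ^ 2) ^ (-γ) * ‖fderiv ℝ φ v‖ ^ 2 +
      K * ((1 + ‖v‖ ^ 2) ^ (-γ - σ / 2) * ‖φ v‖ ^ 2) - ((d : ℝ) * h v + fderiv ℝ h v v) := by
    intro v
    rw [hder v]
    have hd0 : 0 ≤ deriv smoothTransition (2 - ‖v‖ ^ 2 / R ^ 2) :=
      smoothTransition.monotone.deriv_nonneg
    have hT0 : 0 ≤ T v := smoothTransition.nonneg _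
    have hT1 : T v ≤ 1 := smoothTransition.le_one _
    have hs1 : 1 ≤ 1 + ‖v‖ ^ 2 := by nlinarith [sq_nonneg ‖v‖]
    have hKv := hK _ hs1
    have hin : |inner ℝ (φ v) (fderiv ℝ φ v v)| ≤ ‖φ v‖ * (‖fderiv ℝ φ v‖ * ‖v‖) :=
      (abs_real_inner_le_norm _ _).trans
        (mul_le_mul_of_nonneg_left ((fderiv ℝ φ v).le_opNorm v) (norm_nonneg _))
    have r1 : (1 + ‖v‖ ^ 2) ^ (-γ - 1) = (1 + ‖v‖ ^ 2) ^ (-γ - 2) * (1 + ‖v‖ ^ 2) := by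
      rw [← rpow_add_one (hspos v).ne']; congr 1; ring
    have r2 : (1 + ‖v‖ ^ 2) ^ (-γ) = (1 + ‖v‖ ^ 2) ^ (-γ - 1) * (1 + ‖v‖ ^ 2) := by
      rw [← rpow_add_one (hspos v).ne']; congr 1; ring
    have hw2 : 0 < (1 + ‖v‖ ^ 2) ^ (-γ - 2) := rpow_pos_of_pos (hspos v) _
    have hw1 : 0 < (1 + ‖v‖ ^ 2) ^ (-γ - 1) := rpow_pos_of_pos (hspos v) _
    have hws : 0 < (1 + ‖v‖ ^ 2) ^ (-γ - σ / 2) := rpow_pos_of_pos (hspos v) _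
    have hterm : (deriv smoothTransition (2 - ‖v‖ ^ 2 / R ^ 2) * (-(2 * ‖v‖ ^ 2) / R ^ 2)) *
        ((1 + ‖v‖ ^ 2) ^ (-γ - 1) * ‖φ v‖ ^ 2) ≤ 0 := by
      have : 0 ≤ (deriv smoothTransition (2 - ‖v‖ ^ 2 / R ^ 2) * ((2 * ‖v‖ ^ 2) / R ^ 2)) *
        ((1 + ‖v‖ ^ 2) ^ (-γ - 1) * ‖φ v‖ ^ 2) := by positivity
      rw [neg_div, mul_neg, neg_mul]; linarith
    simp only [hh]
    generalize (deriv smoothTransition (2 - ‖v‖ ^ 2 / R ^ 2) * (-(2 * ‖v‖ ^ 2) / R ^ 2)) *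
        ((1 + ‖v‖ ^ 2) ^ (-γ - 1) * ‖φ v‖ ^ 2) = Z at hterm ⊢
    rw [r2]
    generalize inner ℝ (φ v) (fderiv ℝ φ v v) = I at hin ⊢
    generalize (1 + ‖v‖ ^ 2) ^ (-γ - σ / 2) = ws at *
    generalize ‖fderiv ℝ φ v‖ = D at *
    generalize hP : ‖φ v‖ = P at *
    generalize (1 + ‖v‖ ^ 2) ^ (-γ - 1) = w1 at *
    generalize (1 + ‖v‖ ^ 2) ^ (-γ - 2) = w2 at *
    generalize ‖v‖ = r at *
    generalize T v = t at *
    -- uncut inequality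
    have hI : 2 * I ≤ P ^ 2 + D ^ 2 * r ^ 2 := by
      have := le_abs_self I
      nlinarith [sq_nonneg (P - D * r)]
    have hI' : w1 * (2 * I) ≤ w1 * (P ^ 2 + D ^ 2 * (1 + r ^ 2)) :=
      mul_le_mul_of_nonneg_left (by nlinarith [sq_nonneg D]) hw1.le
    have hKP : (2 * γ + 2) * w2 * P ^ 2 ≤ (1 / 2 * w1 + K * ws) * P ^ 2 :=
      mul_le_mul_of_nonneg_right hKv (sq_nonneg P)
    have hr : w2 * r ^ 2 = w1 - w2 := by rw [r1]; ring
    have hA : 0 ≤ (2 * γ - d) * (w1 * P ^ 2) := mul_nonneg (by linarith) (by positivity)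
    have hU : 1 / 2 * (w1 * P ^ 2) + d * (w1 * P ^ 2) + ((-γ - 1) * w2 * (2 * r ^ 2) * P ^ 2 +
        w1 * (2 * I)) + 0 ≤ w1 * (1 + r ^ 2) * D ^ 2 + K * (ws * P ^ 2) := by
      have : (-γ - 1) * w2 * (2 * r ^ 2) * P ^ 2 = (-2 * γ - 2) * (w1 - w2) * P ^ 2 := by
        rw [← hr]; ring
      rw [this]
      nlinarith
    have hRHS : 0 ≤ w1 * (1 + r ^ 2) * D ^ 2 + K * (ws * P ^ 2) := by positivity
    have hB := mul_le_mul_of_nonneg_left hU hT0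
    have hC := mul_le_mul_of_nonneg_right hT1 hRHS
    linarith
  have hhi : Integrable h := hhs.continuous.integrable_of_hasCompactSupport hhc
  have hball : ∫ v in Metric.ball 0 R, (1 + ‖v‖ ^ 2) ^ (-γ - 1) * ‖φ v‖ ^ 2 ≤ ∫ v, h v := by
    have heq : ∫ v in Metric.ball 0 R, (1 + ‖v‖ ^ 2) ^ (-γ - 1) * ‖φ v‖ ^ 2 =
        ∫ v in Metric.ball 0 R, h v := by
      refine setIntegral_congr_fun measurableSet_ball fun v hv => ?_
      have hv' : ‖v‖ < R := by simpa using hv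
      have : T v = 1 := by
        apply smoothTransition.one_of_one_le
        have : ‖v‖ ^ 2 / R ^ 2 ≤ 1 := by
          rw [div_le_one (by positivity)]
          exact pow_le_pow_left₀ (norm_nonneg _) hv'.le 2
        linarith
      simp [hh, this]
    rw [heq]
    refine setIntegral_le_integral hhi (Filter.Eventually.of_forall fun v => ?_)
    exact mul_nonneg (smoothTransition.nonneg _)
      (mul_nonneg (rpow_nonneg (hspos v).le _) (sq_nonneg _))
  have hfin := integral_mono (hhi.const_mul (1 / 2)) ((h1.add (h2.const_mul K)).sub hE1) hpt
  rw [integral_const_mul] at hfin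
  rw [integral_sub' (h1.add (h2.const_mul K)) hE1, hE2,
    integral_add' h1 (h2.const_mul K), integral_const_mul] at hfin
  linarith

lemma hardy {d : ℕ} (γ K : ℝ) (σ : ℝ) (hγ : (d : ℝ) / 2 < γ) 
    (hK : ∀ s : ℝ, 1 ≤ s → (2 * γ + 2) * s ^ (-γ - 2) ≤
      1 / 2 * s ^ (-γ - 1) + K * s ^ (-γ - σ / 2))
    (φ : EuclideanSpace ℝ (Fin d) → ℂ) (hφ : ContDiff ℝ 1 φ)
    (hK0 : 0 ≤ K)
    (h1 : Integrable fun v => (1 + ‖v‖ ^ 2) ^ (-γ) * ‖fderiv ℝ φ v‖ ^ 2)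
    (h2 : Integrable fun v => (1 + ‖v‖ ^ 2) ^ (-γ - σ / 2) * ‖φ v‖ ^ 2) :
    Integrable (fun v => (1 + ‖v‖ ^ 2) ^ (-γ - 1) * ‖φ v‖ ^ 2) ∧
    1 / 2 * ∫ v, (1 + ‖v‖ ^ 2) ^ (-γ - 1) * ‖φ v‖ ^ 2 ≤
      (∫ v, (1 + ‖v‖ ^ 2) ^ (-γ) * ‖fderiv ℝ φ v‖ ^ 2) +
        K * ∫ v, (1 + ‖v‖ ^ 2) ^ (-γ - σ / 2) * ‖φ v‖ ^ 2 := by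
  have hspos : ∀ v : EuclideanSpace ℝ (Fin d), 0 < 1 + ‖v‖ ^ 2 := fun v => by positivity
  have hcov : AECover (volume : Measure (EuclideanSpace ℝ (Fin d))) Filter.atTop
      (fun n : ℕ => Metric.ball 0 ((n : ℝ) + 1)) :=
    aecover_ball (Filter.tendsto_atTop_add_const_right _ _ tendsto_natCast_atTop_atTop)
  have hcut := fun n : ℕ => cutoff_ineq γ K σ hγ hK φ hφ hK0 h1 h2 ((n : ℝ) + 1) (by positivity)
  have hcont : Continuous (fun v => (1 + ‖v‖ ^ 2) ^ (-γ - 1) * ‖φ v‖ ^ 2) := by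
    refine Continuous.mul (Continuous.rpow_const (by fun_prop) fun v => Or.inl (hspos v).ne') ?_
    have := hφ.continuous
    fun_prop
  have hint : Integrable (fun v => (1 + ‖v‖ ^ 2) ^ (-γ - 1) * ‖φ v‖ ^ 2) := by
    refine hcov.integrable_of_integral_bounded_of_nonneg_ae
      (2 * ((∫ v, (1 + ‖v‖ ^ 2) ^ (-γ) * ‖fderiv ℝ φ v‖ ^ 2) +
        K * ∫ v, (1 + ‖v‖ ^ 2) ^ (-γ - σ / 2) * ‖φ v‖ ^ 2)) (fun n => ?_) ?_ ?_
    · exact (hcont.continuousOn.integrableOn_compact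
        (isCompact_closedBall 0 ((n : ℝ) + 1))).mono_set Metric.ball_subset_closedBall
    · exact Filter.Eventually.of_forall fun v =>
        mul_nonneg (rpow_nonneg (hspos v).le _) (sq_nonneg _)
    · exact Filter.Eventually.of_forall fun n => by linarith [hcut n]
  refine ⟨hint, ?_⟩
  exact le_of_tendsto ((hcov.integral_tendsto_of_countably_generated hint).const_mul (1 / 2))
    (Filter.Eventually.of_forall hcut)

lemma exists_K (γ σ : ℝ) (hγ : 0 < γ) (hσ : 2 < σ) : ∃ K : ℝ, 0 ≤ K ∧
    ∀ s : ℝ, 1 ≤ s → (2 * γ + 2) * s ^ (-γ - 2) ≤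
      1 / 2 * s ^ (-γ - 1) + K * s ^ (-γ - σ / 2) := by
  refine ⟨(2 * γ + 2) * (4 * γ + 4) ^ (σ / 2), by positivity, fun s hs => ?_⟩
  have hs0 : 0 < s := by linarith
  have e1 : s ^ (-γ - 1) = s ^ (-γ - 2) * s := by
    rw [← rpow_add_one hs0.ne']; congr 1; ring
  have p2 : 0 < s ^ (-γ - 2) := rpow_pos_of_pos hs0 _
  have ps : 0 < s ^ (-γ - σ / 2) := rpow_pos_of_pos hs0 _
  have pR : 0 < (4 * γ + 4) ^ (σ / 2) := by positivity
  by_cases h : 4 * γ + 4 ≤ s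
  · have : 0 ≤ (2 * γ + 2) * (4 * γ + 4) ^ (σ / 2) * s ^ (-γ - σ / 2) := by positivity
    rw [e1]
    nlinarith
  · push Not at h
    have h1 : s ^ (-γ - 2) ≤ (4 * γ + 4) ^ (σ / 2) * s ^ (-γ - σ / 2) := by
      calc s ^ (-γ - 2) ≤ s ^ (-γ) := rpow_le_rpow_of_exponent_le hs (by linarith)
        _ = s ^ (σ / 2) * s ^ (-γ - σ / 2) := by rw [← rpow_add hs0]; congr 1; ring
        _ ≤ _ := mul_le_mul_of_nonneg_right
          (rpow_le_rpow hs0.le h.le (by linarith)) ps.le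
    have : 0 < s ^ (-γ - 1) := rpow_pos_of_pos hs0 _
    nlinarith



/-- **Equivalence of the norms `‖·‖_{H₀}` and `‖·‖_*`** (Lemma 2.2 of the paper). -/
theorem norm_equivalence (d : ℕ) (hd : 1 ≤ d) (γ C₁ C₂ σ : ℝ)
    (hγ₁ : (d : ℝ) / 2 < γ) (hγ₂ : γ < ((d : ℝ) + 4) / 2)
    (hC₁ : 0 < C₁) (hC₁₂ : C₁ ≤ C₂)
    (hσ₁ : 2 < σ) (hσ₂ : σ < 2 * γ - d + 4) :
    ∃ c₁ c₂ : ℝ, 0 < c₁ ∧ 0 < c₂ ∧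
      ∀ M : EuclideanSpace ℝ (Fin d) → ℝ, (∀ v, 0 < M v) → ContDiff ℝ 1 M →
        (∀ v, C₁ * Real.sqrt (1 + ‖v‖ ^ 2) ^ (-γ) ≤ M v ∧
              M v ≤ C₂ * Real.sqrt (1 + ‖v‖ ^ 2) ^ (-γ)) →
        Integrable (fun v => (M v) ^ 2) →
        ∀ ψ : EuclideanSpace ℝ (Fin d) → ℂ, ContDiff ℝ 1 ψ →
          Integrable (fun v => ‖fderiv ℝ (fun w => ψ w / (M w : ℂ)) v‖ ^ 2 * (M v) ^ 2) →
          Integrable (fun v => Real.sqrt (1 + ‖v‖ ^ 2) ^ (-σ) * ‖ψ v‖ ^ 2) →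
          Integrable (fun v => ‖ψ v‖ ^ 2 / (1 + ‖v‖ ^ 2)) ∧
          c₁ * Real.sqrt ((∫ v, ‖fderiv ℝ (fun w => ψ w / (M w : ℂ)) v‖ ^ 2 * (M v) ^ 2) +
                ∫ v, ‖ψ v‖ ^ 2 / (1 + ‖v‖ ^ 2)) ≤
              Real.sqrt ((∫ v, ‖fderiv ℝ (fun w => ψ w / (M w : ℂ)) v‖ ^ 2 * (M v) ^ 2) +
                ∫ v, Real.sqrt (1 + ‖v‖ ^ 2) ^ (-σ) * ‖ψ v‖ ^ 2) ∧
          Real.sqrt ((∫ v, ‖fderiv ℝ (fun w => ψ w / (M w : ℂ)) v‖ ^ 2 * (M v) ^ 2) +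
                ∫ v, Real.sqrt (1 + ‖v‖ ^ 2) ^ (-σ) * ‖ψ v‖ ^ 2) ≤
              c₂ * Real.sqrt ((∫ v, ‖fderiv ℝ (fun w => ψ w / (M w : ℂ)) v‖ ^ 2 * (M v) ^ 2) +
                ∫ v, ‖ψ v‖ ^ 2 / (1 + ‖v‖ ^ 2)) := by
  have hγ0 : 0 < γ := lt_of_le_of_lt (by positivity) hγ₁
  obtain ⟨K, hK0, hK⟩ := exists_K γ σ hγ0 hσ₁
  have hC₂ : 0 < C₂ := hC₁.trans_le hC₁₂
  set L : ℝ := C₂ ^ 2 * (2 * ((1 + K) / C₁ ^ 2)) with hL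
  have hL0 : 0 ≤ L := by positivity
  refine ⟨1 / √(1 + L), 1, by positivity, one_pos, ?_⟩
  intro M hM hMs hMb _ ψ hψ hD hS
  have hspos : ∀ v : EuclideanSpace ℝ (Fin d), 0 < 1 + ‖v‖ ^ 2 := fun v => by positivity
  have hsq : ∀ (v : EuclideanSpace ℝ (Fin d)) (p : ℝ),
      √(1 + ‖v‖ ^ 2) ^ p = (1 + ‖v‖ ^ 2) ^ (p / 2) := by
    intro v p
    rw [sqrt_eq_rpow, ← rpow_mul (hspos v).le]; congr 1; ring
  have hsq2 : ∀ (v : EuclideanSpace ℝ (Fin d)),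
      (√(1 + ‖v‖ ^ 2) ^ (-γ)) ^ 2 = (1 + ‖v‖ ^ 2) ^ (-γ) := by
    intro v
    rw [hsq, ← rpow_natCast, ← rpow_mul (hspos v).le]; congr 1; push_cast; ring
  have hp : ∀ (v : EuclideanSpace ℝ (Fin d)) (p : ℝ), 0 < (1 + ‖v‖ ^ 2) ^ p :=
    fun v p => rpow_pos_of_pos (hspos v) p
  have hlow : ∀ v, (1 + ‖v‖ ^ 2) ^ (-γ) ≤ M v ^ 2 / C₁ ^ 2 := by
    intro v
    rw [le_div_iff₀ (by positivity), ← hsq2, mul_comm, ← mul_pow]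
    exact pow_le_pow_left₀ (by positivity) (hMb v).1 2
  have hup : ∀ v, M v ^ 2 ≤ C₂ ^ 2 * (1 + ‖v‖ ^ 2) ^ (-γ) := by
    intro v
    rw [← hsq2, ← mul_pow]
    exact pow_le_pow_left₀ (hM v).le (hMb v).2 2
  set φ : EuclideanSpace ℝ (Fin d) → ℂ := fun w => ψ w / (M w : ℂ) with hφd
  have hMne : ∀ v, (M v : ℂ) ≠ 0 := fun v => by exact_mod_cast (hM v).ne'
  have hφ : ContDiff ℝ 1 φ := by
    have : φ = fun w => ψ w * (M w : ℂ)⁻¹ := by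
      funext w; simp only [hφd]; rw [div_eq_mul_inv]
    rw [this]
    exact hψ.mul (ContDiff.inv (Complex.ofRealCLM.contDiff.comp hMs) hMne)
  have hψφ : ∀ v, ‖ψ v‖ ^ 2 = M v ^ 2 * ‖φ v‖ ^ 2 := by
    intro v
    have : ψ v = M v * φ v := by simp only [hφd]; field_simp [hMne v]
    rw [this, norm_mul, mul_pow, Complex.norm_real, norm_eq_abs, sq_abs]
  have cpow : ∀ p : ℝ, Continuous fun v : EuclideanSpace ℝ (Fin d) => (1 + ‖v‖ ^ 2) ^ p :=
    fun p => Continuous.rpow_const (by fun_prop) fun v => Or.inl (hspos v).ne'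
  have cφ := hφ.continuous
  have cψ := hψ.continuous
  have cdφ : Continuous (fun v => fderiv ℝ φ v) := hφ.continuous_fderiv (by norm_num)
  -- pointwise comparisons
  have b1 : ∀ v, (1 + ‖v‖ ^ 2) ^ (-γ) * ‖fderiv ℝ φ v‖ ^ 2 ≤
      1 / C₁ ^ 2 * (‖fderiv ℝ φ v‖ ^ 2 * M v ^ 2) := by
    intro v
    calc _ ≤ M v ^ 2 / C₁ ^ 2 * ‖fderiv ℝ φ v‖ ^ 2 :=
          mul_le_mul_of_nonneg_right (hlow v) (sq_nonneg _)
      _ = _ := by ring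
  have b2 : ∀ v, (1 + ‖v‖ ^ 2) ^ (-γ - σ / 2) * ‖φ v‖ ^ 2 ≤
      1 / C₁ ^ 2 * (√(1 + ‖v‖ ^ 2) ^ (-σ) * ‖ψ v‖ ^ 2) := by
    intro v
    rw [hsq, hψφ, show -γ - σ / 2 = -γ + -σ / 2 by ring, rpow_add (hspos v)]
    calc _ ≤ M v ^ 2 / C₁ ^ 2 * (1 + ‖v‖ ^ 2) ^ (-σ / 2) * ‖φ v‖ ^ 2 :=
          mul_le_mul_of_nonneg_right
            (mul_le_mul_of_nonneg_right (hlow v) (hp v _).le) (sq_nonneg _)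
      _ = _ := by ring
  have b3 : ∀ v, ‖ψ v‖ ^ 2 / (1 + ‖v‖ ^ 2) ≤
      C₂ ^ 2 * ((1 + ‖v‖ ^ 2) ^ (-γ - 1) * ‖φ v‖ ^ 2) := by
    intro v
    rw [hψφ, rpow_sub_one (hspos v).ne', div_le_iff₀ (hspos v)]
    calc _ ≤ C₂ ^ 2 * (1 + ‖v‖ ^ 2) ^ (-γ) * ‖φ v‖ ^ 2 :=
          mul_le_mul_of_nonneg_right (hup v) (sq_nonneg _)
      _ = _ := by have := (hspos v).ne'; field_simp
  have b4 : ∀ v, √(1 + ‖v‖ ^ 2) ^ (-σ) * ‖ψ v‖ ^ 2 ≤ ‖ψ v‖ ^ 2 / (1 + ‖v‖ ^ 2) := by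
    intro v
    rw [hsq, div_eq_inv_mul (‖ψ v‖ ^ 2), ← rpow_neg_one (1 + ‖v‖ ^ 2)]
    refine mul_le_mul_of_nonneg_right ?_ (sq_nonneg ‖ψ v‖)
    exact rpow_le_rpow_of_exponent_le (by nlinarith [sq_nonneg ‖v‖]) (by linarith)
  have h1 : Integrable fun v => (1 + ‖v‖ ^ 2) ^ (-γ) * ‖fderiv ℝ φ v‖ ^ 2 := by
    refine (hD.const_mul (1 / C₁ ^ 2)).mono' ?_ (Filter.Eventually.of_forall fun v => ?_)
    · exact ((cpow _).mul (cdφ.norm.pow 2)).aestronglyMeasurable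
    · rw [norm_of_nonneg (mul_nonneg (hp v _).le (sq_nonneg _))]; exact b1 v
  have h2 : Integrable fun v => (1 + ‖v‖ ^ 2) ^ (-γ - σ / 2) * ‖φ v‖ ^ 2 := by
    refine (hS.const_mul (1 / C₁ ^ 2)).mono' ?_ (Filter.Eventually.of_forall fun v => ?_)
    · exact ((cpow _).mul (cφ.norm.pow 2)).aestronglyMeasurable
    · rw [norm_of_nonneg (mul_nonneg (hp v _).le (sq_nonneg _))]; exact b2 v
  obtain ⟨h3, hH⟩ := hardy γ K σ hγ₁ hK φ hφ hK0 h1 h2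
  have hB : Integrable (fun v => ‖ψ v‖ ^ 2 / (1 + ‖v‖ ^ 2)) := by
    refine (h3.const_mul (C₂ ^ 2)).mono' ?_ (Filter.Eventually.of_forall fun v => ?_)
    · exact (Continuous.div (cψ.norm.pow 2) (by fun_prop)
        fun v => (hspos v).ne').aestronglyMeasurable
    · rw [norm_of_nonneg (div_nonneg (sq_nonneg _) (hspos v).le)]; exact b3 v
  have i1 := integral_mono h1 (hD.const_mul (1 / C₁ ^ 2)) b1
  have i2 := integral_mono h2 (hS.const_mul (1 / C₁ ^ 2)) b2
  have i3 := integral_mono hB (h3.const_mul (C₂ ^ 2)) b3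
  have i4 := integral_mono hS hB b4
  rw [integral_const_mul] at i1 i2 i3
  have hD0 : 0 ≤ ∫ v, ‖fderiv ℝ φ v‖ ^ 2 * M v ^ 2 :=
    integral_nonneg fun v => by positivity
  have hS0 : 0 ≤ ∫ v, √(1 + ‖v‖ ^ 2) ^ (-σ) * ‖ψ v‖ ^ 2 :=
    integral_nonneg fun v => by positivity
  refine ⟨hB, ?_, ?_⟩
  · generalize (∫ v, ‖fderiv ℝ φ v‖ ^ 2 * M v ^ 2) = D at *
    generalize (∫ v, √(1 + ‖v‖ ^ 2) ^ (-σ) * ‖ψ v‖ ^ 2) = S at *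
    generalize (∫ v, ‖ψ v‖ ^ 2 / (1 + ‖v‖ ^ 2)) = B at *
    generalize (∫ v, (1 + ‖v‖ ^ 2) ^ (-γ) * ‖fderiv ℝ φ v‖ ^ 2) = D' at *
    generalize (∫ v, (1 + ‖v‖ ^ 2) ^ (-γ - σ / 2) * ‖φ v‖ ^ 2) = S' at *
    generalize (∫ v, (1 + ‖v‖ ^ 2) ^ (-γ - 1) * ‖φ v‖ ^ 2) = H at *
    have hHb : H ≤ 2 * ((1 + K) / C₁ ^ 2) * (D + S) := by
      have k1 : K * S' ≤ K * (1 / C₁ ^ 2 * S) := mul_le_mul_of_nonneg_left i2 hK0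
      have k2 : 0 ≤ K / C₁ ^ 2 * D := by positivity
      have k3 : 0 ≤ 1 / C₁ ^ 2 * S := by positivity
      have k4 : 2 * ((1 + K) / C₁ ^ 2) * (D + S) = 2 * (1 / C₁ ^ 2 * D) + 2 * (K / C₁ ^ 2 * D) +
        2 * (1 / C₁ ^ 2 * S) + 2 * (K * (1 / C₁ ^ 2 * S)) := by ring
      rw [k4]; linarith
    have hBb : B ≤ L * (D + S) := by
      refine i3.trans ((mul_le_mul_of_nonneg_left hHb (sq_nonneg C₂)).trans_eq ?_)
      rw [hL]; ring
    rw [one_div, inv_mul_le_iff₀ (by positivity), ← sqrt_mul (by positivity)]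
    apply sqrt_le_sqrt
    nlinarith
  · rw [one_mul]
    apply sqrt_le_sqrt
    linarith
end

section
/- There exists a constant C₀ > 0, independent of η, such that for every η > 0 and every smooth compactly supported ψ : ℝ^d → ℂ one has ∫_{ℝ^d} |ψ(v)|² dv ≤ C₀² η^{−2/3} ( ∫_{ℝ^d} |∇(ψ/M)|² M² dv + ∫_{ℝ^d} |ψ|² ⟨v⟩^{−2} dv + η ∫_{ℝ^d} |v₁| |ψ|² dv ). -/
open MeasureTheory Real

/-- Cauchy-Schwarz on an interval. -/
theorem poincare_aux_cs (T : ℝ) (hT : 0 < T) (h : ℝ → ℝ) (hh : Continuous h) :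
    (∫ t in (0 : ℝ)..T, h t) ^ 2 ≤ T * ∫ t in (0 : ℝ)..T, h t ^ 2 := by
  set I := ∫ t in (0 : ℝ)..T, h t with hI
  have h1 : 0 ≤ ∫ t in (0 : ℝ)..T, (h t - I / T) ^ 2 :=
    intervalIntegral.integral_nonneg hT.le (fun t _ => sq_nonneg _)
  have h2 : (∫ t in (0 : ℝ)..T, (h t - I / T) ^ 2)
      = (∫ t in (0 : ℝ)..T, h t ^ 2) - 2 * (I / T) * I + T * (I / T) ^ 2 := by
    have e : ∀ t, (h t - I / T) ^ 2 = h t ^ 2 - 2 * (I / T) * h t + (I / T) ^ 2 := by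
      intro t; ring
    simp_rw [e]
    rw [intervalIntegral.integral_add, intervalIntegral.integral_sub,
      intervalIntegral.integral_const_mul, intervalIntegral.integral_const]
    · simp [hI]
    all_goals exact Continuous.intervalIntegrable (by fun_prop) _ _
  rw [h2] at h1
  have h3 : 0 ≤ T * ((∫ t in (0 : ℝ)..T, h t ^ 2) - 2 * (I / T) * I + T * (I / T) ^ 2) :=
    mul_nonneg hT.le h1
  have h4 : T * ((∫ t in (0 : ℝ)..T, h t ^ 2) - 2 * (I / T) * I + T * (I / T) ^ 2)
      = T * (∫ t in (0 : ℝ)..T, h t ^ 2) - I ^ 2 := by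
    field_simp; ring
  linarith

/-- One-dimensional estimate along a segment. -/
theorem poincare_aux_seg {E : Type*} [NormedAddCommGroup E] [NormedSpace ℝ E]
    (f : E → ℂ) (hf : ContDiff ℝ 1 f) (e : E) (he : ‖e‖ = 1) (T : ℝ) (hT : 0 < T) (v : E) :
    ‖f v‖ ^ 2 ≤ 2 * ‖f (v + T • e)‖ ^ 2
      + 2 * T * ∫ t in (0 : ℝ)..T, ‖fderiv ℝ f (v + t • e)‖ ^ 2 := by
  have hc : Continuous (fderiv ℝ f) := hf.continuous_fderiv (by norm_num)
  have hd : ∀ t : ℝ, HasDerivAt (fun t : ℝ => f (v + t • e)) (fderiv ℝ f (v + t • e) e) t := by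
    intro t
    have h1 : HasFDerivAt f (fderiv ℝ f (v + t • e)) (v + t • e) :=
      (hf.differentiable (by norm_num) _).hasFDerivAt
    have h2 : HasDerivAt (fun t : ℝ => v + t • e) e t := by
      simpa using ((hasDerivAt_id t).smul_const e).const_add v
    exact h1.comp_hasDerivAt t h2
  have hc1 : Continuous (fun t : ℝ => fderiv ℝ f (v + t • e)) := by fun_prop
  have hftc := intervalIntegral.integral_eq_sub_of_hasDerivAt (a := 0) (b := T)
    (fun t _ => hd t) (Continuous.intervalIntegrable (by fun_prop) _ _)
  simp only [zero_smul, add_zero] at hftc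
  have hb : ‖f (v + T • e) - f v‖ ≤ ∫ t in (0 : ℝ)..T, ‖fderiv ℝ f (v + t • e)‖ := by
    rw [← hftc]
    refine (intervalIntegral.norm_integral_le_integral_norm hT.le).trans ?_
    refine intervalIntegral.integral_mono_on hT.le
      (Continuous.intervalIntegrable (by fun_prop) _ _)
      (Continuous.intervalIntegrable (by fun_prop) _ _) (fun t _ => ?_)
    simpa [he] using (fderiv ℝ f (v + t • e)).le_opNorm e
  have hcs := poincare_aux_cs T hT (fun t => ‖fderiv ℝ f (v + t • e)‖) (by fun_prop)
  have h1 : ‖f v‖ ≤ ‖f (v + T • e)‖ + ‖f (v + T • e) - f v‖ := by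
    have := norm_sub_le (f (v + T • e)) (f (v + T • e) - f v)
    simpa using this
  have h0 := norm_nonneg (f v)
  have h00 := norm_nonneg (f (v + T • e) - f v)
  have h2 : ‖f (v + T • e) - f v‖ ^ 2 ≤ (∫ t in (0 : ℝ)..T, ‖fderiv ℝ f (v + t • e)‖) ^ 2 := by
    gcongr
  nlinarith [sq_nonneg (‖f (v + T • e)‖ - ‖f (v + T • e) - f v‖)]

/-- Weights are comparable along the segment. -/
theorem poincare_aux_weight {E : Type*} [NormedAddCommGroup E] [NormedSpace ℝ E]
    (γ C₁ C₂ : ℝ) (hγ : 0 < γ) (hC₁ : 0 < C₁) (hC₁₂ : C₁ ≤ C₂) (M : E → ℝ)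
    (hMpos : ∀ v, 0 < M v)
    (hA1 : ∀ v, C₁ * Real.sqrt (1 + ‖v‖ ^ 2) ^ (-γ) ≤ M v ∧
              M v ≤ C₂ * Real.sqrt (1 + ‖v‖ ^ 2) ^ (-γ))
    (e : E) (he : ‖e‖ = 1) (t : ℝ) (ht : 0 ≤ t) (v : E)
    (htv : t ≤ 2 * Real.sqrt (1 + ‖v‖ ^ 2)) :
    M v ^ 2 ≤ (C₂ / C₁ * 3 ^ γ) ^ 2 * M (v + t • e) ^ 2 := by
  have hC₂ : 0 < C₂ := hC₁.trans_le hC₁₂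
  set a := Real.sqrt (1 + ‖v‖ ^ 2) with ha
  set b := Real.sqrt (1 + ‖v + t • e‖ ^ 2) with hb
  have ha2 : a ^ 2 = 1 + ‖v‖ ^ 2 := Real.sq_sqrt (by positivity)
  have ha0 : 0 < a := Real.sqrt_pos.2 (by positivity)
  have hb0 : 0 < b := Real.sqrt_pos.2 (by positivity)
  have hva : ‖v‖ ≤ a := by
    apply Real.le_sqrt_of_sq_le; linarith
  have hn : ‖v + t • e‖ ≤ ‖v‖ + t := by
    refine (norm_add_le _ _).trans ?_
    rw [norm_smul, he, Real.norm_of_nonneg ht, mul_one]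
  have hba : b ≤ 3 * a := by
    rw [hb, Real.sqrt_le_left (by positivity)]
    have : ‖v + t • e‖ ^ 2 ≤ (‖v‖ + t) ^ 2 := by gcongr
    nlinarith [norm_nonneg v]
  have h1 : (3 * a) ^ (-γ) ≤ b ^ (-γ) :=
    Real.rpow_le_rpow_of_nonpos hb0 hba (by linarith)
  rw [Real.mul_rpow (by norm_num) ha0.le] at h1
  have h3 : (3 : ℝ) ^ γ * 3 ^ (-γ) = 1 := by
    rw [← Real.rpow_add (by norm_num)]; simp
  have h3p : (0 : ℝ) < 3 ^ γ := by positivity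
  have h2 : a ^ (-γ) ≤ 3 ^ γ * b ^ (-γ) := by
    calc a ^ (-γ) = 3 ^ γ * (3 ^ (-γ) * a ^ (-γ)) := by rw [← mul_assoc, h3, one_mul]
      _ ≤ _ := by gcongr
  have h5 : M v ≤ C₂ / C₁ * 3 ^ γ * M (v + t • e) := by
    calc M v ≤ C₂ * a ^ (-γ) := (hA1 v).2
      _ ≤ C₂ * (3 ^ γ * b ^ (-γ)) := by gcongr
      _ = C₂ / C₁ * 3 ^ γ * (C₁ * b ^ (-γ)) := by field_simp
      _ ≤ _ := by gcongr; exact (hA1 _).1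
  rw [← mul_pow]
  have := (hMpos v).le
  gcongr

set_option maxHeartbeats 400000 in
/-- **Poincaré-type inequality at scale `η^{-1/3}`** (Lemma 2.5 of the paper). -/
theorem poincare_eta (d : ℕ) (h0 : 0 < d) (γ C₁ C₂ : ℝ)
    (hγ₁ : (d : ℝ) / 2 < γ) (hγ₂ : γ < ((d : ℝ) + 4) / 2)
    (hC₁ : 0 < C₁) (hC₁₂ : C₁ ≤ C₂)
    (M : EuclideanSpace ℝ (Fin d) → ℝ) (hMpos : ∀ v, 0 < M v) (hM : ContDiff ℝ 1 M)
    (hA1 : ∀ v, C₁ * Real.sqrt (1 + ‖v‖ ^ 2) ^ (-γ) ≤ M v ∧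
              M v ≤ C₂ * Real.sqrt (1 + ‖v‖ ^ 2) ^ (-γ)) :
    ∃ C₀ : ℝ, 0 < C₀ ∧
      ∀ η : ℝ, 0 < η →
        ∀ ψ : EuclideanSpace ℝ (Fin d) → ℂ, ContDiff ℝ (⊤ : ℕ∞) ψ → HasCompactSupport ψ →
          (∫ v, ‖ψ v‖ ^ 2) ≤ C₀ ^ 2 * η ^ (-(2 : ℝ) / 3) *
            ((∫ v, ‖fderiv ℝ (fun w => ψ w / (M w : ℂ)) v‖ ^ 2 * (M v) ^ 2) +
              (∫ v, ‖ψ v‖ ^ 2 / (1 + ‖v‖ ^ 2)) +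
              η * ∫ v, |v (⟨0, h0⟩ : Fin d)| * ‖ψ v‖ ^ 2) := by
  have hγ : 0 < γ := lt_of_le_of_lt (by positivity) hγ₁
  set K : ℝ := (C₂ / C₁ * 3 ^ γ) ^ 2 with hK
  have hK0 : 0 ≤ K := sq_nonneg _
  refine ⟨Real.sqrt (1 + 8 * K), Real.sqrt_pos.2 (by positivity), ?_⟩
  intro η hη ψ hψ hψc
  rw [Real.sq_sqrt (by positivity)]
  set i0 : Fin d := ⟨0, h0⟩
  set e : EuclideanSpace ℝ (Fin d) := EuclideanSpace.single i0 1 with he_def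
  have he : ‖e‖ = 1 := by simp [he_def]
  set s : ℝ := η ^ (-(1 : ℝ) / 3) with hs
  have hs0 : 0 < s := by positivity
  have hs2 : η ^ (-(2 : ℝ) / 3) = s ^ 2 := by
    rw [hs, ← Real.rpow_natCast, ← Real.rpow_mul hη.le]; norm_num
  have hs3 : s ^ 3 * η = 1 := by
    rw [hs, ← Real.rpow_natCast, ← Real.rpow_mul hη.le]
    norm_num [Real.rpow_neg_one]
    exact inv_mul_cancel₀ hη.ne'
  have hsη : s ^ 2 * η = s⁻¹ := by
    field_simp; linarith
  set f : EuclideanSpace ℝ (Fin d) → ℂ := fun w => ψ w / (M w : ℂ) with hf_def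
  have hMC : ContDiff ℝ 1 (fun w => (M w : ℂ)) := Complex.ofRealCLM.contDiff.comp hM
  have hMne : ∀ w, (M w : ℂ) ≠ 0 := fun w => by exact_mod_cast (hMpos w).ne'
  have hψ1 : ContDiff ℝ 1 ψ := hψ.of_le (by exact_mod_cast le_top)
  have hf : ContDiff ℝ 1 f := by
    have : f = fun w => ψ w * (M w : ℂ)⁻¹ := by
      funext w; simp [hf_def, div_eq_mul_inv]
    rw [this]; exact hψ1.mul (hMC.inv hMne)
  have hfc : HasCompactSupport f := by
    have : f = fun w => ψ w * (M w : ℂ)⁻¹ := by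
      funext w; simp [hf_def, div_eq_mul_inv]
    rw [this]; exact hψc.mul_right
  have hdf : Continuous (fderiv ℝ f) := hf.continuous_fderiv (by norm_num)
  have hψcont : Continuous ψ := hψ1.continuous
  have hMcont : Continuous M := hM.continuous
  set G : EuclideanSpace ℝ (Fin d) → ℝ := fun v => ‖fderiv ℝ f v‖ ^ 2 * (M v) ^ 2 with hG
  have hGcont : Continuous G := by fun_prop
  have hG0 : ∀ v, 0 ≤ G v := fun v => by positivity
  have hGi : Integrable G := by
    refine hGcont.integrable_of_hasCompactSupport ?_
    refine (hfc.fderiv (𝕜 := ℝ)).mono ?_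
    intro v hv hv'
    apply hv
    simp [hG, hv']
  set P : EuclideanSpace ℝ (Fin d) → ℝ := fun v => |v i0| * ‖ψ v‖ ^ 2 with hP
  have hP0 : ∀ v, 0 ≤ P v := fun v => by positivity
  have hPi : Integrable P := by
    refine Continuous.integrable_of_hasCompactSupport (by fun_prop) ?_
    refine hψc.mono ?_
    intro v hv hv'
    apply hv
    simp [hP, hv']
  set Q : EuclideanSpace ℝ (Fin d) → ℝ := fun v => ‖ψ v‖ ^ 2 / (1 + ‖v‖ ^ 2) with hQ
  have hQ0 : ∀ v, 0 ≤ Q v := fun v => by positivity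
  have hQi : Integrable Q := by
    refine Continuous.integrable_of_hasCompactSupport ?_ ?_
    · exact Continuous.div (by fun_prop) (by fun_prop) (fun v => by positivity)
    refine hψc.mono ?_
    intro v hv hv'
    apply hv
    simp [hQ, hv']
  have hNi : Integrable (fun v => ‖ψ v‖ ^ 2) := by
    refine Continuous.integrable_of_hasCompactSupport (by fun_prop) ?_
    refine hψc.mono ?_
    intro v hv hv'
    apply hv
    simp [hv']
  -- the averaged term
  have hprod : Integrable (fun p : ℝ × EuclideanSpace ℝ (Fin d) => G (p.2 + p.1 • e))
      ((volume.restrict (Set.Ioc 0 (2 * s))).prod volume) := by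
    rw [integrable_prod_iff]
    · constructor
      · exact Filter.Eventually.of_forall (fun t => hGi.comp_add_right (t • e))
      · have : (fun t : ℝ => ∫ v, ‖G (v + t • e)‖) = fun _ => ∫ v, ‖G v‖ := by
          funext t
          exact integral_add_right_eq_self (fun v => ‖G v‖) (t • e)
        simp only [this]
        exact integrable_const _
    · exact Continuous.aestronglyMeasurable (by fun_prop)
  have hAi : Integrable (fun v => ∫ t in (0 : ℝ)..(2 * s), G (v + t • e)) := by
    have := hprod.integral_prod_right
    simpa only [intervalIntegral.integral_of_le (by positivity : (0 : ℝ) ≤ 2 * s)] using this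
  have hA : (∫ v, ∫ t in (0 : ℝ)..(2 * s), G (v + t • e)) = 2 * s * ∫ v, G v := by
    simp only [intervalIntegral.integral_of_le (by positivity : (0 : ℝ) ≤ 2 * s)]
    rw [← integral_integral_swap (f := fun t v => G (v + t • e)) hprod]
    have : (fun t : ℝ => ∫ v, G (v + t • e)) = fun _ => ∫ v, G v := by
      funext t
      exact integral_add_right_eq_self G (t • e)
    rw [this]
    simp [hs0.le]
  -- pointwise bound
  have hpt : ∀ v, ‖ψ v‖ ^ 2 ≤ s⁻¹ * P v + s ^ 2 * Q v + 2 * K * s⁻¹ * P (v + (2 * s) • e)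
      + 4 * s * K * ∫ t in (0 : ℝ)..(2 * s), G (v + t • e) := by
    intro v
    have hInn : 0 ≤ ∫ t in (0 : ℝ)..(2 * s), G (v + t • e) :=
      intervalIntegral.integral_nonneg (by positivity) (fun t _ => hG0 _)
    have t1 : 0 ≤ s⁻¹ * P v := mul_nonneg (by positivity) (hP0 v)
    have t2 : 0 ≤ s ^ 2 * Q v := mul_nonneg (by positivity) (hQ0 v)
    have t3 : 0 ≤ 2 * K * s⁻¹ * P (v + (2 * s) • e) := mul_nonneg (by positivity) (hP0 _)
    have t4 : 0 ≤ 4 * s * K * ∫ t in (0 : ℝ)..(2 * s), G (v + t • e) :=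
      mul_nonneg (by positivity) hInn
    by_cases c1 : s ≤ |v i0|
    · have : ‖ψ v‖ ^ 2 ≤ s⁻¹ * P v := by
        rw [inv_mul_eq_div, le_div_iff₀ hs0, mul_comm]
        simp only [hP]; gcongr
      linarith
    by_cases c2 : 1 + ‖v‖ ^ 2 ≤ s ^ 2
    · have : ‖ψ v‖ ^ 2 ≤ s ^ 2 * Q v := by
        simp only [hQ]
        rw [← mul_div_assoc, le_div_iff₀ (by positivity), mul_comm]
        gcongr
      linarith
    push Not at c1 c2
    have hsv : s ≤ Real.sqrt (1 + ‖v‖ ^ 2) := Real.le_sqrt_of_sq_le c2.le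
    have hW : ∀ t, 0 ≤ t → t ≤ 2 * s → M v ^ 2 ≤ K * M (v + t • e) ^ 2 := fun t ht hts =>
      poincare_aux_weight γ C₁ C₂ hγ hC₁ hC₁₂ M hMpos hA1 e he t ht v (by linarith)
    have hψf : ∀ w, ‖ψ w‖ ^ 2 = ‖f w‖ ^ 2 * M w ^ 2 := by
      intro w
      simp only [hf_def, norm_div, Complex.norm_real, Real.norm_eq_abs, abs_of_pos (hMpos w)]
      have := (hMpos w).ne'
      field_simp
    have hseg := poincare_aux_seg f hf e he (2 * s) (by positivity) v
    have hI : M v ^ 2 * (∫ t in (0 : ℝ)..(2 * s), ‖fderiv ℝ f (v + t • e)‖ ^ 2)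
        ≤ K * ∫ t in (0 : ℝ)..(2 * s), G (v + t • e) := by
      rw [← intervalIntegral.integral_const_mul, ← intervalIntegral.integral_const_mul]
      refine intervalIntegral.integral_mono_on (by positivity)
        (Continuous.intervalIntegrable (by fun_prop) _ _)
        (Continuous.intervalIntegrable (by fun_prop) _ _) (fun t ht => ?_)
      have := mul_le_mul_of_nonneg_right (hW t ht.1 ht.2)
        (sq_nonneg ‖fderiv ℝ f (v + t • e)‖)
      simp only [hG]
      linarith
    have hE : M v ^ 2 * ‖f (v + (2 * s) • e)‖ ^ 2 ≤ K * (s⁻¹ * P (v + (2 * s) • e)) := by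
      have h1 := mul_le_mul_of_nonneg_right (hW (2 * s) (by positivity) le_rfl)
        (sq_nonneg ‖f (v + (2 * s) • e)‖)
      have h2 : ‖ψ (v + (2 * s) • e)‖ ^ 2 ≤ s⁻¹ * P (v + (2 * s) • e) := by
        rw [inv_mul_eq_div, le_div_iff₀ hs0, mul_comm]
        have hc : s ≤ |(v + (2 * s) • e) i0| := by
          have : (v + (2 * s) • e) i0 = v i0 + 2 * s := by simp [he_def]
          rw [this]
          refine le_trans ?_ (le_abs_self _)
          have := (abs_lt.1 c1).1
          linarith
        simp only [hP]; gcongr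
      have h3 := mul_le_mul_of_nonneg_left h2 hK0
      rw [hψf] at h3
      linarith
    have hfin := mul_le_mul_of_nonneg_left hseg (sq_nonneg (M v))
    have hI' := mul_le_mul_of_nonneg_left hI (by positivity : 0 ≤ 4 * s)
    rw [hψf v]
    linarith
  have hmono := integral_mono hNi (((hPi.const_mul s⁻¹).add (hQi.const_mul (s ^ 2))).add
    ((hPi.comp_add_right ((2 * s) • e)).const_mul (2 * K * s⁻¹)) |>.add
    (hAi.const_mul (4 * s * K))) hpt
  have hsum : (∫ v, ((((fun v => s⁻¹ * P v) + fun v => s ^ 2 * Q v) +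
      fun v => 2 * K * s⁻¹ * P (v + (2 * s) • e)) +
      fun v => 4 * s * K * ∫ t in (0 : ℝ)..(2 * s), G (v + t • e)) v)
      = s⁻¹ * (∫ v, P v) + s ^ 2 * (∫ v, Q v) + 2 * K * s⁻¹ * (∫ v, P v)
        + 4 * s * K * (2 * s * ∫ v, G v) := by
    rw [integral_add' (((hPi.const_mul s⁻¹).add (hQi.const_mul (s ^ 2))).add
      ((hPi.comp_add_right ((2 * s) • e)).const_mul (2 * K * s⁻¹)))
      (hAi.const_mul (4 * s * K)),
      integral_add' ((hPi.const_mul s⁻¹).add (hQi.const_mul (s ^ 2)))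
      ((hPi.comp_add_right ((2 * s) • e)).const_mul (2 * K * s⁻¹)),
      integral_add' (hPi.const_mul s⁻¹) (hQi.const_mul (s ^ 2)),
      integral_const_mul, integral_const_mul, integral_const_mul, integral_const_mul, hA,
      integral_add_right_eq_self P ((2 * s) • e)]
  have hmain := hmono.trans_eq hsum
  have iP : 0 ≤ ∫ v, P v := integral_nonneg hP0
  have iQ : 0 ≤ ∫ v, Q v := integral_nonneg hQ0
  have iG : 0 ≤ ∫ v, G v := integral_nonneg hG0
  rw [hs2]
  have hexp : (1 + 8 * K) * s ^ 2 * ((∫ v, G v) + (∫ v, Q v) + η * ∫ v, P v)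
      = (1 + 8 * K) * s ^ 2 * (∫ v, G v) + (1 + 8 * K) * s ^ 2 * (∫ v, Q v)
        + (1 + 8 * K) * s⁻¹ * ∫ v, P v := by
    rw [← hsη]; ring
  rw [hexp]
  have p1 : 0 ≤ s ^ 2 * ∫ v, G v := mul_nonneg (sq_nonneg s) iG
  have p2 : 0 ≤ K * (s ^ 2 * ∫ v, Q v) := mul_nonneg hK0 (mul_nonneg (sq_nonneg s) iQ)
  have p3 : 0 ≤ K * (s⁻¹ * ∫ v, P v) := mul_nonneg hK0 (mul_nonneg (inv_nonneg.2 hs0.le) iP)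
  linarith
end

section
/- There exists a constant C > 0, independent of η, such that for every η > 0 and every smooth compactly supported ψ : ℝ^d → ℂ, writing C_η := {v ∈ ℝ^d : |v₁| ≤ η^{−1/3} ≤ |v'|} and A_η^c := {v ∈ ℝ^d : |v₁| ≥ η^{−1/3}}, one has ∫_{C_η} |ψ(v)|² dv ≤ C η^{−2/3} ( ∫_{ℝ^d} |∇(ψ/M)|² M² dv + η ∫_{A_η^c} |v₁| |ψ(v)|² dv ). -/
open MeasureTheory Real

lemma aux_cs (T : ℝ) (hT : 0 < T) (g : ℝ → ℝ) (hg : Continuous g) :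
    (∫ t in (0:ℝ)..T, g t) ^ 2 ≤ T * ∫ t in (0:ℝ)..T, g t ^ 2 := by
  set I := ∫ t in (0:ℝ)..T, g t with hI
  have h0 : 0 ≤ ∫ t in (0:ℝ)..T, (g t - I / T) ^ 2 :=
    intervalIntegral.integral_nonneg hT.le (fun t _ => sq_nonneg _)
  have h1 : ∫ t in (0:ℝ)..T, (g t - I / T) ^ 2
      = (∫ t in (0:ℝ)..T, g t ^ 2) - 2 * (I / T) * I + (I / T) ^ 2 * T := by
    have : ∀ t, (g t - I / T) ^ 2 = (g t ^ 2 - 2 * (I / T) * g t) + (I / T) ^ 2 := by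
      intro t; ring
    simp_rw [this]
    rw [intervalIntegral.integral_add, intervalIntegral.integral_sub,
      intervalIntegral.integral_const_mul, intervalIntegral.integral_const]
    · simp [← hI]; ring
    all_goals apply Continuous.intervalIntegrable; fun_prop
  rw [h1] at h0
  have h2 : (∫ t in (0:ℝ)..T, g t ^ 2) - 2 * (I / T) * I + (I / T) ^ 2 * T
      = (∫ t in (0:ℝ)..T, g t ^ 2) - I ^ 2 / T := by field_simp; ring
  rw [h2, sub_nonneg, div_le_iff₀ hT] at h0
  linarith

lemma aux_pt {E : Type*} [NormedAddCommGroup E] [NormedSpace ℝ E] (e : E) (he : ‖e‖ = 1)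
    (T : ℝ) (hT : 0 < T) (f : E → ℂ) (hf : ContDiff ℝ 1 f) (v : E) :
    ‖f v‖ ^ 2 ≤ 2 * ‖f (v + T • e)‖ ^ 2
      + 2 * T * ∫ t in (0:ℝ)..T, ‖fderiv ℝ f (v + t • e)‖ ^ 2 := by
  have hc : Continuous (fderiv ℝ f) := hf.continuous_fderiv (by norm_num)
  have hd : ∀ t : ℝ, HasDerivAt (fun t : ℝ => f (v + t • e)) (fderiv ℝ f (v + t • e) e) t := by
    intro t
    have h1 : HasDerivAt (fun t : ℝ => v + t • e) e t := by
      simpa using ((hasDerivAt_id t).smul_const e).const_add v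
    exact ((hf.differentiable (by norm_num)) (v + t • e)).hasFDerivAt.comp_hasDerivAt t h1
  have hftc := intervalIntegral.integral_eq_sub_of_hasDerivAt (a := 0) (b := T)
    (fun t _ => hd t) (Continuous.intervalIntegrable (by fun_prop) _ _)
  simp only [zero_smul, add_zero] at hftc
  have hn : ‖f (v + T • e) - f v‖ ≤ ∫ t in (0:ℝ)..T, ‖fderiv ℝ f (v + t • e)‖ := by
    rw [← hftc]
    refine (intervalIntegral.norm_integral_le_integral_norm hT.le).trans ?_
    apply intervalIntegral.integral_mono_on hT.le
    · apply Continuous.intervalIntegrable; fun_prop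
    · apply Continuous.intervalIntegrable; fun_prop
    · intro t _
      simpa [he] using (fderiv ℝ f (v + t • e)).le_opNorm e
  have hcs := aux_cs T hT (fun t => ‖fderiv ℝ f (v + t • e)‖) (by fun_prop)
  have htri : ‖f v‖ ≤ ‖f (v + T • e)‖ + ‖f (v + T • e) - f v‖ := by
    have := norm_sub_le (f (v + T • e)) (f (v + T • e) - f v)
    simpa using this
  have hsq : ‖f (v + T • e) - f v‖ ^ 2 ≤ (∫ t in (0:ℝ)..T, ‖fderiv ℝ f (v + t • e)‖) ^ 2 :=
    pow_le_pow_left₀ (norm_nonneg _) hn 2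
  have : ‖f v‖ ^ 2 ≤ (‖f (v + T • e)‖ + ‖f (v + T • e) - f v‖) ^ 2 :=
    pow_le_pow_left₀ (norm_nonneg _) htri 2
  nlinarith [sq_nonneg (‖f (v + T • e)‖ - ‖f (v + T • e) - f v‖)]

lemma aux_fub {E : Type*} [NormedAddCommGroup E] [NormedSpace ℝ E] [FiniteDimensional ℝ E]
    [MeasurableSpace E] [BorelSpace E] (μ : Measure E) [μ.IsAddHaarMeasure]
    (e : E) (T : ℝ) (hT : 0 < T) (G : E → ℝ)
    (hG : Continuous G) (hGi : Integrable G μ) :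
    Integrable (fun v => ∫ t in (0:ℝ)..T, G (v + t • e)) μ ∧
      ∫ v, (∫ t in (0:ℝ)..T, G (v + t • e)) ∂μ = T * ∫ v, G v ∂μ := by
  have hE : ProperSpace E := FiniteDimensional.proper_real E
  simp_rw [intervalIntegral.integral_of_le hT.le]
  have hint : Integrable (Function.uncurry fun (v : E) (t : ℝ) => G (v + t • e))
      (μ.prod (volume.restrict (Set.Ioc 0 T))) := by
    rw [integrable_prod_iff']
    · constructor
      · exact Filter.Eventually.of_forall fun t => hGi.comp_add_right (t • e)
      · simp only [Function.uncurry]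
        have : ∀ t : ℝ, ∫ v, ‖G (v + t • e)‖ ∂μ = ∫ v, ‖G v‖ ∂μ := fun t =>
          integral_add_right_eq_self (fun v => ‖G v‖) (t • e)
        simp_rw [this]
        exact integrable_const _
    · apply Continuous.aestronglyMeasurable
      simp only [Function.uncurry_def]
      fun_prop
  refine ⟨hint.integral_prod_left, ?_⟩
  rw [integral_integral_swap hint]
  have : ∀ t : ℝ, ∫ v, G (v + t • e) ∂μ = ∫ v, G v ∂μ := fun t =>
    integral_add_right_eq_self G (t • e)
  simp_rw [this]
  simp [hT.le]

lemma aux_M {E : Type*} [NormedAddCommGroup E] [NormedSpace ℝ E] (γ C₁ C₂ : ℝ) (hγ : 0 < γ)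
    (hC₁ : 0 < C₁) (hC₁₂ : C₁ ≤ C₂) (M : E → ℝ) 
    (hA1 : ∀ v, C₁ * Real.sqrt (1 + ‖v‖ ^ 2) ^ (-γ) ≤ M v ∧
              M v ≤ C₂ * Real.sqrt (1 + ‖v‖ ^ 2) ^ (-γ)) (v w : E) (h : ‖w‖ ≤ 3 * ‖v‖) :
    M v ≤ (C₂ / C₁ * 4 ^ γ) * M w := by
  have h1 : Real.sqrt (1 + ‖w‖ ^ 2) ≤ 4 * Real.sqrt (1 + ‖v‖ ^ 2) := by
    rw [show (4:ℝ) = Real.sqrt (4 ^ 2) by rw [Real.sqrt_sq]; norm_num,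
      ← Real.sqrt_mul (by norm_num)]
    apply Real.sqrt_le_sqrt
    nlinarith [norm_nonneg v, norm_nonneg w]
  have hw : 0 < Real.sqrt (1 + ‖w‖ ^ 2) := by positivity
  have hv : 0 < Real.sqrt (1 + ‖v‖ ^ 2) := by positivity
  have h2 : (4 * Real.sqrt (1 + ‖v‖ ^ 2)) ^ (-γ) ≤ Real.sqrt (1 + ‖w‖ ^ 2) ^ (-γ) :=
    Real.rpow_le_rpow_of_nonpos hw h1 (by linarith)
  rw [Real.mul_rpow (by norm_num) hv.le, Real.rpow_neg (by norm_num)] at h2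
  have h4 : (0:ℝ) < 4 ^ γ := by positivity
  have hC2 : 0 < C₂ := by linarith
  calc M v ≤ C₂ * Real.sqrt (1 + ‖v‖ ^ 2) ^ (-γ) := (hA1 v).2
    _ = (C₂ / C₁ * 4 ^ γ) * (C₁ * ((4 ^ γ)⁻¹ * Real.sqrt (1 + ‖v‖ ^ 2) ^ (-γ))) := by
        field_simp
    _ ≤ (C₂ / C₁ * 4 ^ γ) * (C₁ * Real.sqrt (1 + ‖w‖ ^ 2) ^ (-γ)) := by gcongr
    _ ≤ _ := by gcongr; exact (hA1 w).1


/-- **Poincaré-type inequality on the region of small `v₁` and large `v'`**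
(Lemma 2.6 of the paper). -/
theorem poincare_small_v1_large_v' (d : ℕ) (hd : 2 ≤ d) (γ C₁ C₂ : ℝ)
    (hγ₁ : (d : ℝ) / 2 < γ) (hγ₂ : γ < ((d : ℝ) + 4) / 2)
    (hC₁ : 0 < C₁) (hC₁₂ : C₁ ≤ C₂)
    (M : EuclideanSpace ℝ (Fin d) → ℝ) (hMpos : ∀ v, 0 < M v) (hM : ContDiff ℝ 1 M)
    (hA1 : ∀ v, C₁ * Real.sqrt (1 + ‖v‖ ^ 2) ^ (-γ) ≤ M v ∧
              M v ≤ C₂ * Real.sqrt (1 + ‖v‖ ^ 2) ^ (-γ)) :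
    ∃ C : ℝ, 0 < C ∧
      ∀ η : ℝ, 0 < η →
        ∀ ψ : EuclideanSpace ℝ (Fin d) → ℂ, ContDiff ℝ (⊤ : ℕ∞) ψ → HasCompactSupport ψ →
          (∫ v in {v : EuclideanSpace ℝ (Fin d) |
              |v (⟨0, by omega⟩ : Fin d)| ≤ η ^ (-(1 : ℝ) / 3) ∧
              η ^ (-(1 : ℝ) / 3) ≤ Real.sqrt (‖v‖ ^ 2 - (v (⟨0, by omega⟩ : Fin d)) ^ 2)},
              ‖ψ v‖ ^ 2) ≤
            C * η ^ (-(2 : ℝ) / 3) *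
              ((∫ v, ‖fderiv ℝ (fun w => ψ w / (M w : ℂ)) v‖ ^ 2 * (M v) ^ 2) +
                η * ∫ v in {v : EuclideanSpace ℝ (Fin d) |
                    η ^ (-(1 : ℝ) / 3) ≤ |v (⟨0, by omega⟩ : Fin d)|},
                    |v (⟨0, by omega⟩ : Fin d)| * ‖ψ v‖ ^ 2) := by
  have hγ : 0 < γ := lt_of_le_of_lt (by positivity) hγ₁
  have hC₂ : 0 < C₂ := by linarith
  set K : ℝ := C₂ / C₁ * 4 ^ γ with hK
  have hKpos : 0 < K := by positivity
  refine ⟨8 * K ^ 2, by positivity, ?_⟩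
  intro η hη ψ hψ hψc
  set i : Fin d := ⟨0, by omega⟩ with hi
  set L : ℝ := η ^ (-(1 : ℝ) / 3) with hL
  have hLpos : 0 < L := by positivity
  have hL2 : η ^ (-(2 : ℝ) / 3) = L ^ 2 := by
    rw [hL, ← Real.rpow_natCast, ← Real.rpow_mul hη.le]; norm_num
  have hL3 : L ^ 3 * η = 1 := by
    rw [hL, ← Real.rpow_natCast, ← Real.rpow_mul hη.le]
    norm_num
    rw [Real.rpow_neg_one]; field_simp
  rw [hL2]
  set e : EuclideanSpace ℝ (Fin d) := EuclideanSpace.single i (1:ℝ) with he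
  have hen : ‖e‖ = 1 := by simp [he]
  have hT : 0 < 2 * L := by positivity
  set f : EuclideanSpace ℝ (Fin d) → ℂ := fun w => ψ w / (M w : ℂ) with hf
  have hMC : ContDiff ℝ 1 (fun w => (M w : ℂ)) := Complex.ofRealCLM.contDiff.comp hM
  have hfC : ContDiff ℝ 1 f := by
    have h1 : ContDiff ℝ 1 ψ := hψ.of_le (by exact_mod_cast le_top)
    have h2 : ContDiff ℝ 1 (fun w => (M w : ℂ)⁻¹) := by
      refine hMC.inv ?_
      intro w; exact_mod_cast (hMpos w).ne'
    have : f = fun w => ψ w * (M w : ℂ)⁻¹ := by ext w; simp [hf, div_eq_mul_inv]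
    rw [this]; exact h1.mul h2
  have hfcs : HasCompactSupport f := by
    have : f = fun w => ψ w * (M w : ℂ)⁻¹ := by ext w; simp [hf, div_eq_mul_inv]
    rw [this]; exact hψc.mul_right
  have hfd : Continuous (fderiv ℝ f) := hfC.continuous_fderiv (by norm_num)
  have hMc : Continuous M := hM.continuous
  have hψcont : Continuous ψ := hψ.continuous
  set G : EuclideanSpace ℝ (Fin d) → ℝ := fun v => ‖fderiv ℝ f v‖ ^ 2 * (M v) ^ 2 with hG
  have hGc : Continuous G := by fun_prop
  have hGcs : HasCompactSupport G := by
    refine (hfcs.fderiv ℝ).mono ?_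
    intro x hx hx'
    exact hx (by simp [hG, hx'])
  have hGi : Integrable G := hGc.integrable_of_hasCompactSupport hGcs
  have hG0 : ∀ v, 0 ≤ G v := fun v => by positivity
  obtain ⟨hFi, hFe⟩ := aux_fub volume e (2 * L) hT G hGc hGi
  set S : Set (EuclideanSpace ℝ (Fin d)) :=
    {v | |v i| ≤ L ∧ L ≤ Real.sqrt (‖v‖ ^ 2 - (v i) ^ 2)} with hS
  set A : Set (EuclideanSpace ℝ (Fin d)) := {v | L ≤ |v i|} with hA
  have hci : Continuous fun v : EuclideanSpace ℝ (Fin d) => v i := by fun_prop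
  have hSm : MeasurableSet S := by
    apply IsClosed.measurableSet
    have h1 : IsClosed {v : EuclideanSpace ℝ (Fin d) | |v i| ≤ L} :=
      isClosed_le (by fun_prop) (by fun_prop)
    have h2 : IsClosed {v : EuclideanSpace ℝ (Fin d) | L ≤ Real.sqrt (‖v‖ ^ 2 - (v i) ^ 2)} :=
      isClosed_le (by fun_prop) (by fun_prop)
    exact h1.inter h2
  have hAm : MeasurableSet A :=
    (isClosed_le (by fun_prop) (by fun_prop)).measurableSet
  set N : EuclideanSpace ℝ (Fin d) → ℝ := A.indicator fun v => |v i| * ‖ψ v‖ ^ 2 with hN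
  have hNi : Integrable N := by
    refine Integrable.indicator ?_ hAm
    refine Continuous.integrable_of_hasCompactSupport (by fun_prop) (hψc.mono ?_)
    intro x hx hx'
    exact hx (by simp [hx'])
  have hN0 : ∀ v, 0 ≤ N v := fun v => Set.indicator_nonneg (fun v _ => by positivity) v
  have hψi : Integrable (fun v => ‖ψ v‖ ^ 2) := by
    refine Continuous.integrable_of_hasCompactSupport (by fun_prop) (hψc.mono ?_)
    intro x hx hx'
    exact hx (by simp [hx'])
  have hNs : Integrable fun v => N (v + (2 * L) • e) := hNi.comp_add_right _
  have key : ∀ v ∈ S, ‖ψ v‖ ^ 2 ≤ 2 * K ^ 2 / L * N (v + (2 * L) • e)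
      + 2 * (2 * L) * K ^ 2 * ∫ t in (0:ℝ)..(2 * L), G (v + t • e) := by
    intro v hv
    obtain ⟨hv1, hv2⟩ := hv
    have hLv : L ≤ ‖v‖ := by
      have : Real.sqrt (‖v‖ ^ 2 - (v i) ^ 2) ≤ Real.sqrt (‖v‖ ^ 2) :=
        Real.sqrt_le_sqrt (by nlinarith [sq_nonneg (v i)])
      rw [Real.sqrt_sq (norm_nonneg v)] at this
      linarith
    have hcmp : ∀ t : ℝ, 0 ≤ t → t ≤ 2 * L → M v ^ 2 ≤ K ^ 2 * M (v + t • e) ^ 2 := by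
      intro t ht0 ht
      have h1 : ‖v + t • e‖ ≤ 3 * ‖v‖ := by
        have := norm_add_le v (t • e)
        rw [norm_smul, hen, Real.norm_of_nonneg ht0] at this
        linarith
      have h2 := aux_M γ C₁ C₂ hγ hC₁ hC₁₂ M hA1 v (v + t • e) h1
      rw [← mul_pow]
      exact pow_le_pow_left₀ (hMpos v).le h2 2
    have hfψ : ∀ w, ‖ψ w‖ ^ 2 = ‖f w‖ ^ 2 * M w ^ 2 := by
      intro w
      have := (hMpos w).ne'
      simp only [hf, norm_div, Complex.norm_real, Real.norm_of_nonneg (hMpos w).le]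
      field_simp
    have hpt := aux_pt e hen (2 * L) hT f hfC v
    have hA' : v + (2 * L) • e ∈ A := by
      have := abs_le.1 hv1
      simp only [hA, Set.mem_setOf_eq]
      refine le_trans ?_ (le_abs_self _)
      simp [he]; linarith
    have hA2 : ‖ψ (v + (2 * L) • e)‖ ^ 2 ≤ N (v + (2 * L) • e) / L := by
      rw [hN, Set.indicator_of_mem hA', le_div_iff₀ hLpos, mul_comm]
      exact mul_le_mul_of_nonneg_right hA' (by positivity)
    have hB : M v ^ 2 * ∫ t in (0:ℝ)..(2 * L), ‖fderiv ℝ f (v + t • e)‖ ^ 2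
        ≤ K ^ 2 * ∫ t in (0:ℝ)..(2 * L), G (v + t • e) := by
      rw [← intervalIntegral.integral_const_mul, ← intervalIntegral.integral_const_mul]
      apply intervalIntegral.integral_mono_on hT.le
      · apply Continuous.intervalIntegrable; fun_prop
      · apply Continuous.intervalIntegrable; fun_prop
      · intro t ht
        have := mul_le_mul_of_nonneg_right (hcmp t ht.1 ht.2)
          (sq_nonneg ‖fderiv ℝ f (v + t • e)‖)
        simp only [hG]; linarith
    have hD : M v ^ 2 * ‖f (v + (2 * L) • e)‖ ^ 2 ≤ K ^ 2 * (N (v + (2 * L) • e) / L) := by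
      have h1 := mul_le_mul_of_nonneg_right (hcmp (2 * L) hT.le le_rfl)
          (sq_nonneg ‖f (v + (2 * L) • e)‖)
      have h2 := mul_le_mul_of_nonneg_left hA2 (sq_nonneg K)
      rw [hfψ (v + (2 * L) • e)] at h2
      linarith
    have h3 := mul_le_mul_of_nonneg_left hpt (sq_nonneg (M v))
    have h4 := mul_le_mul_of_nonneg_left hB hT.le
    have h5 : 2 * K ^ 2 / L * N (v + (2 * L) • e) = 2 * (K ^ 2 * (N (v + (2 * L) • e) / L)) := by
      ring
    rw [hfψ v, h5]
    linarith
  have hR : Integrable fun v => 2 * K ^ 2 / L * N (v + (2 * L) • e)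
      + 2 * (2 * L) * K ^ 2 * ∫ t in (0:ℝ)..(2 * L), G (v + t • e) :=
    (hNs.const_mul _).add (hFi.const_mul _)
  have hR0 : ∀ v, 0 ≤ 2 * K ^ 2 / L * N (v + (2 * L) • e)
      + 2 * (2 * L) * K ^ 2 * ∫ t in (0:ℝ)..(2 * L), G (v + t • e) := by
    intro v
    have h1 := hN0 (v + (2 * L) • e)
    have h2 : 0 ≤ ∫ t in (0:ℝ)..(2 * L), G (v + t • e) :=
      intervalIntegral.integral_nonneg hT.le (fun t _ => hG0 _)
    positivity
  have step1 : ∫ v in S, ‖ψ v‖ ^ 2 ≤ ∫ v, (2 * K ^ 2 / L * N (v + (2 * L) • e)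
      + 2 * (2 * L) * K ^ 2 * ∫ t in (0:ℝ)..(2 * L), G (v + t • e)) :=
    (setIntegral_mono_on hψi.integrableOn hR.integrableOn hSm key).trans
      (setIntegral_le_integral hR (Filter.Eventually.of_forall hR0))
  rw [integral_add (hNs.const_mul _) (hFi.const_mul _), integral_const_mul, integral_const_mul,
    hFe, integral_add_right_eq_self N ((2 * L) • e)] at step1
  have hNe : ∫ v, N v = ∫ v in A, |v i| * ‖ψ v‖ ^ 2 := integral_indicator hAm
  rw [← hNe]
  have hNI : 0 ≤ ∫ v, N v := integral_nonneg hN0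
  refine step1.trans ?_
  have h1L : 2 * K ^ 2 / L = 2 * K ^ 2 * (L ^ 2 * η) := by
    rw [div_eq_iff hLpos.ne']; linear_combination (-2 * K ^ 2) * hL3
  rw [h1L]
  have : 0 ≤ 6 * K ^ 2 * (L ^ 2 * η) * ∫ v, N v := by positivity
  linarith
end

section
/- For every λ₀ > 0 there exists a constant C > 0, independent of λ and η, such that for all η > 0, all λ ∈ ℂ with |λ| ≤ λ₀, and all smooth compactly supported ψ, φ : ℝ^d → ℂ, one has |a(ψ,φ)| ≤ C ‖ψ‖_{H_η} ‖φ‖_{H_η}. -/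
open MeasureTheory Real

noncomputable section

/-- The sesquilinear form `a(ψ,φ)` of the paper:
`a(ψ,φ) = ∫ ∇(ψ/M)·∇(φ̄/M) M² + ∫ V ψ φ̄ + iη ∫ v₁ ψ φ̄ − λη^{2/3} ∫ ψ φ̄`,
with `V(v) = ⟨v⟩^{-σ}`. -/
def aForm {d : ℕ} (h0 : 0 < d) (M : EuclideanSpace ℝ (Fin d) → ℝ) (σ η : ℝ) (l : ℂ)
    (ψ φ : EuclideanSpace ℝ (Fin d) → ℂ) : ℂ :=
  (∫ v, (∑ i : Fin d,
      fderiv ℝ (fun w => ψ w / (M w : ℂ)) v (EuclideanSpace.single i (1 : ℝ)) *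
        fderiv ℝ (fun w => starRingEnd ℂ (φ w) / (M w : ℂ)) v (EuclideanSpace.single i (1 : ℝ)))
      * ((M v : ℂ)) ^ 2)
  + (∫ v, ((Real.sqrt (1 + ‖v‖ ^ 2) ^ (-σ) : ℝ) : ℂ) * (ψ v * starRingEnd ℂ (φ v)))
  + Complex.I * (η : ℂ) * (∫ v, ((v (⟨0, h0⟩ : Fin d) : ℝ) : ℂ) * (ψ v * starRingEnd ℂ (φ v)))
  - l * ((η ^ ((2 : ℝ) / 3) : ℝ) : ℂ) * ∫ v, ψ v * starRingEnd ℂ (φ v)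

/-- The squared norm `‖ψ‖²_{H_η}`. -/
def HnormSq {d : ℕ} (h0 : 0 < d) (M : EuclideanSpace ℝ (Fin d) → ℝ) (η : ℝ)
    (ψ : EuclideanSpace ℝ (Fin d) → ℂ) : ℝ :=
  (∫ v, ‖fderiv ℝ (fun w => ψ w / (M w : ℂ)) v‖ ^ 2 * (M v) ^ 2)
  + (∫ v, ‖ψ v‖ ^ 2 / (1 + ‖v‖ ^ 2))
  + η * ∫ v, |v (⟨0, h0⟩ : Fin d)| * ‖ψ v‖ ^ 2

lemma CS {d : ℕ} {A : EuclideanSpace ℝ (Fin d) → ℂ} {a b : EuclideanSpace ℝ (Fin d) → ℝ} {c : ℝ}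
    (hc : 0 ≤ c)
    (ha : Continuous a) (hb : Continuous b) (has : HasCompactSupport a) (hbs : HasCompactSupport b)
    (ha0 : ∀ v, 0 ≤ a v) (hb0 : ∀ v, 0 ≤ b v) (hA : ∀ v, ‖A v‖ ≤ c * (a v * b v)) :
    ‖∫ v, A v‖ ≤ c * (√(∫ v, a v ^ 2) * √(∫ v, b v ^ 2)) := by
  have h1 : ‖∫ v, A v‖ ≤ ∫ v, c * (a v * b v) := by
    apply norm_integral_le_of_norm_le _ (Filter.Eventually.of_forall hA)
    exact ((ha.mul hb).integrable_of_hasCompactSupport has.mul_right).const_mul c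
  refine h1.trans ?_
  rw [integral_const_mul]
  refine mul_le_mul_of_nonneg_left ?_ hc
  have := integral_mul_le_Lp_mul_Lq_of_nonneg (μ := volume) (f := a) (g := b)
    (Real.HolderConjugate.two_two) (Filter.Eventually.of_forall ha0) (Filter.Eventually.of_forall hb0)
    (ha.memLp_of_hasCompactSupport has) (hb.memLp_of_hasCompactSupport hbs)
  simpa [Real.sqrt_eq_rpow] using this

/-- scalar inequality -/
lemma scal {s x : ℝ} (hs : 0 < s) :
    s^2 + 2 * (s^2*x/(1+s^2*x^2))^2 - s^2*(1-s^2*x^2)/(1+s^2*x^2)^2 ≤ 3 * s^3 * |x| := by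
  have h : 0 < 1 + s^2*x^2 := by positivity
  have hx := abs_nonneg x
  rw [← sq_abs x]
  have e : ∀ y, (s^2*y/(1+s^2*y^2))^2 = (s^2*|y|/(1+s^2*|y|^2))^2 := by
    intro y; rw [div_pow, div_pow, mul_pow, mul_pow, sq_abs]
  rw [sq_abs, e, ← sq_abs x]
  generalize |x| = y at *
  have h' : 0 < 1 + s^2*y^2 := by positivity
  obtain ⟨z, hz, rfl⟩ : ∃ z, 0 ≤ z ∧ y = z / s := ⟨y * s, by positivity, by field_simp⟩
  have e1 : s^2*(z/s)^2 = z^2 := by field_simp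
  have e2 : s^2*(z/s) = s*z := by field_simp
  have e3 : 3*s^3*(z/s) = s^2*(3*z) := by field_simp
  rw [e1, e2, e3]
  have : s ^ 2 + 2 * (s * z / (1 + z ^ 2)) ^ 2 - s ^ 2 * (1 - z ^ 2) / (1 + z ^ 2) ^ 2
     = s^2 * ((5*z^2+z^4)/(1+z^2)^2) := by field_simp; ring
  rw [this]
  gcongr
  rw [div_le_iff₀ (by positivity)]
  have : 0 ≤ z * ((1+z^2) * (3 * (1-z)^2 + z ) + 4*(z-1)^2) := by positivity
  nlinarith [this, mul_nonneg hz (sq_nonneg (z-1)), mul_nonneg hz (sq_nonneg (z^2-1)), mul_nonneg hz (sq_nonneg (z^2-z)), pow_nonneg hz 3]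

lemma int_fderiv_zero {d : ℕ} {F : EuclideanSpace ℝ (Fin d) → ℝ} (hF : ContDiff ℝ 1 F)
    (hs : HasCompactSupport F) (e : EuclideanSpace ℝ (Fin d)) :
    Integrable (fun v => fderiv ℝ F v e) ∧ ∫ v, fderiv ℝ F v e = 0 := by
  have hc : Continuous (fun v => fderiv ℝ F v e) :=
    (hF.continuous_fderiv one_ne_zero).clm_apply continuous_const
  have hi : Integrable (fun v => fderiv ℝ F v e) :=
    hc.integrable_of_hasCompactSupport (hs.fderiv_apply (𝕜 := ℝ) e)
  refine ⟨hi, ?_⟩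
  have := integral_mul_fderiv_eq_neg_fderiv_mul_of_integrable (𝕜 := ℝ)
    (μ := (volume : Measure (EuclideanSpace ℝ (Fin d)))) (f := fun _ => (1:ℝ)) (g := F) (v := e)
    (by simp) (by simpa using hi) (by simpa using hF.continuous.integrable_of_hasCompactSupport hs)
    (fun x _ => by fun_prop) (fun x _ => hF.differentiable one_ne_zero x)
  simpa using this

lemma Fderiv {d : ℕ} (i : Fin d) (γ s : ℝ) {g : EuclideanSpace ℝ (Fin d) → ℂ}
    (hg : ContDiff ℝ 1 g) (v : EuclideanSpace ℝ (Fin d)) :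
    fderiv ℝ (fun v => s^2 * v i / (1 + s^2 * (v i)^2) * (1 + ‖v‖^2) ^ (-γ) * ‖g v‖^2) v
      (EuclideanSpace.single i (1:ℝ)) =
    s^2*(1-s^2*(v i)^2)/(1+s^2*(v i)^2)^2 * (1 + ‖v‖^2) ^ (-γ) * ‖g v‖^2
    + s^2 * v i / (1 + s^2 * (v i)^2) * (-γ * (1 + ‖v‖^2) ^ (-γ) / (1 + ‖v‖^2) * (2 * v i)) * ‖g v‖^2
    + s^2 * v i / (1 + s^2 * (v i)^2) * (1 + ‖v‖^2) ^ (-γ) *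
      (2 * inner ℝ (g v) (fderiv ℝ g v (EuclideanSpace.single i (1:ℝ)))) := by
  have hp : HasFDerivAt (fun w : EuclideanSpace ℝ (Fin d) => w i) (EuclideanSpace.proj i : _ →L[ℝ] ℝ) v :=
    (EuclideanSpace.proj i : _ →L[ℝ] ℝ).hasFDerivAt
  have hpos : 1 + s^2 * (v i)^2 ≠ 0 := by positivity
  have hw : HasDerivAt (fun x : ℝ => s^2 * x / (1 + s^2 * x^2))
      (s^2*(1-s^2*(v i)^2)/(1+s^2*(v i)^2)^2) (v i) := by
    have h1 : HasDerivAt (fun x : ℝ => s^2 * x) (s^2 * 1) (v i) := (hasDerivAt_id _).const_mul _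
    have h2 : HasDerivAt (fun x : ℝ => 1 + s^2 * x^2) (s^2 * (2 * v i)) (v i) := by
      simpa using ((hasDerivAt_pow 2 (v i)).const_mul (s^2)).const_add 1
    exact (h1.div h2 hpos).congr_deriv (by ring)
  have hW := hw.comp_hasFDerivAt v hp
  have hq : HasFDerivAt (fun w : EuclideanSpace ℝ (Fin d) => 1 + ‖w‖^2) _ v :=
    ((hasFDerivAt_id v).norm_sq).const_add 1
  have hq0 : (1 + ‖v‖^2) ≠ 0 := by positivity
  have hr := (Real.hasDerivAt_rpow_const (x := 1 + ‖v‖^2) (p := -γ) (Or.inl hq0)).comp_hasFDerivAt v hq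
  have hG := ((hg.differentiable one_ne_zero v).hasFDerivAt).norm_sq
  have hF := (hW.mul hr).mul hG
  have := congrArg (fun L => L (EuclideanSpace.single i (1:ℝ))) hF.fderiv
  simp only [Function.comp_def] at this
  refine Eq.trans this ?_
  have : (1 + ‖v‖^2) ^ (-γ-1) = (1 + ‖v‖^2) ^ (-γ) / (1 + ‖v‖^2) := by
    rw [Real.rpow_sub_one hq0]
  simp [this, EuclideanSpace.inner_single_right]
  ring

lemma ptw {γ q x w w' s ρ : ℝ} {g D : ℂ} (hq : 0 < q) (hx : x^2 ≤ q) (hρ : 0 < ρ)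
    (h : s^2 + 2 * w^2 - w' ≤ 3 * s^3 * |x|) :
    s^2 * (ρ * ‖g‖^2) ≤ (w' * ρ * ‖g‖^2 + w * (-γ * ρ / q * (2 * x)) * ‖g‖^2
      + w * ρ * (2 * inner ℝ g D)) + (ρ * ‖D‖^2 + 3 * (s^3 * (|x| * (ρ * ‖g‖^2))) + γ^2 * (ρ * ‖g‖^2 / q)) := by
  have h1 : -(2 * w * inner ℝ g D) ≤ w^2 * ‖g‖^2 + ‖D‖^2 := by
    have := abs_real_inner_le_norm g D
    have h3 : |w * inner ℝ g D| ≤ |w| * (‖g‖ * ‖D‖) := by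
      rw [abs_mul]; gcongr
    have := neg_abs_le (w * inner ℝ g D)
    rw [← sq_abs w]
    nlinarith [sq_nonneg (|w| * ‖g‖ - ‖D‖)]
  have h2 : 2 * w * γ * x / q ≤ w^2 + γ^2 / q := by
    have : γ^2 * (x^2 / q^2) ≤ γ^2 * (1/q) := by
      refine mul_le_mul_of_nonneg_left ?_ (sq_nonneg γ)
      rw [div_le_div_iff₀ (by positivity) hq]; nlinarith
    have e : (w - γ * x / q)^2 = w^2 - 2 * w * γ * x / q + γ^2 * (x^2/q^2) := by ring
    have : γ^2 * (1/q) = γ^2/q := by ring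
    nlinarith [sq_nonneg (w - γ * x / q)]
  have hg : 0 ≤ ρ * ‖g‖^2 := by positivity
  have a1 := mul_le_mul_of_nonneg_left h1 hρ.le
  have a2 := mul_le_mul_of_nonneg_left h2 hg
  have a3 := mul_le_mul_of_nonneg_left h hg
  have e1 : w * (-γ * ρ / q * (2 * x)) * ‖g‖^2 = - (ρ * ‖g‖^2 * (2 * w * γ * x / q)) := by ring
  have e2 : γ^2 * (ρ * ‖g‖^2 / q) = ρ * ‖g‖^2 * (γ^2/q) := by ring
  rw [e1, e2]
  linarith

lemma contDiff_g {d : ℕ} {M : EuclideanSpace ℝ (Fin d) → ℝ} (hMpos : ∀ v, 0 < M v)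
    (hM : ContDiff ℝ 1 M) {ψ : EuclideanSpace ℝ (Fin d) → ℂ} (hψ : ContDiff ℝ (⊤ : ℕ∞) ψ) :
    ContDiff ℝ 1 (fun w => ψ w / (M w : ℂ)) := by
  have h1 : ContDiff ℝ 1 ψ := hψ.of_le (by exact_mod_cast le_top)
  have h2 : ContDiff ℝ 1 (fun w => (M w : ℂ)) := Complex.ofRealCLM.contDiff.comp hM
  have h3 : ContDiff ℝ 1 (fun w => ((M w : ℂ))⁻¹) :=
    h2.inv (fun v => by exact_mod_cast (hMpos v).ne')
  simpa [div_eq_mul_inv] using h1.mul h3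

lemma supp_g {d : ℕ} {M : EuclideanSpace ℝ (Fin d) → ℝ} {ψ : EuclideanSpace ℝ (Fin d) → ℂ}
    (hs : HasCompactSupport ψ) : HasCompactSupport (fun w => ψ w / (M w : ℂ)) := by
  simp only [div_eq_mul_inv]
  exact hs.mul_right

lemma key {d : ℕ} (h0 : 0 < d) (γ C₁ C₂ : ℝ) (hC₁ : 0 < C₁) (hC₁₂ : C₁ ≤ C₂)
    (M : EuclideanSpace ℝ (Fin d) → ℝ) (hMpos : ∀ v, 0 < M v) (hM : ContDiff ℝ 1 M)
    (hA1 : ∀ v, C₁ * Real.sqrt (1 + ‖v‖ ^ 2) ^ (-γ) ≤ M v ∧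
              M v ≤ C₂ * Real.sqrt (1 + ‖v‖ ^ 2) ^ (-γ))
    (s : ℝ) (hs : 0 < s) (ψ : EuclideanSpace ℝ (Fin d) → ℂ)
    (hψ : ContDiff ℝ (⊤ : ℕ∞) ψ) (hsψ : HasCompactSupport ψ) :
    s^2 * ∫ v, ‖ψ v‖^2 ≤ (C₂^2/C₁^2) * ((∫ v, ‖fderiv ℝ (fun w => ψ w / (M w : ℂ)) v‖ ^ 2 * (M v) ^ 2)
  + γ^2 * (∫ v, ‖ψ v‖ ^ 2 / (1 + ‖v‖ ^ 2))
  + 3 * (s^3 * ∫ v, |v (⟨0, h0⟩ : Fin d)| * ‖ψ v‖ ^ 2)) := by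
  set i : Fin d := ⟨0, h0⟩
  have hC₂ : 0 < C₂ := hC₁.trans_le hC₁₂
  have hg := contDiff_g hMpos hM hψ
  have hgs := supp_g (M := M) hsψ
  set g : EuclideanSpace ℝ (Fin d) → ℂ := fun w => ψ w / (M w : ℂ) with hgdef
  set e : EuclideanSpace ℝ (Fin d) := EuclideanSpace.single i (1:ℝ) with he
  have hen : ‖e‖ = 1 := by simp [he]
  set F : EuclideanSpace ℝ (Fin d) → ℝ :=
    fun v => s^2 * v i / (1 + s^2 * (v i)^2) * (1 + ‖v‖^2) ^ (-γ) * ‖g v‖^2 with hF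
  have hFs : HasCompactSupport F := by
    have : HasCompactSupport (fun v => ‖g v‖^2) := hgs.comp_left (g := fun z => ‖z‖^2) (by simp)
    exact this.mul_left
  have hFc : ContDiff ℝ 1 F := by
    have hp : ContDiff ℝ 1 (fun w : EuclideanSpace ℝ (Fin d) => w i) :=
      (EuclideanSpace.proj i : _ →L[ℝ] ℝ).contDiff
    have h1 : ContDiff ℝ 1 (fun v : EuclideanSpace ℝ (Fin d) => s^2 * v i / (1 + s^2 * (v i)^2)) :=
      (contDiff_const.mul hp).div (contDiff_const.add (contDiff_const.mul (hp.pow 2)))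
        (fun v => by positivity)
    have h2 : ContDiff ℝ 1 (fun v : EuclideanSpace ℝ (Fin d) => (1 + ‖v‖^2) ^ (-γ)) :=
      (contDiff_const.add (contDiff_norm_sq ℝ)).rpow_const_of_ne (fun v => by positivity)
    exact (h1.mul h2).mul (hg.norm_sq ℝ)
  obtain ⟨hFi, hF0⟩ := int_fderiv_zero hFc hFs e
  have cψ := hψ.continuous
  have sψ2 : HasCompactSupport (fun v => ‖ψ v‖^2) := hsψ.comp_left (g := fun z => ‖z‖^2) (by simp)
  have i0 : Integrable (fun v => ‖ψ v‖^2) :=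
    (by fun_prop : Continuous (fun v => ‖ψ v‖^2)).integrable_of_hasCompactSupport sψ2
  have i1 : Integrable (fun v => ‖fderiv ℝ g v‖ ^ 2 * (M v) ^ 2) := by
    refine Continuous.integrable_of_hasCompactSupport ?_ ?_
    · exact ((hg.continuous_fderiv one_ne_zero).norm.pow 2).mul (hM.continuous.pow 2)
    · have : HasCompactSupport (fun v => ‖fderiv ℝ g v‖^2) :=
        (hgs.fderiv (𝕜 := ℝ)).comp_left (g := fun z => ‖z‖^2) (by simp)
      exact this.mul_right
  have i2 : Integrable (fun v => ‖ψ v‖ ^ 2 / (1 + ‖v‖ ^ 2)) := by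
    refine Continuous.integrable_of_hasCompactSupport ?_ ?_
    · exact Continuous.div (by fun_prop) (by fun_prop) (fun v => by positivity)
    · simp only [div_eq_mul_inv]; exact sψ2.mul_right
  have i3 : Integrable (fun v => |v i| * ‖ψ v‖ ^ 2) := by
    refine Continuous.integrable_of_hasCompactSupport ?_ sψ2.mul_left
    fun_prop
  have pt : ∀ v, s^2 * ‖ψ v‖^2 ≤ C₂^2 * fderiv ℝ F v e + (C₂^2/C₁^2) * ((‖fderiv ℝ g v‖ ^ 2 * (M v) ^ 2)
     + γ^2 * (‖ψ v‖ ^ 2 / (1 + ‖v‖ ^ 2)) + 3 * (s^3 * (|v i| * ‖ψ v‖ ^ 2))) := by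
    intro v
    have hq : 0 < 1 + ‖v‖^2 := by positivity
    have hρ : 0 < (1 + ‖v‖^2) ^ (-γ) := Real.rpow_pos_of_pos hq _
    have hx : (v i)^2 ≤ 1 + ‖v‖^2 := by
      have := PiLp.norm_apply_le v i
      have h2 := abs_le_abs_of_nonneg (norm_nonneg _) this
      rw [abs_norm, abs_norm] at h2
      have h3 : ‖v i‖^2 ≤ ‖v‖^2 := by gcongr
      rw [Real.norm_eq_abs, sq_abs] at h3
      linarith
    have hp := ptw (γ := γ) (g := g v) (D := fderiv ℝ g v e) hq hx hρ (scal (x := v i) hs)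
    rw [← Fderiv i γ s hg v] at hp
    have hD : ‖fderiv ℝ g v e‖ ≤ ‖fderiv ℝ g v‖ := by
      simpa [hen] using (fderiv ℝ g v).le_opNorm e
    have hMv := hMpos v
    have hρ2 : (Real.sqrt (1 + ‖v‖ ^ 2) ^ (-γ))^2 = (1 + ‖v‖^2) ^ (-γ) := by
      rw [← Real.rpow_natCast, ← Real.rpow_mul (by positivity), Real.sqrt_eq_rpow,
        ← Real.rpow_mul hq.le]
      congr 1; push_cast; ring
    obtain ⟨ha, hb⟩ := hA1 v
    have ha2 : C₁^2 * (1 + ‖v‖^2) ^ (-γ) ≤ M v ^2 := by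
      rw [← hρ2, ← mul_pow]; gcongr
    have hb2 : M v ^2 ≤ C₂^2 * (1 + ‖v‖^2) ^ (-γ) := by
      rw [← hρ2, ← mul_pow]; gcongr
    have hψg : ‖ψ v‖^2 = M v ^2 * ‖g v‖^2 := by
      simp only [hgdef, norm_div, Complex.norm_real, Real.norm_eq_abs, abs_of_pos hMv]
      field_simp
    set ρ := (1 + ‖v‖^2) ^ (-γ)
    have ha3 : ρ ≤ M v^2 / C₁^2 := by rw [le_div_iff₀ (by positivity)]; linarith
    change s^2 * (ρ * ‖g v‖^2) ≤ fderiv ℝ F v e + _ at hp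
    calc s^2 * ‖ψ v‖^2 ≤ s^2 * (C₂^2 * ρ * ‖g v‖^2) := by rw [hψg]; gcongr
      _ = C₂^2 * (s^2 * (ρ * ‖g v‖^2)) := by ring
      _ ≤ C₂^2 * (fderiv ℝ F v e + (ρ * ‖fderiv ℝ g v e‖^2 + 3 * (s^3 * (|v i| * (ρ * ‖g v‖^2))) + γ^2 * (ρ * ‖g v‖^2 / (1 + ‖v‖^2)))) := by gcongr
      _ ≤ C₂^2 * (fderiv ℝ F v e + (M v^2 / C₁^2 * ‖fderiv ℝ g v‖^2 + 3 * (s^3 * (|v i| * (M v^2 / C₁^2 * ‖g v‖^2))) + γ^2 * (M v^2 / C₁^2 * ‖g v‖^2 / (1 + ‖v‖^2)))) := by gcongr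
      _ = _ := by rw [hψg]; ring
  have j1 : Integrable (fun v => ‖fderiv ℝ g v‖ ^ 2 * (M v) ^ 2
      + γ^2 * (‖ψ v‖ ^ 2 / (1 + ‖v‖ ^ 2))) := i1.add (i2.const_mul (γ^2))
  have j3 : Integrable (fun v => 3 * (s^3 * (|v i| * ‖ψ v‖ ^ 2))) :=
    (i3.const_mul (s^3)).const_mul 3
  have j2 : Integrable (fun v => (‖fderiv ℝ g v‖ ^ 2 * (M v) ^ 2)
      + γ^2 * (‖ψ v‖ ^ 2 / (1 + ‖v‖ ^ 2)) + 3 * (s^3 * (|v i| * ‖ψ v‖ ^ 2))) := j1.add j3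
  have := integral_mono (i0.const_mul (s^2))
    ((hFi.const_mul (C₂^2)).add (j2.const_mul (C₂^2/C₁^2))) pt
  simp only [Pi.add_apply] at this
  rw [integral_const_mul, integral_add (hFi.const_mul _) (j2.const_mul _), integral_const_mul,
    integral_const_mul, hF0, integral_add j1 j3, integral_add i1 (i2.const_mul (γ^2))] at this
  simp only [integral_const_mul] at this
  linarith

lemma norm_fderiv_conj {d : ℕ} {M : EuclideanSpace ℝ (Fin d) → ℝ} (hMpos : ∀ v, 0 < M v)
    (hM : ContDiff ℝ 1 M) {φ : EuclideanSpace ℝ (Fin d) → ℂ} (hφ : ContDiff ℝ (⊤ : ℕ∞) φ)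
    (v e : EuclideanSpace ℝ (Fin d)) :
    ‖fderiv ℝ (fun w => starRingEnd ℂ (φ w) / (M w : ℂ)) v e‖
      = ‖fderiv ℝ (fun w => φ w / (M w : ℂ)) v e‖ := by
  have h1 := ((contDiff_g hMpos hM hφ).differentiable one_ne_zero v).hasFDerivAt
  have h2 := (Complex.conjCLE.toContinuousLinearMap.hasFDerivAt).comp v h1
  have h3 : (fun w => starRingEnd ℂ (φ w) / (M w : ℂ))
      = (Complex.conjCLE.toContinuousLinearMap) ∘ (fun w => φ w / (M w : ℂ)) := by
    funext w; simp
  rw [h3, h2.fderiv]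
  simp

/-- **Continuity of the sesquilinear form `a` on `H_η × H_η`** (Lemma 2.7 of the paper). -/
theorem aForm_continuous (d : ℕ) (h0 : 0 < d) (γ C₁ C₂ σ : ℝ)
    (hγ₁ : (d : ℝ) / 2 < γ) (hγ₂ : γ < ((d : ℝ) + 4) / 2)
    (hC₁ : 0 < C₁) (hC₁₂ : C₁ ≤ C₂) (hσ₁ : 2 < σ) (hσ₂ : σ < 2 * γ - d + 4)
    (M : EuclideanSpace ℝ (Fin d) → ℝ) (hMpos : ∀ v, 0 < M v) (hM : ContDiff ℝ 1 M)
    (hA1 : ∀ v, C₁ * Real.sqrt (1 + ‖v‖ ^ 2) ^ (-γ) ≤ M v ∧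
              M v ≤ C₂ * Real.sqrt (1 + ‖v‖ ^ 2) ^ (-γ))
    (l₀ : ℝ) (hl₀ : 0 < l₀) :
    ∃ C : ℝ, 0 < C ∧
      ∀ η : ℝ, 0 < η → ∀ l : ℂ, ‖l‖ ≤ l₀ →
        ∀ ψ φ : EuclideanSpace ℝ (Fin d) → ℂ,
          ContDiff ℝ (⊤ : ℕ∞) ψ → HasCompactSupport ψ →
          ContDiff ℝ (⊤ : ℕ∞) φ → HasCompactSupport φ →
          ‖aForm h0 M σ η l ψ φ‖ ≤
            C * Real.sqrt (HnormSq h0 M η ψ) * Real.sqrt (HnormSq h0 M η φ) := by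
  have hC₂ : 0 < C₂ := hC₁.trans_le hC₁₂
  set K : ℝ := C₂^2/C₁^2 * (4 + γ^2) with hK
  have hK0 : 0 < K := by positivity
  refine ⟨d + 1 + 1 + l₀ * K, by positivity, ?_⟩
  intro η hη l hl ψ φ hψ hsψ hφ hsφ
  -- general facts on a test function
  have nonneg : ∀ f : EuclideanSpace ℝ (Fin d) → ℂ,
      0 ≤ (∫ v, ‖fderiv ℝ (fun w => f w / (M w : ℂ)) v‖ ^ 2 * (M v) ^ 2) ∧
      0 ≤ (∫ v, ‖f v‖ ^ 2 / (1 + ‖v‖ ^ 2)) ∧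
      0 ≤ η * ∫ v, |v (⟨0, h0⟩ : Fin d)| * ‖f v‖ ^ 2 := by
    intro f
    refine ⟨integral_nonneg fun v => by positivity, integral_nonneg fun v => by positivity,
      mul_nonneg hη.le (integral_nonneg fun v => by positivity)⟩
  have keyη : ∀ f : EuclideanSpace ℝ (Fin d) → ℂ, ContDiff ℝ (⊤ : ℕ∞) f → HasCompactSupport f →
      η ^ ((2:ℝ)/3) * ∫ v, ‖f v‖^2 ≤ K * HnormSq h0 M η f := by
    intro f hf hsf
    have h := key h0 γ C₁ C₂ hC₁ hC₁₂ M hMpos hM hA1 (η ^ ((1:ℝ)/3)) (by positivity) f hf hsf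
    have e2 : (η ^ ((1:ℝ)/3))^2 = η ^ ((2:ℝ)/3) := by
      rw [← Real.rpow_natCast, ← Real.rpow_mul hη.le]; norm_num
    have e3 : (η ^ ((1:ℝ)/3))^3 = η := by
      rw [← Real.rpow_natCast, ← Real.rpow_mul hη.le]; norm_num
    rw [e2, e3] at h
    refine h.trans ?_
    rw [hK, mul_assoc]
    refine mul_le_mul_of_nonneg_left ?_ (by positivity)
    obtain ⟨p1, p2, p3⟩ := nonneg f
    unfold HnormSq
    have := mul_nonneg (sq_nonneg γ) p1
    have := mul_nonneg (sq_nonneg γ) p3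
    linarith
  have cg := fun f (hf : ContDiff ℝ (⊤ : ℕ∞) f) => (contDiff_g hMpos hM hf).continuous_fderiv one_ne_zero
  have cM := hM.continuous
  have cψ := hψ.continuous
  have cφ := hφ.continuous
  have snorm : ∀ f : EuclideanSpace ℝ (Fin d) → ℂ, HasCompactSupport f →
      HasCompactSupport (fun v => ‖f v‖) := fun f hf => hf.norm
  have sD : ∀ f : EuclideanSpace ℝ (Fin d) → ℂ, HasCompactSupport f →
      HasCompactSupport (fun v => ‖fderiv ℝ (fun w => f w / (M w : ℂ)) v‖ * M v) :=
    fun f hf => (((supp_g hf).fderiv (𝕜 := ℝ)).norm).mul_right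
  set Nψ := HnormSq h0 M η ψ with hNψ
  set Nφ := HnormSq h0 M η φ with hNφ
  obtain ⟨p1, p2, p3⟩ := nonneg ψ
  obtain ⟨q1, q2, q3⟩ := nonneg φ
  -- term 1
  have T1 : ‖∫ v, (∑ i : Fin d,
      fderiv ℝ (fun w => ψ w / (M w : ℂ)) v (EuclideanSpace.single i (1 : ℝ)) *
        fderiv ℝ (fun w => starRingEnd ℂ (φ w) / (M w : ℂ)) v (EuclideanSpace.single i (1 : ℝ)))
      * ((M v : ℂ)) ^ 2‖ ≤ d * (√Nψ * √Nφ) := by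
    have h := CS (A := fun v => (∑ i : Fin d,
      fderiv ℝ (fun w => ψ w / (M w : ℂ)) v (EuclideanSpace.single i (1 : ℝ)) *
        fderiv ℝ (fun w => starRingEnd ℂ (φ w) / (M w : ℂ)) v (EuclideanSpace.single i (1 : ℝ)))
      * ((M v : ℂ)) ^ 2)
      (a := fun v => ‖fderiv ℝ (fun w => ψ w / (M w : ℂ)) v‖ * M v)
      (b := fun v => ‖fderiv ℝ (fun w => φ w / (M w : ℂ)) v‖ * M v) (c := d) (by positivity)
      ((cg ψ hψ).norm.mul cM) ((cg φ hφ).norm.mul cM) (sD ψ hsψ) (sD φ hsφ)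
      (fun v => mul_nonneg (norm_nonneg _) (hMpos v).le)
      (fun v => mul_nonneg (norm_nonneg _) (hMpos v).le) (fun v => by
        rw [norm_mul, norm_pow, Complex.norm_real, Real.norm_eq_abs, sq_abs]
        have : ‖∑ i : Fin d,
          fderiv ℝ (fun w => ψ w / (M w : ℂ)) v (EuclideanSpace.single i (1 : ℝ)) *
          fderiv ℝ (fun w => starRingEnd ℂ (φ w) / (M w : ℂ)) v (EuclideanSpace.single i (1 : ℝ))‖
          ≤ ∑ i : Fin d, ‖fderiv ℝ (fun w => ψ w / (M w : ℂ)) v‖ *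
            ‖fderiv ℝ (fun w => φ w / (M w : ℂ)) v‖ := by
          refine norm_sum_le_of_le _ (fun i _ => ?_)
          rw [norm_mul, norm_fderiv_conj hMpos hM hφ]
          gcongr
          · simpa using (fderiv ℝ (fun w => ψ w / (M w : ℂ)) v).le_opNorm
              (EuclideanSpace.single i (1 : ℝ))
          · simpa using (fderiv ℝ (fun w => φ w / (M w : ℂ)) v).le_opNorm
              (EuclideanSpace.single i (1 : ℝ))
        rw [Finset.sum_const, Finset.card_univ, Fintype.card_fin, nsmul_eq_mul] at this
        calc _ ≤ _ := mul_le_mul_of_nonneg_right this (sq_nonneg (M v))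
          _ = _ := by ring)
    refine h.trans ?_
    simp only [mul_pow]
    gcongr
    · rw [hNψ]; unfold HnormSq; linarith
    · rw [hNφ]; unfold HnormSq; linarith
  -- term 2
  have cq : Continuous (fun v : EuclideanSpace ℝ (Fin d) => (√(1 + ‖v‖^2))⁻¹) :=
    Continuous.inv₀ (by fun_prop) (fun v => by positivity)
  have sq2 : ∀ f : EuclideanSpace ℝ (Fin d) → ℂ,
      (∫ v, (‖f v‖ * (√(1 + ‖v‖^2))⁻¹)^2) = ∫ v, ‖f v‖ ^ 2 / (1 + ‖v‖ ^ 2) := by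
    intro f
    congr 1; funext v
    rw [mul_pow, inv_pow, Real.sq_sqrt (by positivity), div_eq_mul_inv]
  have T2 : ‖∫ v, ((Real.sqrt (1 + ‖v‖ ^ 2) ^ (-σ) : ℝ) : ℂ) * (ψ v * starRingEnd ℂ (φ v))‖
      ≤ 1 * (√Nψ * √Nφ) := by
    have h := CS (A := fun v => ((Real.sqrt (1 + ‖v‖ ^ 2) ^ (-σ) : ℝ) : ℂ) *
      (ψ v * starRingEnd ℂ (φ v)))
      (a := fun v => ‖ψ v‖ * (√(1 + ‖v‖^2))⁻¹)
      (b := fun v => ‖φ v‖ * (√(1 + ‖v‖^2))⁻¹) (c := 1) zero_le_one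
      (cψ.norm.mul cq) (cφ.norm.mul cq) (snorm ψ hsψ).mul_right (snorm φ hsφ).mul_right
      (fun v => by positivity) (fun v => by positivity) (fun v => by
        have h1 : 1 ≤ √(1 + ‖v‖^2) := by
          rw [Real.one_le_sqrt]; nlinarith [sq_nonneg ‖v‖]
        have hpos : 0 < √(1 + ‖v‖^2) := by linarith
        have h2 : √(1 + ‖v‖^2) ^ (-σ) ≤ (√(1 + ‖v‖^2))⁻¹ * (√(1 + ‖v‖^2))⁻¹ := by
          calc √(1 + ‖v‖^2) ^ (-σ) ≤ √(1 + ‖v‖^2) ^ (-2 : ℝ) :=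
                Real.rpow_le_rpow_of_exponent_le h1 (by linarith)
            _ = _ := by
              rw [Real.rpow_neg hpos.le, Real.rpow_two, sq, mul_inv]
        rw [norm_mul, norm_mul, Complex.norm_real, Real.norm_eq_abs,
          abs_of_pos (Real.rpow_pos_of_pos hpos _), RCLike.norm_conj]
        calc _ ≤ _ := mul_le_mul_of_nonneg_right h2 (by positivity)
          _ = _ := by ring)
    refine h.trans ?_
    rw [sq2, sq2]
    gcongr
    · rw [hNψ]; unfold HnormSq; linarith
    · rw [hNφ]; unfold HnormSq; linarith
  -- term 3
  have cx : Continuous (fun v : EuclideanSpace ℝ (Fin d) => √(η * |v (⟨0, h0⟩ : Fin d)|)) := by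
    fun_prop
  have sq3 : ∀ f : EuclideanSpace ℝ (Fin d) → ℂ,
      (∫ v, (‖f v‖ * √(η * |v (⟨0, h0⟩ : Fin d)|))^2)
        = η * ∫ v, |v (⟨0, h0⟩ : Fin d)| * ‖f v‖ ^ 2 := by
    intro f
    rw [← integral_const_mul]
    congr 1; funext v
    rw [mul_pow, Real.sq_sqrt (by positivity)]
    ring
  have T3 : ‖Complex.I * (η : ℂ) *
      (∫ v, ((v (⟨0, h0⟩ : Fin d) : ℝ) : ℂ) * (ψ v * starRingEnd ℂ (φ v)))‖
      ≤ 1 * (√Nψ * √Nφ) := by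
    rw [← integral_const_mul]
    have h := CS (A := fun v => Complex.I * (η : ℂ) * (((v (⟨0, h0⟩ : Fin d) : ℝ) : ℂ) *
      (ψ v * starRingEnd ℂ (φ v))))
      (a := fun v => ‖ψ v‖ * √(η * |v (⟨0, h0⟩ : Fin d)|))
      (b := fun v => ‖φ v‖ * √(η * |v (⟨0, h0⟩ : Fin d)|)) (c := 1) zero_le_one
      (cψ.norm.mul cx) (cφ.norm.mul cx) (snorm ψ hsψ).mul_right (snorm φ hsφ).mul_right
      (fun v => by positivity) (fun v => by positivity) (fun v => by
        have h2 : √(η * |v (⟨0, h0⟩ : Fin d)|) * √(η * |v (⟨0, h0⟩ : Fin d)|)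
          = η * |v (⟨0, h0⟩ : Fin d)| := Real.mul_self_sqrt (by positivity)
        rw [norm_mul, norm_mul, norm_mul, norm_mul, Complex.norm_real, Complex.norm_real,
          Real.norm_eq_abs, Real.norm_eq_abs, abs_of_pos hη, RCLike.norm_conj, Complex.norm_I]
        apply le_of_eq
        calc _ = (η * |v (⟨0, h0⟩ : Fin d)|) * (‖ψ v‖ * ‖φ v‖) := by ring
          _ = _ := by linear_combination (-(‖ψ v‖ * ‖φ v‖)) * h2)
    refine h.trans ?_
    rw [sq3, sq3]
    gcongr
    · rw [hNψ]; unfold HnormSq; linarith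
    · rw [hNφ]; unfold HnormSq; linarith
  -- term 4
  have T4 : ‖l * ((η ^ ((2 : ℝ) / 3) : ℝ) : ℂ) * ∫ v, ψ v * starRingEnd ℂ (φ v)‖
      ≤ l₀ * K * (√Nψ * √Nφ) := by
    have h := CS (A := fun v => ψ v * starRingEnd ℂ (φ v))
      (a := fun v => ‖ψ v‖) (b := fun v => ‖φ v‖) (c := 1) zero_le_one
      cψ.norm cφ.norm (snorm ψ hsψ) (snorm φ hsφ)
      (fun v => by positivity) (fun v => by positivity) (fun v => by
        rw [norm_mul, RCLike.norm_conj, one_mul])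
    rw [one_mul] at h
    have hηp : 0 ≤ η ^ ((2:ℝ)/3) := by positivity
    rw [norm_mul, norm_mul, Complex.norm_real, Real.norm_eq_abs, abs_of_nonneg hηp]
    calc ‖l‖ * η ^ ((2:ℝ)/3) * ‖∫ v, ψ v * starRingEnd ℂ (φ v)‖
        ≤ l₀ * η ^ ((2:ℝ)/3) * (√(∫ v, ‖ψ v‖^2) * √(∫ v, ‖φ v‖^2)) := by gcongr
      _ = l₀ * (√(η ^ ((2:ℝ)/3) * ∫ v, ‖ψ v‖^2) * √(η ^ ((2:ℝ)/3) * ∫ v, ‖φ v‖^2)) := by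
          rw [Real.sqrt_mul hηp, Real.sqrt_mul hηp]
          have := Real.mul_self_sqrt hηp
          nth_rewrite 1 [← this]
          ring
      _ ≤ l₀ * (√(K * Nψ) * √(K * Nφ)) := by
          refine mul_le_mul_of_nonneg_left ?_ hl₀.le
          exact mul_le_mul (Real.sqrt_le_sqrt (keyη ψ hψ hsψ)) (Real.sqrt_le_sqrt (keyη φ hφ hsφ))
            (Real.sqrt_nonneg _) (Real.sqrt_nonneg _)
      _ = l₀ * K * (√Nψ * √Nφ) := by
          rw [Real.sqrt_mul hK0.le, Real.sqrt_mul hK0.le]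
          have := Real.mul_self_sqrt hK0.le
          nth_rewrite 3 [← this]
          ring
  unfold aForm
  refine (norm_sub_le _ _).trans ?_
  refine le_trans (add_le_add_left (norm_add_le _ _) _) ?_
  refine le_trans (add_le_add_left (add_le_add_left (norm_add_le _ _) _) _) ?_
  linarith [T1, T2, T3, T4]
end
end
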